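/- For every δ ∈ (−1, −1/2), the family (u_μ)_{μ>0} is Cauchy in the H'²_δ norm as μ → 0: for every ε > 0 there exists μ₀ > 0 such that for all 0 < μ₂ ≤ μ₁ ≤ μ₀, ‖u_{μ₁} − u_{μ₂}‖_{H'²_δ} ≤ ε. Consequently u_μ converges in H'²_δ to a limit u₀ ∈ H'²_δ as μ → 0. -/

import Mathlib

open MeasureTheory Real Filter Metric Set
open scoped ENNReal RealInnerProductSpace NNReal

noncomputable section

abbrev E3 : Type := EuclideanSpace ℝ (Fin 3)

/-- The flat Laplacian on `ℝ³`. -/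
def lap (u : E3 → ℝ) (x : E3) : ℝ :=
  ∑ i : Fin 3, iteratedFDeriv ℝ 2 u x ![EuclideanSpace.single i 1, EuclideanSpace.single i 1]

/-- The weighted norm `‖f‖_{L'²_δ}` (with values in `ℝ≥0∞`). -/
def wL2norm (δ : ℝ) (f : E3 → ℝ) : ℝ≥0∞ :=
  (∫⁻ x in {x : E3 | x ≠ 0}, (‖f x‖₊ : ℝ≥0∞) ^ (2:ℝ) * (‖x‖₊ : ℝ≥0∞) ^ (-2*δ - 3)) ^ (1/2 : ℝ)

/-- The weighted Sobolev norm `‖f‖_{H'^k_δ} = Σ_{j=0}^k ‖D^j f‖_{L'²_{δ-j}}`. -/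
def wHnorm (k : ℕ) (δ : ℝ) (f : E3 → ℝ) : ℝ≥0∞ :=
  ∑ j ∈ Finset.range (k+1), wL2norm (δ - j) (fun x => ‖iteratedFDeriv ℝ j f x‖)

/-- Test functions: `C^∞` functions with compact support contained in `ℝ³ ∖ {0}`. -/
def IsTestFun (g : E3 → ℝ) : Prop :=
  ContDiff ℝ (⊤ : ℕ∞) g ∧ HasCompactSupport g ∧ tsupport g ⊆ {x : E3 | x ≠ 0}

/-- Membership in `H'^k_δ`, the completion of `C^∞_c(ℝ³∖{0})` in the norm `wHnorm k δ`. -/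
def MemH (k : ℕ) (δ : ℝ) (f : E3 → ℝ) : Prop :=
  wHnorm k δ f < ⊤ ∧
    ∀ ε : ℝ≥0∞, 0 < ε → ∃ g : E3 → ℝ, IsTestFun g ∧ wHnorm k δ (f - g) ≤ ε

/-- Membership in `L'²_δ`. -/
def MemL2 (δ : ℝ) (f : E3 → ℝ) : Prop :=
  AEMeasurable f ∧ wL2norm δ f < ⊤

/-- The square `K²` of the extrinsic curvature tensor `K = K_P + K_J + K_A`
(with `Jᵃ = (0,0,J)`). -/
def Ksq (A J : ℝ) (P : E3) (x : E3) : ℝ :=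
  6 * (A^2 + 3 * J^2 * ((x 0)^2 + (x 1)^2) / ‖x‖^2) / ‖x‖^6
  + (12 * A * ⟪P, ‖x‖⁻¹ • x⟫
      + 18 * J * ((‖x‖⁻¹ * x 0) * P 1 - (‖x‖⁻¹ * x 1) * P 0)) / ‖x‖^5
  + 9 * (‖P‖^2 + 2 * ⟪P, ‖x‖⁻¹ • x⟫^2) / (2 * ‖x‖^4)

/-- The nonlinearity `F(x,Φ) = -K²/(8Φ⁷) - 2πρ/Φ³`, with `ρ = σ/(8π r⁴)`. -/
def Fnl (A J : ℝ) (P : E3) (σ : E3 → ℝ) (x : E3) (Φ : ℝ) : ℝ :=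
  - Ksq A J P x / (8 * Φ^7) - σ x / (4 * ‖x‖^4 * Φ^3)

/-- `u` is the (nonnegative, `C¹`, decaying) solution `u_μ` of `Δu = F(x, 1 + μ/2r + u)`. -/
def IsSolμ (A J : ℝ) (P : E3) (σ : E3 → ℝ) (μ : ℝ) (u : E3 → ℝ) : Prop :=
  (∀ x, 0 ≤ u x) ∧ ContDiff ℝ 1 u ∧
    Tendsto u (cocompact E3) (nhds 0) ∧
    ∀ x : E3, x ≠ 0 → lap u x = Fnl A J P σ x (1 + μ / (2*‖x‖) + u x)

/-- The extreme (μ = 0) equation `Δu = -K²/(8(1+u)⁷) - 2πρ/(1+u)³` on `ℝ³∖{0}`. -/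
def IsExtremeSol (A J : ℝ) (P : E3) (σ : E3 → ℝ) (u : E3 → ℝ) : Prop :=
  ∀ x : E3, x ≠ 0 →
    lap u x = - Ksq A J P x / (8 * (1 + u x)^7) - σ x / (4 * ‖x‖^4 * (1 + u x)^3)

/-- The Laplace–Beltrami operator on the unit sphere: Euclidean Laplacian of the
degree-zero homogeneous extension. -/
def sphLap (V : E3 → ℝ) (p : E3) : ℝ := lap (fun y => V (‖y‖⁻¹ • y)) p

/-- A function is `C^∞` on the sphere `S²` iff its homogeneous extension is smooth away
from the origin. -/
def SmoothOnSphere (V : E3 → ℝ) : Prop :=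
  ContDiffOn ℝ (⊤ : ℕ∞) (fun y : E3 => V (‖y‖⁻¹ • y)) {x : E3 | x ≠ 0}

/-- `sin²θ` for a point on the unit sphere (polar axis = third coordinate axis). -/
def sin2θ (p : E3) : ℝ := (p 0)^2 + (p 1)^2


/-- standard basis vector -/
abbrev ee (i : Fin 3) : E3 := EuclideanSpace.single i (1:ℝ)

/-- partial derivative -/
def pd (i : Fin 3) (f : E3 → ℝ) (x : E3) : ℝ := fderiv ℝ f x (ee i)

theorem lap_eq (u : E3 → ℝ) (x : E3) :
    lap u x = ∑ i : Fin 3, fderiv ℝ (fderiv ℝ u) x (ee i) (ee i) := by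
  simp [lap, iteratedFDeriv_two_apply]

theorem fderiv_pd {u : E3 → ℝ} {x : E3} (h : DifferentiableAt ℝ (fderiv ℝ u) x) (i : Fin 3) (v : E3) :
    fderiv ℝ (pd i u) x v = fderiv ℝ (fderiv ℝ u) x v (ee i) := by
  have : HasFDerivAt (pd i u) ((ContinuousLinearMap.apply ℝ ℝ (ee i)).comp (fderiv ℝ (fderiv ℝ u) x)) x :=
    (ContinuousLinearMap.apply ℝ ℝ (ee i)).hasFDerivAt.comp x h.hasFDerivAt
  rw [this.fderiv]; simp

theorem lap_eq_pd {u : E3 → ℝ} {x : E3} (h : DifferentiableAt ℝ (fderiv ℝ u) x) :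
    lap u x = ∑ i : Fin 3, pd i (pd i u) x := by
  rw [lap_eq]
  refine Finset.sum_congr rfl fun i _ => ?_
  rw [pd, fderiv_pd h]

theorem c2_diff {u : E3 → ℝ} {x : E3} (h : ContDiffAt ℝ 2 u x) : DifferentiableAt ℝ (fderiv ℝ u) x :=
  (h.fderiv_right (m := 1) (by norm_num)).differentiableAt (by norm_num)

theorem pd_contDiffAt {n : WithTop ℕ∞} {m : WithTop ℕ∞} {u : E3 → ℝ} {x : E3} (h : ContDiffAt ℝ n u x) (hm : m + 1 ≤ n) (i : Fin 3) :
    ContDiffAt ℝ m (pd i u) x :=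
  (h.fderiv_right hm).clm_apply contDiffAt_const

theorem lap_congr {u v : E3 → ℝ} {x : E3} (h : u =ᶠ[nhds x] v) : lap u x = lap v x := by
  rw [lap_eq, lap_eq, (h.fderiv).fderiv_eq]

theorem pd_congr {u v : E3 → ℝ} {x : E3} (h : u =ᶠ[nhds x] v) (i : Fin 3) : pd i u x = pd i v x := by
  rw [pd, pd, h.fderiv_eq]

theorem pd_add {u v : E3 → ℝ} {x : E3} (hu : DifferentiableAt ℝ u x) (hv : DifferentiableAt ℝ v x) (i : Fin 3) :
    pd i (fun y => u y + v y) x = pd i u x + pd i v x := by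
  rw [pd, fderiv_fun_add hu hv]; rfl

theorem pd_sub {u v : E3 → ℝ} {x : E3} (hu : DifferentiableAt ℝ u x) (hv : DifferentiableAt ℝ v x) (i : Fin 3) :
    pd i (fun y => u y - v y) x = pd i u x - pd i v x := by
  rw [pd, fderiv_fun_sub hu hv]; rfl

theorem pd_mul {u v : E3 → ℝ} {x : E3} (hu : DifferentiableAt ℝ u x) (hv : DifferentiableAt ℝ v x) (i : Fin 3) :
    pd i (fun y => u y * v y) x = pd i u x * v x + u x * pd i v x := by
  rw [pd, fderiv_fun_mul hu hv]; simp [pd]; ring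

theorem c2_ev {u : E3 → ℝ} {x : E3} (h : ContDiffAt ℝ 2 u x) : ∀ᶠ y in nhds x, DifferentiableAt ℝ u y := by
  filter_upwards [h.eventually (by norm_num)] with y hy
  exact hy.differentiableAt (by norm_num)

theorem pd_diff {u : E3 → ℝ} {x : E3} (h : ContDiffAt ℝ 2 u x) (i : Fin 3) : DifferentiableAt ℝ (pd i u) x :=
  (pd_contDiffAt (m := 1) h (by norm_num) i).differentiableAt (by norm_num)

theorem lap_add {u v : E3 → ℝ} {x : E3} (hu : ContDiffAt ℝ 2 u x) (hv : ContDiffAt ℝ 2 v x) :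
    lap (fun y => u y + v y) x = lap u x + lap v x := by
  rw [lap_eq_pd (c2_diff (hu.add hv)), lap_eq_pd (c2_diff hu), lap_eq_pd (c2_diff hv), ← Finset.sum_add_distrib]
  refine Finset.sum_congr rfl fun i _ => ?_
  rw [← pd_add (pd_diff hu i) (pd_diff hv i)]
  apply pd_congr
  filter_upwards [c2_ev hu, c2_ev hv] with y h1 h2
  exact pd_add h1 h2 i

theorem lap_sub {u v : E3 → ℝ} {x : E3} (hu : ContDiffAt ℝ 2 u x) (hv : ContDiffAt ℝ 2 v x) :
    lap (fun y => u y - v y) x = lap u x - lap v x := by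
  rw [lap_eq_pd (c2_diff (hu.sub hv)), lap_eq_pd (c2_diff hu), lap_eq_pd (c2_diff hv), ← Finset.sum_sub_distrib]
  refine Finset.sum_congr rfl fun i _ => ?_
  rw [← pd_sub (pd_diff hu i) (pd_diff hv i)]
  apply pd_congr
  filter_upwards [c2_ev hu, c2_ev hv] with y h1 h2
  exact pd_sub h1 h2 i

theorem lap_mul {u v : E3 → ℝ} {x : E3} (hu : ContDiffAt ℝ 2 u x) (hv : ContDiffAt ℝ 2 v x) :
    lap (fun y => u y * v y) x = lap u x * v x + 2 * (∑ i, pd i u x * pd i v x) + u x * lap v x := by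
  rw [lap_eq_pd (c2_diff (hu.mul hv)), lap_eq_pd (c2_diff hu), lap_eq_pd (c2_diff hv), Finset.sum_mul,
    Finset.mul_sum, Finset.mul_sum, ← Finset.sum_add_distrib, ← Finset.sum_add_distrib]
  refine Finset.sum_congr rfl fun i _ => ?_
  have h0 : pd i (pd i fun y => u y * v y) x = pd i (fun y => pd i u y * v y + u y * pd i v y) x := by
    apply pd_congr
    filter_upwards [c2_ev hu, c2_ev hv] with y h1 h2
    exact pd_mul h1 h2 i
  have du := (c2_ev hu).self_of_nhds
  have dv := (c2_ev hv).self_of_nhds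
  rw [h0, pd_add (u := fun y => pd i u y * v y) (v := fun y => u y * pd i v y) ((pd_diff hu i).mul dv) (du.mul (pd_diff hv i)), pd_mul (pd_diff hu i) dv, pd_mul du (pd_diff hv i)]
  ring

theorem lap_const (c : ℝ) (x : E3) : lap (fun _ => c) x = 0 := by
  rw [lap_eq]; simp

theorem pd_const (c : ℝ) (i : Fin 3) (x : E3) : pd i (fun _ => c) x = 0 := by
  rw [pd]; simp

theorem lap_const_mul {u : E3 → ℝ} {x : E3} (c : ℝ) (hu : ContDiffAt ℝ 2 u x) :
    lap (fun y => c * u y) x = c * lap u x := by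
  rw [lap_mul contDiffAt_const hu, lap_const]; simp [pd_const]

/-- radial chain rule -/
theorem pd_radial {g : ℝ → ℝ} {x : E3} {g' : ℝ} (hg : HasDerivAt g g' (‖x‖^2)) (i : Fin 3) :
    pd i (fun y => g (‖y‖^2)) x = 2 * x i * g' := by
  have h1 : HasFDerivAt (fun y : E3 => ‖y‖^2) (2 • (innerSL ℝ x)) x := (hasStrictFDerivAt_norm_sq x).hasFDerivAt
  have := hg.comp_hasFDerivAt x h1
  rw [pd]
  erw [this.fderiv]
  simp [ee, EuclideanSpace.inner_single_right]; ring

theorem lap_radial {g g' : ℝ → ℝ} {x : E3} {g'' : ℝ} (hg : ∀ᶠ t in nhds (‖x‖^2), HasDerivAt g (g' t) t)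
    (hg' : HasDerivAt g' g'' (‖x‖^2)) (hc : ContDiffAt ℝ 2 g (‖x‖^2)) :
    lap (fun y => g (‖y‖^2)) x = 4 * ‖x‖^2 * g'' + 6 * g' (‖x‖^2) := by
  have hcc : ContDiffAt ℝ 2 (fun y : E3 => g (‖y‖^2)) x :=
    hc.comp x ((contDiff_norm_sq ℝ).contDiffAt)
  rw [lap_eq_pd (c2_diff hcc)]
  have hcont : ContinuousAt (fun y : E3 => ‖y‖^2) x := by fun_prop
  have h1 : ∀ i : Fin 3, pd i (pd i fun y => g (‖y‖^2)) x = 2 * g' (‖x‖^2) + 4 * (x i)^2 * g'' := by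
    intro i
    have : pd i (pd i fun y => g (‖y‖^2)) x = pd i (fun y => (2 * y i) * g' (‖y‖^2)) x := by
      apply pd_congr
      filter_upwards [hcont.eventually hg] with y hy
      exact pd_radial hy i
    have hd : DifferentiableAt ℝ (fun y : E3 => g' (‖y‖^2)) x := by
      have h1 : DifferentiableAt ℝ (fun y : E3 => ‖y‖^2) x := (hasStrictFDerivAt_norm_sq x).hasFDerivAt.differentiableAt
      exact hg'.differentiableAt.comp x h1
    have hp : HasFDerivAt (fun y : E3 => 2 * y i) ((2:ℝ) • (EuclideanSpace.proj i : E3 →L[ℝ] ℝ)) x :=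
      ((EuclideanSpace.proj i : E3 →L[ℝ] ℝ).hasFDerivAt (x := x)).const_mul 2
    rw [this, pd_mul hp.differentiableAt hd, pd_radial hg']
    rw [pd, hp.fderiv]
    simp [ee]; ring
  simp only [h1, Finset.sum_add_distrib, Fin.sum_univ_three]
  rw [EuclideanSpace.norm_sq_eq]
  simp [Fin.sum_univ_three]; ring

theorem lap_nonpos_of_isLocalMax {v : E3 → ℝ} {x : E3} (hv : ContDiffAt ℝ 2 v x) (hm : IsLocalMax v x) :
    lap v x ≤ 0 := by
  rw [lap_eq]
  apply Finset.sum_nonpos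
  intro i _
  by_contra! hpos
  set c : ℝ → E3 := fun t => x + t • ee i with hc
  have hc' : ∀ t, HasDerivAt c (ee i) t := fun t => by
    have := ((hasDerivAt_id t).smul_const (ee i)).const_add x
    rw [one_smul] at this
    exact this
  have hct : ContinuousAt c 0 := (hc' 0).continuousAt
  have hc0 : c 0 = x := by simp [hc]
  have hd1 : deriv (fun t => v (c t)) =ᶠ[nhds 0] fun t => fderiv ℝ v (c t) (ee i) := by
    have := hct.eventually (p := fun y => DifferentiableAt ℝ v y) (by rw [hc0]; exact c2_ev hv)
    filter_upwards [this] with t ht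
    exact (ht.hasFDerivAt.comp_hasDerivAt t (hc' t)).deriv
  have hd2 : deriv (deriv (fun t => v (c t))) 0 = fderiv ℝ (fderiv ℝ v) x (ee i) (ee i) := by
    rw [hd1.deriv_eq]
    have h2 : HasFDerivAt (fderiv ℝ v) (fderiv ℝ (fderiv ℝ v) x) (c 0) := by
      rw [hc0]; exact (c2_diff hv).hasFDerivAt
    have := (h2.comp_hasDerivAt 0 (hc' 0)).clm_apply (hasDerivAt_const 0 (ee i))
    simpa using this.deriv
  have hmc : IsLocalMax (fun t => v (c t)) 0 := by
    have := hct.eventually (p := fun y => v y ≤ v x) (by rw [hc0]; exact hm)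
    filter_upwards [this] with t ht
    simpa [hc0] using ht
  have hcont : ContinuousAt (fun t => v (c t)) 0 := by
    refine ContinuousAt.comp (g := v) ?_ hct
    rw [hc0]; exact hv.continuousAt
  have hmin := isLocalMin_of_deriv_deriv_pos (f := fun t => v (c t)) (x₀ := 0) (by rw [hd2]; exact hpos) hmc.deriv_eq_zero hcont
  have hcst : (fun t => v (c t)) =ᶠ[nhds 0] fun _ => v (c 0) := by
    filter_upwards [hmin, hmc] with t h1 h2
    exact le_antisymm h2 h1
  have : deriv (deriv (fun t => v (c t))) 0 = 0 := by
    rw [hcst.deriv.deriv_eq]; simp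
  rw [hd2] at this
  exact absurd this hpos.ne'

theorem max_principle {U : Set E3} (hU : IsOpen U) {v : E3 → ℝ}
    (hK : ∀ c > 0, ∃ K, IsCompact K ∧ K ⊆ U ∧ ∀ x ∈ U, x ∉ K → v x ≤ c)
    (hv : ∀ x ∈ U, ContDiffAt ℝ 2 v x) (hl : ∀ x ∈ U, 0 < v x → 0 < lap v x) :
    ∀ x ∈ U, v x ≤ 0 := by
  intro x1 hx1
  by_contra! hpos
  obtain ⟨K, hKc, hKU, hKv⟩ := hK (v x1 / 2) (by positivity)
  have hx1K : x1 ∈ K := by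
    by_contra h
    have := hKv x1 hx1 h
    linarith
  obtain ⟨x, hxK, hmax⟩ := hKc.exists_isMaxOn ⟨x1, hx1K⟩ (f := v)
    (fun y hy => (hv y (hKU hy)).continuousAt.continuousWithinAt)
  have h1 : v x1 ≤ v x := hmax hx1K
  have hloc : IsLocalMax v x := by
    filter_upwards [hU.mem_nhds (hKU hxK)] with y hy
    by_cases hyK : y ∈ K
    · exact hmax hyK
    · have := hKv y hy hyK
      linarith
  have h2 := lap_nonpos_of_isLocalMax (hv x (hKU hxK)) hloc
  have h3 := hl x (hKU hxK) (by linarith)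
  linarith

theorem div_half (a b : Fin 3 → ℝ) (hab : a ≤ b) (X : Fin 3 → (Fin 3 → ℝ) → ℝ)
    (X' : Fin 3 → (Fin 3 → ℝ) → (Fin 3 → ℝ) →L[ℝ] ℝ) (g : (Fin 3 → ℝ) → ℝ)
    (hX : ∀ i, Continuous (X i)) (hg : Continuous g)
    (hd : ∀ x ∈ Set.pi univ (fun i => Ioo (a i) (b i)), ∀ i, HasFDerivAt (X i) (X' i x) x)
    (hdiv : ∀ x ∈ Set.pi univ (fun i => Ioo (a i) (b i)), ∑ i, X' i x (Pi.single i 1) = g x) :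
    ∫ x in Icc a b, g x = ∑ i : Fin 3,
        ((∫ x in Icc (a ∘ Fin.succAbove i) (b ∘ Fin.succAbove i), X i (Fin.insertNth i (b i) x)) -
        ∫ x in Icc (a ∘ Fin.succAbove i) (b ∘ Fin.succAbove i), X i (Fin.insertNth i (a i) x)) := by
  have hae : (fun x => ∑ i, X' i x (Pi.single i 1)) =ᵐ[volume.restrict (Icc a b)] g := by
    have h1 : (Set.pi univ fun i => Ioo (a i) (b i)) =ᵐ[volume] Icc a b := by
      exact Measure.univ_pi_Ioo_ae_eq_Icc
    rw [← Measure.restrict_congr_set h1]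
    filter_upwards [ae_restrict_mem (MeasurableSet.univ_pi fun i => measurableSet_Ioo)] with x hx
    exact hdiv x hx
  rw [← integral_congr_ae hae]
  refine integral_divergence_of_hasFDerivAt_off_countable' a b hab X X' ∅ countable_empty
    (fun i => (hX i).continuousOn) (fun x hx i => hd x hx.1 i) ?_
  have : IntegrableOn g (Icc a b) := (hg.continuousOn).integrableOn_compact isCompact_Icc
  exact this.congr hae.symm

theorem div_plane_zero (M : ℝ) (hM : 0 < M) (X : Fin 3 → (Fin 3 → ℝ) → ℝ)
    (X' : Fin 3 → (Fin 3 → ℝ) → (Fin 3 → ℝ) →L[ℝ] ℝ) (g : (Fin 3 → ℝ) → ℝ)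
    (hX : ∀ i, Continuous (X i)) (hg : Continuous g)
    (hd : ∀ x, x 0 ≠ 0 → ∀ i, HasFDerivAt (X i) (X' i x) x)
    (hdiv : ∀ x, x 0 ≠ 0 → ∑ i, X' i x (Pi.single i 1) = g x)
    (hXM : ∀ i x j, M ≤ |x j| → X i x = 0) (hgM : ∀ x j, M ≤ |x j| → g x = 0) :
    ∫ x, g x = 0 := by
  have e1 := div_half (fun _ => -M) (fun j => if j = 0 then 0 else M)
    (by intro j; dsimp only; split_ifs <;> linarith) X X' g hX hg
    (fun x hx i => hd x (by have := (hx 0 (mem_univ _)).2; simp at this; exact this.ne) i)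
    (fun x hx => hdiv x (by have := (hx 0 (mem_univ _)).2; simp at this; exact this.ne))
  have e2 := div_half (fun j => if j = 0 then 0 else -M) (fun _ => M)
    (by intro j; dsimp only; split_ifs <;> linarith) X X' g hX hg
    (fun x hx i => hd x (by have := (hx 0 (mem_univ _)).1; simp at this; exact this.ne') i)
    (fun x hx => hdiv x (by have := (hx 0 (mem_univ _)).1; simp at this; exact this.ne'))
  have z1 : ∀ (i : Fin 3) (x : Fin 2 → ℝ), X i (Fin.insertNth (α := fun _ => ℝ) i M x) = 0 := fun i x =>
    hXM i _ i (by rw [Fin.insertNth_apply_same]; exact le_abs_self M)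
  have z2 : ∀ (i : Fin 3) (x : Fin 2 → ℝ), X i (Fin.insertNth (α := fun _ => ℝ) i (-M) x) = 0 := fun i x =>
    hXM i _ i (by rw [Fin.insertNth_apply_same, abs_neg]; exact le_abs_self M)
  have f1 : ((fun _ => -M : Fin 3 → ℝ) ∘ Fin.succAbove 0) = ((fun j => if j = 0 then 0 else -M : Fin 3 → ℝ) ∘ Fin.succAbove 0) := by
    ext j; simp
  have f2 : ((fun j => if j = 0 then 0 else M : Fin 3 → ℝ) ∘ Fin.succAbove 0) = ((fun _ => M : Fin 3 → ℝ) ∘ Fin.succAbove 0) := by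
    ext j; simp
  rw [Fin.sum_univ_three] at e1 e2
  simp only [z1, z2, f1, f2, integral_zero, Fin.isValue, if_true, one_ne_zero, if_false,
    show (2 : Fin 3) ≠ 0 by decide] at e1 e2
  have hun : ∫ x, g x = ∫ x in Icc (fun _ => -M) (fun j => if j = 0 then 0 else M) ∪ Icc (fun j => if j = 0 then 0 else -M) (fun _ => M), g x := by
    rw [setIntegral_eq_integral_of_forall_compl_eq_zero]
    intro x hx
    by_contra h
    apply hx
    have hb : ∀ j, |x j| < M := fun j => by
      by_contra h'
      exact h (hgM x j (not_lt.1 h'))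
    have hb' := fun j => abs_lt.1 (hb j)
    rcases le_total (x 0) 0 with h0 | h0
    · left
      refine ⟨fun j => (hb' j).1.le, fun j => ?_⟩
      dsimp only; split_ifs with hj
      · rw [hj]; exact h0
      · exact (hb' j).2.le
    · right
      refine ⟨fun j => ?_, fun j => (hb' j).2.le⟩
      dsimp only; split_ifs with hj
      · rw [hj]; exact h0
      · exact (hb' j).1.le
  have hnull : AEDisjoint volume (Icc (fun _ => -M) (fun j => if j = 0 then 0 else M : Fin 3 → ℝ)) (Icc (fun j => if j = 0 then 0 else -M : Fin 3 → ℝ) (fun _ => M)) := by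
    refine measure_mono_null (t := {x : Fin 3 → ℝ | x 0 = 0}) ?_ (Measure.pi_hyperplane _ 0 0)
    rintro x ⟨h1, h2⟩
    have a1 := h1.2 0
    have a2 := h2.1 0
    simp at a1 a2
    exact le_antisymm a1 a2
  rw [hun, setIntegral_union₀ hnull measurableSet_Icc.nullMeasurableSet
    (hg.continuousOn.integrableOn_compact isCompact_Icc) (hg.continuousOn.integrableOn_compact isCompact_Icc), e1, e2]
  ring

theorem lap_basis (b : OrthonormalBasis (Fin 3) ℝ E3) (u : E3 → ℝ) (x : E3) :
    lap u x = ∑ i, fderiv ℝ (fderiv ℝ u) x (b i) (b i) := by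
  have h1 := congrFun (InnerProductSpace.laplacian_eq_iteratedFDeriv_orthonormalBasis u b) x
  have h2 := congrFun (InnerProductSpace.laplacian_eq_iteratedFDeriv_orthonormalBasis u (EuclideanSpace.basisFun (Fin 3) ℝ)) x
  rw [h1] at h2
  simp only [iteratedFDeriv_two_apply] at h2
  rw [lap_eq]
  simpa using h2.symm

abbrev Om : Set E3 := {x : E3 | x ≠ 0}

theorem isOpen_Om : IsOpen Om := isOpen_ne

theorem lap_zero_of_notMem {φ : E3 → ℝ} {x : E3} (hx : x ∉ tsupport φ) : lap φ x = 0 := by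
  have : φ =ᶠ[nhds x] fun _ => 0 := by
    filter_upwards [(isClosed_tsupport φ).isOpen_compl.mem_nhds hx] with y hy
    exact image_eq_zero_of_notMem_tsupport hy
  rw [lap_congr this, lap_const]

theorem fderiv_zero_of_notMem {φ : E3 → ℝ} {x : E3} (hx : x ∉ tsupport φ) : fderiv ℝ φ x = 0 := by
  have : φ =ᶠ[nhds x] fun _ => 0 := by
    filter_upwards [(isClosed_tsupport φ).isOpen_compl.mem_nhds hx] with y hy
    exact image_eq_zero_of_notMem_tsupport hy
  rw [this.fderiv_eq]; simp

theorem contAt_of_notMem {K : Set E3} (hK : IsClosed K) {h : E3 → ℝ} (h0 : ∀ y ∉ K, h y = 0) {x : E3} (hx : x ∉ K) :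
    ContinuousAt h x := by
  have : h =ᶠ[nhds x] fun _ => 0 := by
    filter_upwards [hK.isOpen_compl.mem_nhds hx] with y hy
    exact h0 y hy
  exact continuousAt_const.congr this.symm

theorem lap_continuousAt {φ : E3 → ℝ} {x : E3} (hφ : ContDiffAt ℝ 2 φ x) : ContinuousAt (lap φ) x := by
  have h1 : ContinuousAt (fun y => ∑ i : Fin 3, fderiv ℝ (fderiv ℝ φ) y (ee i) (ee i)) x := by
    have h2 : ContinuousAt (fun y => fderiv ℝ (fderiv ℝ φ) y) x :=
      ((hφ.fderiv_right (m := 1) (by norm_num)).fderiv_right (m := 0) (by norm_num)).continuousAt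
    refine tendsto_finsetSum _ fun i _ => ?_
    exact (h2.clm_apply continuousAt_const).clm_apply continuousAt_const
  have : lap φ = fun y => ∑ i : Fin 3, fderiv ℝ (fderiv ℝ φ) y (ee i) (ee i) := funext fun y => lap_eq φ y
  rw [this]; exact h1

/-- Weak form of the equation, allowing an exceptional hyperplane. -/
theorem weak_form {u f φ : E3 → ℝ} {n : E3} (hn : ‖n‖ = 1) (hu : ContDiffOn ℝ 1 u Om)
    (hf : ContinuousOn f Om)
    (huf : ∀ x ∈ Om, ⟪n, x⟫ ≠ 0 → DifferentiableAt ℝ (fderiv ℝ u) x ∧ lap u x = f x)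
    (hφ : ContDiff ℝ 2 φ) (hφc : HasCompactSupport φ) (hφs : tsupport φ ⊆ Om) :
    ∫ x, u x * lap φ x = ∫ x, f x * φ x := by
  obtain ⟨b, hb⟩ : ∃ b : OrthonormalBasis (Fin 3) ℝ E3, b 0 = n := by
    have hv : Orthonormal ℝ (({0} : Set (Fin 3)).domRestrict (fun _ => n)) := by
      constructor
      · intro i; simp [hn]
      · intro i j hij
        exact absurd (Subsingleton.elim i j) hij
    obtain ⟨b, hb⟩ := hv.exists_orthonormalBasis_extension_of_card_eq (by simp)
    exact ⟨b, hb 0 rfl⟩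
  set L : (Fin 3 → ℝ) →L[ℝ] E3 := (b.repr.symm.toContinuousLinearEquiv : EuclideanSpace ℝ (Fin 3) →L[ℝ] E3).comp
    ((EuclideanSpace.equiv (Fin 3) ℝ).symm : (Fin 3 → ℝ) →L[ℝ] EuclideanSpace ℝ (Fin 3)) with hL
  have hLr : ∀ y i, ⟪b i, L y⟫ = y i := by
    intro y i
    rw [← b.repr_apply_apply]
    simp [hL]
  have hLs : ∀ i, L (Pi.single i 1) = b i := by
    intro i
    rw [← b.repr.injective.eq_iff, b.repr_self]
    simp [hL]
  set g : E3 → ℝ := fun x => φ x * f x - u x * lap φ x with hg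
  set Y : Fin 3 → E3 → ℝ := fun i x => φ x * fderiv ℝ u x (b i) - u x * fderiv ℝ φ x (b i) with hY
  have hg0 : ∀ x ∉ tsupport φ, g x = 0 := fun x hx => by
    simp [hg, image_eq_zero_of_notMem_tsupport hx, lap_zero_of_notMem hx]
  have hY0 : ∀ i, ∀ x ∉ tsupport φ, Y i x = 0 := fun i x hx => by
    simp [hY, image_eq_zero_of_notMem_tsupport hx, fderiv_zero_of_notMem hx]
  have huAt : ∀ x ∈ Om, ContDiffAt ℝ 1 u x := fun x hx => hu.contDiffAt (isOpen_Om.mem_nhds hx)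
  have hgc : Continuous g := by
    rw [continuous_iff_continuousAt]
    intro x
    by_cases hx : x ∈ tsupport φ
    · have hx' := hφs hx
      exact (hφ.continuous.continuousAt.mul (hf.continuousAt (isOpen_Om.mem_nhds hx'))).sub
        ((huAt x hx').continuousAt.mul (lap_continuousAt hφ.contDiffAt))
    · exact contAt_of_notMem (isClosed_tsupport φ) hg0 hx
  have hYc : ∀ i, Continuous (Y i) := by
    intro i
    rw [continuous_iff_continuousAt]
    intro x
    by_cases hx : x ∈ tsupport φ
    · have hx' := hφs hx
      refine (hφ.continuous.continuousAt.mul ?_).sub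
        ((huAt x hx').continuousAt.mul ?_)
      · exact (((huAt x hx').fderiv_right (m := 0) (by norm_num)).continuousAt).clm_apply continuousAt_const
      · exact ((hφ.contDiffAt.fderiv_right (m := 0) (by norm_num)).continuousAt).clm_apply continuousAt_const
    · exact contAt_of_notMem (isClosed_tsupport φ) (hY0 i) hx
  have hYd : ∀ x : E3, ⟪n, x⟫ ≠ 0 → ∀ i, DifferentiableAt ℝ (Y i) x ∧ fderiv ℝ (Y i) x (b i) =
      φ x * fderiv ℝ (fderiv ℝ u) x (b i) (b i) - u x * fderiv ℝ (fderiv ℝ φ) x (b i) (b i) := by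
    intro x hx i
    have hxO : x ∈ Om := by rintro rfl; simp at hx
    have h1 := (hφ.differentiable (by norm_num) x).hasFDerivAt
    have h2 := ((huAt x hxO).differentiableAt (by norm_num)).hasFDerivAt
    have h3 := ((huf x hxO hx).1).hasFDerivAt.clm_apply (hasFDerivAt_const (b i) x)
    have h4 := (c2_diff (hφ.contDiffAt (x := x))).hasFDerivAt.clm_apply (hasFDerivAt_const (b i) x)
    have h5 := (h1.mul h3).sub (h2.mul h4)
    refine ⟨h5.differentiableAt, ?_⟩
    have h6 := h5.fderiv
    have : fderiv ℝ (Y i) x = _ := h6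
    rw [this]
    simp
    ring
  obtain ⟨M, hM, hMK⟩ : ∃ M > 0, ∀ x ∈ tsupport φ, ‖x‖ < M := by
    obtain ⟨M, hM⟩ := (hφc.isCompact).isBounded.exists_norm_le
    exact ⟨max M 0 + 1, by positivity, fun x hx => lt_of_le_of_lt ((hM x hx).trans (le_max_left _ _)) (lt_add_one _)⟩
  have hout : ∀ (y : Fin 3 → ℝ) j, M ≤ |y j| → L y ∉ tsupport φ := by
    intro y j hy h
    have h1 := hMK _ h
    have h2 := abs_real_inner_le_norm (b j) (L y)
    rw [hLr, b.norm_eq_one, one_mul] at h2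
    linarith
  have key := div_plane_zero M hM (fun i y => Y i (L y)) (fun i y => (fderiv ℝ (Y i) (L y)).comp L) (fun y => g (L y))
    (fun i => (hYc i).comp L.continuous) (hgc.comp L.continuous)
    (fun y hy i => by
      have h1 : HasFDerivAt (Y i) (fderiv ℝ (Y i) (L y)) (L y) :=
        (hYd (L y) (by rw [← hb, hLr]; exact hy) i).1.hasFDerivAt
      exact h1.comp y L.hasFDerivAt)
    (fun y hy => by
      have hy' : ⟪n, L y⟫ ≠ 0 := by rw [← hb, hLr]; exact hy
      have hyO : L y ∈ Om := by intro h; rw [h] at hy'; simp at hy'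
      simp only [ContinuousLinearMap.comp_apply, hLs, (hYd (L y) hy' _).2, Finset.sum_sub_distrib, ← Finset.mul_sum]
      rw [← lap_basis, ← lap_basis, (huf _ hyO hy').2])
    (fun i y j hy => hY0 i _ (hout y j hy)) (fun y j hy => hg0 _ (hout y j hy))
  have hmp : MeasurePreserving L volume volume := by
    have h1 := b.measurePreserving_repr_symm
    have h2 := EuclideanSpace.volume_preserving_symm_measurableEquiv_toLp (Fin 3)
    exact h1.comp h2.symm
  have hme : MeasurableEmbedding L := by
    exact ((EuclideanSpace.equiv (Fin 3) ℝ).symm.trans b.repr.symm.toContinuousLinearEquiv).toHomeomorph.measurableEmbedding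
  rw [hmp.integral_comp hme g] at key
  have hi1 : Integrable (fun x => f x * φ x) := by
    have : Continuous (fun x => f x * φ x) := by
      rw [continuous_iff_continuousAt]
      intro x
      by_cases hx : x ∈ tsupport φ
      · exact (hf.continuousAt (isOpen_Om.mem_nhds (hφs hx))).mul hφ.continuous.continuousAt
      · exact contAt_of_notMem (isClosed_tsupport φ) (h := fun x => f x * φ x) (fun y hy => by simp [image_eq_zero_of_notMem_tsupport hy]) hx
    exact this.integrable_of_hasCompactSupport hφc.mul_left
  have hgi : Integrable g := hgc.integrable_of_hasCompactSupport (HasCompactSupport.intro hφc.isCompact hg0)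
  have hi2 : Integrable (fun x => u x * lap φ x) := by
    refine (hi1.sub hgi).congr (Eventually.of_forall fun x => ?_)
    simp [hg]; ring
  have : ∫ x, g x = (∫ x, f x * φ x) - ∫ x, u x * lap φ x := by
    rw [← integral_sub hi1 hi2]
    refine integral_congr_ae (Eventually.of_forall fun x => ?_)
    simp [hg]; ring
  linarith

def Nn (e : ℝ) (z : E3) : ℝ := (‖z‖^2 + e) ^ (-(1/2) : ℝ)
def ND (e : ℝ) (i : Fin 3) (z : E3) : ℝ := - z i * (‖z‖^2 + e) ^ (-(3/2) : ℝ)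

theorem nn_g1 {e t : ℝ} (h : 0 < t + e) :
    HasDerivAt (fun t : ℝ => (t + e) ^ (-(1/2) : ℝ)) (-(1/2) * (t + e) ^ (-(3/2) : ℝ)) t := by
  have := ((hasDerivAt_id t).add_const e).rpow_const (p := -(1/2)) (Or.inl h.ne')
  convert this using 1
  simp only [id]; norm_num

theorem nn_g2 {e t : ℝ} (h : 0 < t + e) :
    HasDerivAt (fun t : ℝ => -(1/2) * (t + e) ^ (-(3/2) : ℝ)) ((3/4) * (t + e) ^ (-(5/2) : ℝ)) t := by
  have := (((hasDerivAt_id t).add_const e).rpow_const (p := -(3/2)) (Or.inl h.ne')).const_mul (-(1/2))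
  have h2 : -(1 / 2) * (1 * -(3 / 2) * (id t + e) ^ (-(3 / 2) - 1 : ℝ)) = (3/4) * (t + e) ^ (-(5/2) : ℝ) := by
    simp only [id]; norm_num; ring
  rw [← h2]; exact this

theorem Nn_smooth {e : ℝ} {z : E3} {n : WithTop ℕ∞} (h : 0 < ‖z‖^2 + e) : ContDiffAt ℝ n (Nn e) z := by
  unfold Nn
  exact (((contDiff_norm_sq ℝ).contDiffAt).add contDiffAt_const).rpow_const_of_ne h.ne'

theorem pd_Nn {e : ℝ} {z : E3} (h : 0 < ‖z‖^2 + e) (i : Fin 3) : pd i (Nn e) z = ND e i z := by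
  unfold Nn ND
  rw [pd_radial (g := fun t : ℝ => (t + e) ^ (-(1/2) : ℝ)) (nn_g1 h)]
  ring

theorem lap_Nn {e : ℝ} {z : E3} (h : 0 < ‖z‖^2 + e) :
    lap (Nn e) z = - 3 * e * (‖z‖^2 + e) ^ (-(5/2) : ℝ) := by
  unfold Nn
  rw [lap_radial (g := fun t : ℝ => (t + e) ^ (-(1/2) : ℝ)) (g' := fun t : ℝ => -(1/2) * (t + e) ^ (-(3/2) : ℝ)) _ (nn_g2 h)]
  · have : (‖z‖^2 + e) ^ (-(3/2) : ℝ) = (‖z‖^2+e) * (‖z‖^2 + e) ^ (-(5/2) : ℝ) := by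
      rw [← Real.rpow_one_add' h.le (by norm_num)]; norm_num
    rw [this]; ring
  · exact (contDiffAt_id.add contDiffAt_const).rpow_const_of_ne h.ne'
  · have : ∀ᶠ t in nhds (‖z‖^2), 0 < t + e := 
      (continuous_id.add continuous_const).continuousAt.eventually (lt_mem_nhds h)
    filter_upwards [this] with t ht using nn_g1 ht

def eta (ρ : ℝ) (z : E3) : ℝ := Real.smoothTransition (2 - 2 * ‖z‖^2 / ρ^2)

theorem eta_smooth (ρ : ℝ) : ContDiff ℝ (⊤ : ℕ∞) (eta ρ) := by
  unfold eta
  refine Real.smoothTransition.contDiff.comp ?_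
  exact contDiff_const.sub ((contDiff_const.mul (contDiff_norm_sq ℝ)).div_const _)

theorem eta_smooth' (ρ : ℝ) {n : ℕ} : ContDiff ℝ n (eta ρ) := (eta_smooth ρ).of_le (by exact_mod_cast le_top)
theorem eta_smooth2 (ρ : ℝ) : ContDiff ℝ 2 (eta ρ) := eta_smooth' ρ (n := 2)

theorem eta_zero {ρ : ℝ} (hρ : 0 < ρ) {z : E3} (h : ρ ≤ ‖z‖) : eta ρ z = 0 := by
  apply Real.smoothTransition.zero_of_nonpos
  have : 1 ≤ ‖z‖^2 / ρ^2 := by rw [one_le_div (by positivity)]; gcongr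
  have : 2 * ‖z‖^2 / ρ^2 = 2 * (‖z‖^2 / ρ^2) := by ring
  linarith

theorem eta_one {ρ : ℝ} (hρ : 0 < ρ) {z : E3} (h : ‖z‖ ≤ ρ/2) : eta ρ z = 1 := by
  apply Real.smoothTransition.one_of_one_le
  have : ‖z‖^2 / ρ^2 ≤ 1/2 := by
    rw [div_le_iff₀ (by positivity)]
    nlinarith [norm_nonneg z, pow_le_pow_left₀ (norm_nonneg z) h 2]
  have : 2 * ‖z‖^2 / ρ^2 = 2 * (‖z‖^2 / ρ^2) := by ring
  linarith

theorem eta_le (ρ : ℝ) (z : E3) : |eta ρ z| ≤ 1 := by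
  unfold eta; rw [abs_of_nonneg (Real.smoothTransition.nonneg _)]; exact Real.smoothTransition.le_one _

theorem eta_ts {ρ : ℝ} (hρ : 0 < ρ) : tsupport (eta ρ) ⊆ closedBall 0 ρ := by
  apply closure_minimal _ isClosed_closedBall
  intro z hz
  by_contra hc
  rw [mem_closedBall, dist_zero_right, not_le] at hc
  exact hz (eta_zero hρ hc.le)

theorem eta_cs {ρ : ℝ} (hρ : 0 < ρ) : HasCompactSupport (eta ρ) :=
  HasCompactSupport.of_support_subset_isCompact (isCompact_closedBall 0 ρ) ((subset_tsupport _).trans (eta_ts hρ))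

theorem eta_ev {ρ : ℝ} (hρ : 0 < ρ) {z : E3} (h : ‖z‖ < ρ/2) : eta ρ =ᶠ[nhds z] fun _ => (1:ℝ) := by
  have : ∀ᶠ y in nhds z, ‖y‖ < ρ/2 := continuous_norm.continuousAt.eventually (gt_mem_nhds h)
  filter_upwards [this] with y hy using eta_one hρ hy.le

theorem pd_eta_zero {ρ : ℝ} (hρ : 0 < ρ) {z : E3} (h : ‖z‖ < ρ/2) (i : Fin 3) : pd i (eta ρ) z = 0 := by
  rw [pd_congr (eta_ev hρ h), pd_const]
theorem lap_eta_zero {ρ : ℝ} (hρ : 0 < ρ) {z : E3} (h : ‖z‖ < ρ/2) : lap (eta ρ) z = 0 := by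
  rw [lap_congr (eta_ev hρ h), lap_const]
theorem pd_eta_zero' {ρ : ℝ} (hρ : 0 < ρ) {z : E3} (h : ρ < ‖z‖) (i : Fin 3) : pd i (eta ρ) z = 0 := by
  have : z ∉ tsupport (eta ρ) := fun hz => by
    have := eta_ts hρ hz; simp at this; linarith
  rw [pd, fderiv_zero_of_notMem this]; simp
theorem lap_eta_zero' {ρ : ℝ} (hρ : 0 < ρ) {z : E3} (h : ρ < ‖z‖) : lap (eta ρ) z = 0 := by
  have : z ∉ tsupport (eta ρ) := fun hz => by
    have := eta_ts hρ hz; simp at this; linarith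
  exact lap_zero_of_notMem this

theorem nat_le_inf (n : ℕ) : ((n : ℕ) : WithTop ℕ∞) ≤ ((⊤ : ℕ∞) : WithTop ℕ∞) := by exact_mod_cast le_top
theorem two_le_inf : (2 : WithTop ℕ∞) ≤ ((⊤ : ℕ∞) : WithTop ℕ∞) := nat_le_inf 2

theorem pd_smooth {u : E3 → ℝ} (h : ContDiff ℝ (⊤ : ℕ∞) u) (i : Fin 3) : ContDiff ℝ (⊤ : ℕ∞) (pd i u) := by
  rw [contDiff_iff_contDiffAt] at *
  intro x; exact pd_contDiffAt (h x) (by rfl) i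

theorem lap_smooth {u : E3 → ℝ} (h : ContDiff ℝ (⊤ : ℕ∞) u) : ContDiff ℝ (⊤ : ℕ∞) (lap u) := by
  have : lap u = fun x => ∑ i, pd i (pd i u) x := by
    funext x; exact lap_eq_pd (c2_diff ((h.of_le (two_le_inf)).contDiffAt))
  rw [this]
  exact ContDiff.sum fun i _ => pd_smooth (pd_smooth h i) i

def GG (ρ e : ℝ) (z : E3) : ℝ := eta ρ z * Nn e z
def SS (ρ e : ℝ) (z : E3) : ℝ := lap (eta ρ) z * Nn e z + 2 * ∑ i, pd i (eta ρ) z * ND e i z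

theorem GG_smooth (ρ : ℝ) {e : ℝ} {n : ℕ∞} (he : 0 < e) : ContDiff ℝ n (GG ρ e) := by
  rw [contDiff_iff_contDiffAt]; intro z
  exact ((eta_smooth ρ).of_le (by exact_mod_cast le_top)).contDiffAt.mul (Nn_smooth (by positivity))

theorem lap_GG (ρ : ℝ) {e : ℝ} (he : 0 < e) (z : E3) :
    lap (GG ρ e) z = SS ρ e z - 3 * e * (‖z‖^2 + e) ^ (-(5/2) : ℝ) * eta ρ z := by
  have h : 0 < ‖z‖^2 + e := by positivity
  have := lap_mul (u := eta ρ) (v := Nn e) (x := z) (eta_smooth2 ρ).contDiffAt (Nn_smooth h)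
  unfold GG; rw [this, SS, lap_Nn h]
  simp only [pd_Nn h]; ring

theorem ND_smooth {e : ℝ} {z : E3} {n : WithTop ℕ∞} (h : 0 < ‖z‖^2 + e) (i : Fin 3) : ContDiffAt ℝ n (ND e i) z := by
  unfold ND
  refine ContDiffAt.mul ?_ ((((contDiff_norm_sq ℝ).contDiffAt).add contDiffAt_const).rpow_const_of_ne h.ne')
  exact (by fun_prop : ContDiff ℝ n (fun z : E3 => - z i)).contDiffAt

theorem SS_smooth {ρ : ℝ} (hρ : 0 < ρ) {e : ℝ} (he : 0 ≤ e) : ContDiff ℝ (⊤ : ℕ∞) (SS ρ e) := by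
  rw [contDiff_iff_contDiffAt]; intro z
  by_cases h : ‖z‖ < ρ/2
  · have h1 : SS ρ e =ᶠ[nhds z] fun _ => 0 := by
      have : ∀ᶠ y in nhds z, ‖y‖ < ρ/2 := continuous_norm.continuousAt.eventually (gt_mem_nhds h)
      filter_upwards [this] with y hy
      simp [SS, lap_eta_zero hρ hy, pd_eta_zero hρ hy]
    exact contDiffAt_const.congr_of_eventuallyEq h1
  · have hz : 0 < ‖z‖^2 + e := by
      have : 0 < ‖z‖ := by linarith
      positivity
    unfold SS
    refine ((lap_smooth (eta_smooth ρ)).contDiffAt.mul (Nn_smooth hz)).add (contDiffAt_const.mul ?_)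
    exact ContDiffAt.sum fun i _ => (pd_smooth (eta_smooth ρ) i).contDiffAt.mul (ND_smooth hz i)

theorem SS_zero {ρ : ℝ} (hρ : 0 < ρ) (e : ℝ) {z : E3} (h : ρ < ‖z‖) : SS ρ e z = 0 := by
  simp [SS, lap_eta_zero' hρ h, pd_eta_zero' hρ h]
theorem GG_zero {ρ : ℝ} (hρ : 0 < ρ) (e : ℝ) {z : E3} (h : ρ < ‖z‖) : GG ρ e z = 0 := by
  simp [GG, eta_zero hρ h.le]

theorem Nn_bd {e : ℝ} (he : 0 ≤ e) {z : E3} (hz : z ≠ 0) : |Nn e z| ≤ ‖z‖ ^ (-1 : ℝ) := by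
  have hz' : 0 < ‖z‖ := norm_pos_iff.2 hz
  unfold Nn
  rw [abs_of_nonneg (by positivity)]
  calc (‖z‖^2 + e) ^ (-(1/2) : ℝ) ≤ (‖z‖^2) ^ (-(1/2) : ℝ) :=
        Real.rpow_le_rpow_of_nonpos (by positivity) (by linarith) (by norm_num)
    _ = _ := by rw [← Real.rpow_natCast, ← Real.rpow_mul hz'.le]; norm_num

theorem ND_bd {e : ℝ} (he : 0 ≤ e) {z : E3} (hz : z ≠ 0) (i : Fin 3) : |ND e i z| ≤ ‖z‖ ^ (-2 : ℝ) := by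
  have hz' : 0 < ‖z‖ := norm_pos_iff.2 hz
  unfold ND
  rw [abs_mul, abs_neg, abs_of_nonneg (a := (_:ℝ)^(_:ℝ)) (by positivity)]
  calc |z i| * (‖z‖^2 + e) ^ (-(3/2) : ℝ) ≤ ‖z‖ * (‖z‖^2) ^ (-(3/2) : ℝ) := by
        refine mul_le_mul (by simpa using PiLp.norm_apply_le z i) ?_ (by positivity) hz'.le
        exact Real.rpow_le_rpow_of_nonpos (by positivity) (by linarith) (by norm_num)
    _ = _ := by 
      rw [← Real.rpow_natCast, ← Real.rpow_mul hz'.le, ← Real.rpow_one_add' hz'.le (by norm_num)]; norm_num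

theorem intpow {p : ℝ} (hp : -3 < p) (R : ℝ) : IntegrableOn (fun z : E3 => ‖z‖ ^ p) (closedBall 0 R) := by
  have h : IntegrableOn (fun z : E3 => ‖z‖ ^ p) (ball 0 (R+1)) := by
    rw [integrableOn_fun_norm_addHaar volume (f := fun t : ℝ => t ^ p)]
    have h1 : IntegrableOn (fun t : ℝ => t ^ (p+2)) (Ioo 0 (R+1)) := by
      by_cases hR : 0 < R + 1
      · exact (intervalIntegral.integrableOn_Ioo_rpow_iff hR).2 (by linarith)
      · rw [Ioo_eq_empty hR]; simp
    refine h1.congr_fun ?_ measurableSet_Ioo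
    intro t ht
    simp only [finrank_euclideanSpace, Fintype.card_fin, smul_eq_mul]
    rw [Real.rpow_add ht.1]; norm_num; ring
  exact h.mono_set (closedBall_subset_ball (by linarith))

def WeakSol (u f : E3 → ℝ) : Prop := ∀ φ : E3 → ℝ, ContDiff ℝ 2 φ → HasCompactSupport φ → tsupport φ ⊆ Om →
  ∫ x, u x * lap φ x = ∫ x, f x * φ x

def LB (u : E3 → ℝ) : Prop := Measurable u ∧ ∀ K : Set E3, IsCompact K → K ⊆ Om → ∃ M, ∀ x ∈ K, |u x| ≤ M

theorem ae_ne0 : ∀ᵐ z : E3, z ≠ 0 := by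
  rw [ae_iff]; simp

theorem dom_int {k b w : E3 → ℝ} {M : ℝ} (hb : Integrable b) (hk : AEStronglyMeasurable k)
    (hbd : ∀ z ≠ 0, |k z| ≤ b z) (hw : Measurable w) (hwM : ∀ z, b z ≠ 0 → |w z| ≤ M) :
    Integrable (fun z => k z * w z) := by
  refine (hb.mul_const |M|).mono' (hk.mul hw.aestronglyMeasurable) ?_
  filter_upwards [ae_ne0] with z hz
  rw [Real.norm_eq_abs, abs_mul]
  by_cases h0 : b z = 0
  · have := hbd z hz
    have h1 : |k z| = 0 := le_antisymm (this.trans h0.le) (abs_nonneg _)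
    simp [h1, h0]
  · exact mul_le_mul (hbd z hz) ((hwM z h0).trans (le_abs_self M)) (abs_nonneg _) ((abs_nonneg _).trans (hbd z hz))

theorem dom_tendsto {ι : Type*} {l : Filter ι} [l.IsCountablyGenerated] {k : ι → E3 → ℝ} {k0 b w : E3 → ℝ} {M : ℝ}
    (hb : Integrable b) (hk : ∀ᶠ n in l, AEStronglyMeasurable (k n))
    (hbd : ∀ᶠ n in l, ∀ z ≠ 0, |k n z| ≤ b z) (hlim : ∀ z ≠ 0, Tendsto (fun n => k n z) l (nhds (k0 z)))
    (hw : Measurable w) (hwM : ∀ z, b z ≠ 0 → |w z| ≤ M) :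
    Tendsto (fun n => ∫ z, k n z * w z) l (nhds (∫ z, k0 z * w z)) := by
  refine tendsto_integral_filter_of_dominated_convergence (fun z => b z * |M|) ?_ ?_ (hb.mul_const _) ?_
  · filter_upwards [hk] with n hn using hn.mul hw.aestronglyMeasurable
  · filter_upwards [hbd] with n hbd
    filter_upwards [ae_ne0] with z hz
    rw [Real.norm_eq_abs, abs_mul]
    by_cases h0 : b z = 0
    · have := hbd z hz
      have h1 : |k n z| = 0 := le_antisymm (this.trans h0.le) (abs_nonneg _)
      simp [h1, h0]
    · exact mul_le_mul (hbd z hz) ((hwM z h0).trans (le_abs_self M)) (abs_nonneg _) ((abs_nonneg _).trans (hbd z hz))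
  · filter_upwards [ae_ne0] with z hz
    exact (hlim z hz).mul_const _

def bnd (ρ C p : ℝ) : E3 → ℝ := (closedBall (0:E3) ρ).indicator (fun z => C * ‖z‖ ^ p)

theorem bnd_int {ρ C p : ℝ} (hp : -3 < p) : Integrable (bnd ρ C p) := by
  unfold bnd
  rw [integrable_indicator_iff measurableSet_closedBall]
  exact (intpow hp ρ).const_mul C

theorem bnd_ne {ρ C p : ℝ} {z : E3} (h : bnd ρ C p z ≠ 0) : z ∈ closedBall (0:E3) ρ := by
  by_contra hc; exact h (by simp [bnd, indicator_of_notMem hc])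

theorem GG_bd {ρ : ℝ} (hρ : 0 < ρ) {e : ℝ} (he : 0 ≤ e) {z : E3} (hz : z ≠ 0) : |GG ρ e z| ≤ bnd ρ 1 (-1) z := by
  by_cases h : z ∈ closedBall (0:E3) ρ
  · rw [bnd, indicator_of_mem h, GG, abs_mul]
    exact mul_le_mul (eta_le ρ z) (Nn_bd he hz) (abs_nonneg _) zero_le_one
  · rw [bnd, indicator_of_notMem h]
    rw [GG_zero hρ e (by simpa using h)]; simp

theorem bdd_of_cs {h : E3 → ℝ} (hc : Continuous h) (hs : HasCompactSupport h) : ∃ L, 0 ≤ L ∧ ∀ z, |h z| ≤ L := by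
  obtain ⟨C, hC⟩ := hs.exists_bound_of_continuous hc
  exact ⟨C, (norm_nonneg _).trans (hC 0), hC⟩

theorem pd_cs {h : E3 → ℝ} (hs : HasCompactSupport h) (i : Fin 3) : HasCompactSupport (pd i h) := by
  have := hs.fderiv (𝕜 := ℝ)
  exact this.comp_left (g := fun L : E3 →L[ℝ] ℝ => L (ee i)) (by simp)

theorem lap_cs {h : E3 → ℝ} (hs : HasCompactSupport h) : HasCompactSupport (lap h) := by
  refine HasCompactSupport.of_support_subset_isCompact hs fun x hx => ?_
  by_contra hc
  exact hx (lap_zero_of_notMem hc)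

theorem SS_bd {ρ : ℝ} (hρ : 0 < ρ) : ∃ C, ∀ e ≥ 0, ∀ z : E3, z ≠ 0 → |SS ρ e z| ≤ bnd ρ C (-2) z := by
  obtain ⟨L, hL0, hL⟩ := bdd_of_cs (lap_smooth (eta_smooth ρ)).continuous (lap_cs (eta_cs hρ))
  choose D hD0 hD using fun i => bdd_of_cs (pd_smooth (eta_smooth ρ) i).continuous (pd_cs (eta_cs hρ) i)
  refine ⟨L * ρ + 2 * ∑ i, D i, fun e he z hz => ?_⟩
  by_cases h : z ∈ closedBall (0:E3) ρ
  · rw [bnd, indicator_of_mem h, SS, add_mul]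
    have hz' : 0 < ‖z‖ := norm_pos_iff.2 hz
    have hzρ : ‖z‖ ≤ ρ := by simpa using h
    refine (abs_add_le _ _).trans (add_le_add ?_ ?_)
    · rw [abs_mul, mul_assoc]
      refine mul_le_mul (hL z) ((Nn_bd he hz).trans ?_) (abs_nonneg _) hL0
      have : ‖z‖ ^ (-1 : ℝ) = ‖z‖ * ‖z‖ ^ (-2 : ℝ) := by
        rw [← Real.rpow_one_add' hz'.le (by norm_num)]; norm_num
      rw [this]; gcongr
    · rw [abs_mul, abs_of_pos (two_pos), mul_assoc, Finset.sum_mul]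
      gcongr
      refine (Finset.abs_sum_le_sum_abs _ _).trans (Finset.sum_le_sum fun i _ => ?_)
      rw [abs_mul]
      exact mul_le_mul (hD i z) (ND_bd he hz i) (abs_nonneg _) (hD0 i)
  · rw [bnd, indicator_of_notMem h]
    rw [SS_zero hρ e (by simpa using h)]; simp

theorem Nn_meas (e : ℝ) : Measurable (Nn e) := by unfold Nn; fun_prop
theorem ND_meas (e : ℝ) (i : Fin 3) : Measurable (ND e i) := by unfold ND; fun_prop
theorem GG_meas (ρ e : ℝ) : Measurable (GG ρ e) := (eta_smooth ρ).continuous.measurable.mul (Nn_meas e)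
theorem SS_meas (ρ e : ℝ) : Measurable (SS ρ e) := by
  unfold SS
  refine ((lap_smooth (eta_smooth ρ)).continuous.measurable.mul (Nn_meas e)).add (Measurable.const_mul ?_ _)
  exact Finset.measurable_sum _ fun i _ => (pd_smooth (eta_smooth ρ) i).continuous.measurable.mul (ND_meas e i)

theorem rpow_lim {z : E3} (hz : z ≠ 0) (p : ℝ) {ι : Type*} {l : Filter ι} {e : ι → ℝ} (he : Tendsto e l (nhds 0)) :
    Tendsto (fun n => (‖z‖^2 + e n) ^ p) l (nhds ((‖z‖^2 + 0) ^ p)) := by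
  have hz' : 0 < ‖z‖ := norm_pos_iff.2 hz
  exact (tendsto_const_nhds.add he).rpow_const (Or.inl (by positivity))

theorem GG_lim (ρ : ℝ) {z : E3} (hz : z ≠ 0) {ι : Type*} {l : Filter ι} {e : ι → ℝ} (he : Tendsto e l (nhds 0)) :
    Tendsto (fun n => GG ρ (e n) z) l (nhds (GG ρ 0 z)) := (rpow_lim hz _ he).const_mul _

theorem SS_lim (ρ : ℝ) {z : E3} (hz : z ≠ 0) {ι : Type*} {l : Filter ι} {e : ι → ℝ} (he : Tendsto e l (nhds 0)) :
    Tendsto (fun n => SS ρ (e n) z) l (nhds (SS ρ 0 z)) := by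
  unfold SS
  refine ((rpow_lim hz _ he).const_mul _).add (Tendsto.const_mul _ ?_)
  exact tendsto_finsetSum _ fun i _ => ((rpow_lim hz _ he).const_mul _).const_mul _

theorem fderiv_const_sub' {F : Type*} [NormedAddCommGroup F] [NormedSpace ℝ F] (h : E3 → F) (x y : E3) :
    fderiv ℝ (fun y => h (x - y)) y = - fderiv ℝ h (x - y) := by
  have h1 := (ContinuousLinearEquiv.neg ℝ (M := E3)).comp_right_fderiv (f := fun w => h (x + w)) (x := y)
  have h2 : (fun w => h (x + w)) ∘ (ContinuousLinearEquiv.neg ℝ (M := E3)) = fun y => h (x - y) := by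
    funext y; simp [sub_eq_add_neg]
  rw [h2] at h1
  rw [h1, fderiv_comp_add_left]
  ext v; simp [sub_eq_add_neg]

theorem lap_comp_sub (h : E3 → ℝ) (x y : E3) : lap (fun y => h (x - y)) y = lap h (x - y) := by
  rw [lap_eq, lap_eq]
  have : fderiv ℝ (fun y => h (x - y)) = fun y => - fderiv ℝ h (x - y) := by
    funext y; exact fderiv_const_sub' h x y
  rw [this]
  have h2 : fderiv ℝ (fun y => - fderiv ℝ h (x - y)) y = fderiv ℝ (fderiv ℝ h) (x - y) := by
    rw [fderiv_fun_neg, fderiv_const_sub']; simp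
  rw [h2]

def c0 : ℝ := ∫ z : E3, 3 * ((1:ℝ) + ‖z‖^2) ^ (-5/2 : ℝ)

theorem c0_int : Integrable (fun z : E3 => 3 * ((1:ℝ) + ‖z‖^2) ^ (-5/2 : ℝ)) :=
  (integrable_rpow_neg_one_add_norm_sq (by simp; norm_num)).const_mul 3

theorem c0_pos : 0 < c0 := by
  unfold c0
  rw [integral_pos_iff_support_of_nonneg (fun z => by positivity) c0_int]
  have : Function.support (fun z : E3 => 3 * ((1:ℝ) + ‖z‖^2) ^ (-5/2 : ℝ)) = univ := by
    ext z; simp; positivity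
  rw [this]; simp

theorem peak_lim {g : E3 → ℝ} (hg : Integrable g) (hc : ContinuousAt g 0) :
    Tendsto (fun c : ℝ => ∫ z, 3 * (c^2)⁻¹ * (‖z‖^2 + (c^2)⁻¹) ^ (-(5/2) : ℝ) * g z) atTop (nhds (c0 * g 0)) := by
  have := tendsto_integral_comp_smul_smul_of_integrable (μ := (volume : Measure E3))
    (φ := fun z => c0⁻¹ * (3 * ((1:ℝ) + ‖z‖^2) ^ (-5/2 : ℝ))) (fun z => by have := c0_pos; positivity)
    (by rw [integral_const_mul]; exact inv_mul_cancel₀ c0_pos.ne') ?_ hg hc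
  · have h2 := this.const_mul c0
    refine h2.congr' ?_
    filter_upwards [eventually_gt_atTop 0] with c hc
    rw [← integral_const_mul]
    congr 1; funext z
    have hcc : (1 + ‖c • z‖^2) = c^2 * (‖z‖^2 + (c^2)⁻¹) := by
      rw [norm_smul, mul_pow, Real.norm_eq_abs, sq_abs]; field_simp; ring
    have h3 : (c^2 : ℝ) ^ (-5/2 : ℝ) = (c^5)⁻¹ := by
      rw [← Real.rpow_natCast, ← Real.rpow_mul hc.le, ← Real.rpow_natCast, ← Real.rpow_neg hc.le]; norm_num
    rw [hcc, Real.mul_rpow (by positivity) (by positivity), h3]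
    have := c0_pos
    simp only [finrank_euclideanSpace, Fintype.card_fin, smul_eq_mul]
    rw [show (-(5/2) : ℝ) = -5/2 by norm_num]
    field_simp
  · have hb : ∀ z : E3, ‖z‖ ^ Module.finrank ℝ E3 * (c0⁻¹ * (3 * ((1:ℝ) + ‖z‖^2) ^ (-5/2 : ℝ))) ≤ c0⁻¹ * 3 * (1 + ‖z‖)⁻¹ * 8:= by
      intro z
      have hcp := c0_pos
      set r := ‖z‖ with hr
      have hr0 : 0 ≤ r := norm_nonneg z
      simp only [finrank_euclideanSpace, Fintype.card_fin]
      suffices r^3 * (1 + r^2) ^ (-5/2:ℝ) ≤ (1+r)⁻¹ * 8 by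
        have h' : 0 ≤ c0⁻¹ * 3 := by positivity
        nlinarith [mul_le_mul_of_nonneg_left this h']
      have e1 : r^3 ≤ (1+r^2)^(3/2:ℝ) := by
        calc r^3 = (r^2)^(3/2:ℝ) := by
              rw [← Real.rpow_natCast r 2, ← Real.rpow_mul hr0, ← Real.rpow_natCast]; norm_num
          _ ≤ _ := Real.rpow_le_rpow (by positivity) (by linarith) (by norm_num)
      calc r^3 * (1 + r^2) ^ (-5/2:ℝ) ≤ (1+r^2)^(3/2:ℝ) * (1 + r^2) ^ (-5/2:ℝ) := by gcongr
        _ = (1+r^2)⁻¹ := by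
          rw [← Real.rpow_add (by positivity)]; norm_num; rw [Real.rpow_neg_one]
        _ ≤ _ := by
          rw [inv_mul_eq_div, inv_le_comm₀ (by positivity) (by positivity), inv_div]
          rw [div_le_iff₀ (by norm_num)]; nlinarith [sq_nonneg (r-1)]
    have hz : Tendsto (fun z : E3 => c0⁻¹ * 3 * (1 + ‖z‖)⁻¹ * 8) (Bornology.cobounded E3) (nhds 0) := by
      have h1 : Tendsto (fun z : E3 => (1 + ‖z‖)⁻¹) (Bornology.cobounded E3) (nhds 0) :=
        tendsto_inv_atTop_zero.comp (tendsto_atTop_add_const_left _ _ tendsto_norm_cobounded_atTop)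
      simpa using (h1.const_mul (c0⁻¹ * 3)).mul_const 8
    refine squeeze_zero (fun z => ?_) hb hz
    have := c0_pos
    positivity


theorem rep_of_weak {u f : E3 → ℝ} (hu : LB u) (huc : ContinuousOn u Om) (hf : LB f) (hw : WeakSol u f)
    {x : E3} {ρ : ℝ} (hρ : 0 < ρ) (hball : closedBall x ρ ⊆ Om) :
    c0 * u x = (∫ z, SS ρ 0 z * u (x - z)) - ∫ z, GG ρ 0 z * f (x - z) := by
  obtain ⟨Mu, hMu⟩ := hu.2 _ (isCompact_closedBall x ρ) hball
  obtain ⟨Mf, hMf⟩ := hf.2 _ (isCompact_closedBall x ρ) hball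
  obtain ⟨C, hC⟩ := SS_bd hρ
  have hmem : ∀ z ∈ closedBall (0:E3) ρ, x - z ∈ closedBall x ρ := by
    intro z hz; simpa [dist_eq_norm] using hz
  have hum : Measurable fun z => u (x - z) := hu.1.comp (by fun_prop)
  have hfm : Measurable fun z => f (x - z) := hf.1.comp (by fun_prop)
  set e : ℝ → ℝ := fun c => (c^2)⁻¹ with he
  have helim : Tendsto e atTop (nhds 0) := tendsto_inv_atTop_zero.comp (tendsto_pow_atTop (by norm_num))
  have l1 : Tendsto (fun c => ∫ z, SS ρ (e c) z * u (x - z)) atTop (nhds (∫ z, SS ρ 0 z * u (x - z))) :=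
    dom_tendsto (b := bnd ρ C (-2)) (M := Mu) (bnd_int (by norm_num))
      (Eventually.of_forall fun c => (SS_meas _ _).aestronglyMeasurable)
      (Eventually.of_forall fun c z hz => hC _ (by positivity) z hz) (fun z hz => SS_lim ρ hz helim) hum
      (fun z hz => hMu _ (hmem z (bnd_ne hz)))
  have l2 : Tendsto (fun c => ∫ z, GG ρ (e c) z * f (x - z)) atTop (nhds (∫ z, GG ρ 0 z * f (x - z))) :=
    dom_tendsto (b := bnd ρ 1 (-1)) (M := Mf) (bnd_int (by norm_num))
      (Eventually.of_forall fun c => (GG_meas _ _).aestronglyMeasurable)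
      (Eventually.of_forall fun c z hz => GG_bd hρ (by positivity) hz) (fun z hz => GG_lim ρ hz helim) hfm
      (fun z hz => hMf _ (hmem z (bnd_ne hz)))
  have hgi : Integrable (fun z => eta ρ z * u (x - z)) :=
    dom_int (b := bnd ρ 1 0) (M := Mu) (bnd_int (by norm_num)) (eta_smooth ρ).continuous.aestronglyMeasurable
      (fun z hz => by
        by_cases h : z ∈ closedBall (0:E3) ρ
        · rw [bnd, indicator_of_mem h]; simpa using eta_le ρ z
        · rw [bnd, indicator_of_notMem h, eta_zero hρ (by simp at h; exact h.le)]; simp) hum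
      (fun z hz => hMu _ (hmem z (bnd_ne hz)))
  have hx : x ∈ Om := hball (mem_closedBall_self hρ.le)
  have l3 := peak_lim hgi (by
    refine (eta_smooth ρ).continuous.continuousAt.mul ?_
    have : ContinuousAt u (x - 0) := by simpa using huc.continuousAt (isOpen_Om.mem_nhds hx)
    exact ContinuousAt.comp (f := fun z => x - z) this (by fun_prop))
  have e0 : eta ρ (0:E3) = 1 := eta_one hρ (by simp; positivity)
  simp only [e0, sub_zero, one_mul] at l3
  refine tendsto_nhds_unique l3 ((l1.sub l2).congr' ?_)
  filter_upwards [eventually_gt_atTop 0] with c hc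
  have hec : 0 < e c := by positivity
  have hts : tsupport (GG ρ (e c)) ⊆ closedBall 0 ρ := by
    apply closure_minimal _ isClosed_closedBall
    intro z hz
    by_contra h
    exact hz (GG_zero hρ _ (by simpa using h))
  have hsupp : Function.support (fun y => GG ρ (e c) (x - y)) ⊆ closedBall x ρ := by
    intro y hy
    have := hts (subset_tsupport _ hy)
    simpa [dist_eq_norm, norm_sub_rev] using this
  have key := hw (fun y => GG ρ (e c) (x - y)) ((GG_smooth ρ (n := 2) hec).comp (contDiff_const.sub contDiff_id))
    (HasCompactSupport.of_support_subset_isCompact (isCompact_closedBall x ρ) hsupp)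
    ((closure_minimal hsupp isClosed_closedBall).trans hball)
  simp only [lap_comp_sub] at key
  rw [← integral_sub_left_eq_self _ volume x, ← integral_sub_left_eq_self (fun y => f y * _) volume x] at key
  simp only [sub_sub_cancel, lap_GG ρ hec] at key
  have i1 : Integrable (fun z => SS ρ (e c) z * u (x - z)) :=
    dom_int (b := bnd ρ C (-2)) (M := Mu) (bnd_int (by norm_num))
      (SS_meas _ _).aestronglyMeasurable
      (fun z hz => hC _ (by positivity) z hz) hum
      (fun z hz => hMu _ (hmem z (bnd_ne hz)))
  have i2 : Integrable (fun z => 3 * e c * (‖z‖^2 + e c) ^ (-(5/2) : ℝ) * (eta ρ z * u (x - z))) := by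
    refine hgi.bdd_mul (c := 3 * e c * (e c) ^ (-(5/2) : ℝ)) (Measurable.aestronglyMeasurable (by fun_prop)) (Eventually.of_forall fun z => ?_)
    rw [Real.norm_of_nonneg (by positivity)]
    gcongr ?_ * ?_
    exact Real.rpow_le_rpow_of_nonpos hec (by nlinarith [sq_nonneg ‖z‖]) (by norm_num)
  have h4 : ∫ z, u (x - z) * (SS ρ (e c) z - 3 * e c * (‖z‖^2 + e c) ^ (-(5/2) : ℝ) * eta ρ z) =
      (∫ z, SS ρ (e c) z * u (x - z)) - ∫ z, 3 * e c * (‖z‖^2 + e c) ^ (-(5/2) : ℝ) * (eta ρ z * u (x - z)) := by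
    rw [← integral_sub i1 i2]; congr 1; funext z; ring
  rw [h4] at key
  have h5 : ∫ z, f (x - z) * GG ρ (e c) z = ∫ z, GG ρ (e c) z * f (x - z) := by
    congr 1; funext z; ring
  rw [h5] at key
  linarith

def cv (k h : E3 → ℝ) (x : E3) : ℝ := ∫ z, k z * h (x - z)

theorem cv_eq (k h : E3 → ℝ) : cv k h = MeasureTheory.convolution k h (ContinuousLinearMap.mul ℝ ℝ) volume := rfl

theorem cv_comm (k h : E3 → ℝ) (x : E3) : cv k h x = cv h k x := by
  unfold cv
  rw [← integral_sub_left_eq_self _ volume x]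
  simp only [sub_sub_cancel]; congr 1; funext z; ring

theorem cv_fderiv_right {k h : E3 → ℝ} (hk : LocallyIntegrable k) (hh : ContDiff ℝ 1 h) (hc : HasCompactSupport h) (x : E3) :
    ∃ L : E3 →L[ℝ] ℝ, HasFDerivAt (cv k h) L x ∧ ∀ i, L (ee i) = cv k (pd i h) x := by
  refine ⟨_, hc.hasFDerivAt_convolution_right (ContinuousLinearMap.mul ℝ ℝ) (μ := volume) hk hh x, fun i => ?_⟩
  rw [convolution_precompR_apply _ hk (hc.fderiv (𝕜 := ℝ)) (hh.continuous_fderiv (by norm_num))]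
  rfl

theorem cv_smooth {k h : E3 → ℝ} {n : ℕ∞} (hk : ContDiff ℝ n k) (hc : HasCompactSupport k) (hh : LocallyIntegrable h) :
    ContDiff ℝ n (cv k h) := by
  rw [cv_eq]; exact hc.contDiff_convolution_left _ hk hh

def DG (ρ e : ℝ) (i : Fin 3) (z : E3) : ℝ := pd i (eta ρ) z * Nn e z + eta ρ z * ND e i z

theorem pd_GG (ρ : ℝ) {e : ℝ} (he : 0 < e) (i : Fin 3) : pd i (GG ρ e) = DG ρ e i := by
  funext z
  have h : 0 < ‖z‖^2 + e := by positivity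
  have := pd_mul (u := eta ρ) (v := Nn e) (x := z) ((eta_smooth2 ρ).contDiffAt.differentiableAt (by norm_num)) ((Nn_smooth (n := 1) h).differentiableAt (by norm_num)) i
  unfold GG; rw [this, DG, pd_Nn h]

theorem DG_bd {ρ : ℝ} (hρ : 0 < ρ) (i : Fin 3) : ∃ C, ∀ e ≥ 0, ∀ z : E3, z ≠ 0 → |DG ρ e i z| ≤ bnd ρ C (-2) z := by
  obtain ⟨D, hD0, hD⟩ := bdd_of_cs (pd_smooth (eta_smooth ρ) i).continuous (pd_cs (eta_cs hρ) i)
  refine ⟨D * ρ + 1, fun e he z hz => ?_⟩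
  by_cases h : z ∈ closedBall (0:E3) ρ
  · rw [bnd, indicator_of_mem h, DG, add_mul]
    have hz' : 0 < ‖z‖ := norm_pos_iff.2 hz
    have hzρ : ‖z‖ ≤ ρ := by simpa using h
    refine (abs_add_le _ _).trans (add_le_add ?_ ?_)
    · rw [abs_mul, mul_assoc]
      refine mul_le_mul (hD z) ((Nn_bd he hz).trans ?_) (abs_nonneg _) hD0
      have : ‖z‖ ^ (-1 : ℝ) = ‖z‖ * ‖z‖ ^ (-2 : ℝ) := by
        rw [← Real.rpow_one_add' hz'.le (by norm_num)]; norm_num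
      rw [this]; gcongr
    · rw [abs_mul]
      exact mul_le_mul (eta_le ρ z) (ND_bd he hz i) (abs_nonneg _) zero_le_one
  · rw [bnd, indicator_of_notMem h]
    have h' : ρ < ‖z‖ := by simpa using h
    rw [DG, pd_eta_zero' hρ h', eta_zero hρ h'.le]; simp

theorem DG_meas (ρ e : ℝ) (i : Fin 3) : Measurable (DG ρ e i) := 
  ((pd_smooth (eta_smooth ρ) i).continuous.measurable.mul (Nn_meas e)).add ((eta_smooth ρ).continuous.measurable.mul (ND_meas e i))

theorem DG_lim (ρ : ℝ) (i : Fin 3) {z : E3} (hz : z ≠ 0) {ι : Type*} {l : Filter ι} {e : ι → ℝ} (he : Tendsto e l (nhds 0)) :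
    Tendsto (fun n => DG ρ (e n) i z) l (nhds (DG ρ 0 i z)) := 
  ((rpow_lim hz _ he).const_mul _).add (((rpow_lim hz _ he).const_mul _).const_mul _)

def lin (a : Fin 3 → ℝ) : E3 →L[ℝ] ℝ := ∑ i, a i • EuclideanSpace.proj i

theorem lin_eq (L : E3 →L[ℝ] ℝ) : L = lin (fun i => L (ee i)) := by
  ext v
  have h : v = ∑ i, v i • ee i := by
    ext j; simp [ee, Finset.sum_apply, Pi.single_apply]
  conv_lhs => rw [h]
  simp [lin, mul_comm]

theorem lin_sub_norm (a b : Fin 3 → ℝ) : ‖lin a - lin b‖ ≤ ∑ i, |a i - b i| := by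
  refine ContinuousLinearMap.opNorm_le_bound _ (by positivity) fun v => ?_
  have : (lin a - lin b) v = ∑ i, (a i - b i) * v i := by
    simp [lin, sub_mul]
  rw [this, Finset.sum_mul]
  refine (norm_sum_le _ _).trans (Finset.sum_le_sum fun i _ => ?_)
  rw [norm_mul]
  exact mul_le_mul_of_nonneg_left (PiLp.norm_apply_le v i) (norm_nonneg _)

theorem GG_cs {ρ : ℝ} (hρ : 0 < ρ) (e : ℝ) : HasCompactSupport (GG ρ e) := (eta_cs hρ).mul_right
theorem SS_cs {ρ : ℝ} (hρ : 0 < ρ) (e : ℝ) : HasCompactSupport (SS ρ e) := by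
  refine HasCompactSupport.of_support_subset_isCompact (isCompact_closedBall 0 ρ) fun z hz => ?_
  by_contra h
  exact hz (SS_zero hρ _ (by simpa using h))

theorem GG0_int {ρ : ℝ} (hρ : 0 < ρ) : Integrable (GG ρ 0) := by
  have := dom_int (b := bnd ρ 1 (-1)) (w := fun _ => 1) (M := 1) (bnd_int (by norm_num)) (GG_meas ρ 0).aestronglyMeasurable
    (fun z hz => GG_bd hρ le_rfl hz) measurable_const (by simp)
  simpa using this

theorem DG_int {ρ : ℝ} (hρ : 0 < ρ) {e : ℝ} (he : 0 ≤ e) (i : Fin 3) : Integrable (DG ρ e i) := by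
  obtain ⟨C, hC⟩ := DG_bd hρ i
  have := dom_int (b := bnd ρ C (-2)) (w := fun _ => 1) (M := 1) (bnd_int (by norm_num)) (DG_meas ρ e i).aestronglyMeasurable
    (fun z hz => hC e he z hz) measurable_const (by simp)
  simpa using this

theorem locint_bdd {h : E3 → ℝ} {M : ℝ} (hm : Measurable h) (hM : ∀ x, |h x| ≤ M) : LocallyIntegrable h := by
  intro x
  refine ⟨ball x 1, ball_mem_nhds x one_pos, ?_⟩
  refine Measure.integrableOn_of_bounded (M := M) measure_ball_lt_top.ne hm.aestronglyMeasurable (Eventually.of_forall hM)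

theorem gain0 {ρ : ℝ} (hρ : 0 < ρ) {h : E3 → ℝ} {M : ℝ} (hm : Measurable h) (hM : ∀ x, |h x| ≤ M) :
    ContDiff ℝ 1 (cv (GG ρ 0) h) := by
  have hM0 : 0 ≤ M := (abs_nonneg _).trans (hM 0)
  set e : ℕ → ℝ := fun n => 1 / ((n:ℝ) + 1) with hedef
  have he : Tendsto e atTop (nhds 0) := tendsto_one_div_add_atTop_nhds_zero_nat
  have hep : ∀ n, 0 < e n := fun n => by positivity
  have hhm : ∀ x, Measurable fun z => h (x - z) := fun x => hm.comp (by fun_prop)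
  have hT : ∀ n, ContDiff ℝ 1 (cv (GG ρ (e n)) h) := fun n =>
    cv_smooth (n := 1) (GG_smooth ρ (hep n)) (GG_cs hρ _) (locint_bdd hm hM)
  have hD : ∀ n x, HasFDerivAt (cv (GG ρ (e n)) h) (lin fun i => cv (DG ρ (e n) i) h x) x := by
    intro n x
    obtain ⟨L, hL, hLi⟩ := cv_fderiv_right (k := h) (h := GG ρ (e n)) (locint_bdd hm hM) (GG_smooth ρ (n := 1) (hep n)) (GG_cs hρ _) x
    have h1 : cv h (GG ρ (e n)) = cv (GG ρ (e n)) h := by funext y; exact cv_comm _ _ _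
    rw [h1] at hL
    rw [lin_eq L] at hL
    convert hL using 3 with i
    rw [hLi, pd_GG ρ (hep n), cv_comm]
  set g' : E3 → E3 →L[ℝ] ℝ := fun x => lin fun i => cv (DG ρ 0 i) h x with hg'
  have hs : ∀ i, Tendsto (fun n => ∫ z, |DG ρ (e n) i z - DG ρ 0 i z|) atTop (nhds 0) := by
    intro i
    obtain ⟨C, hC⟩ := DG_bd hρ i
    have := dom_tendsto (l := atTop) (k := fun n z => |DG ρ (e n) i z - DG ρ 0 i z|) (k0 := fun _ => 0) (b := fun z => bnd ρ C (-2) z + bnd ρ C (-2) z) (w := fun _ => 1) (M := 1)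
      ((bnd_int (by norm_num)).add (bnd_int (by norm_num)))
      (Eventually.of_forall fun n => ((DG_meas ρ (e n) i).sub (DG_meas ρ 0 i)).norm.aestronglyMeasurable)
      (Eventually.of_forall fun n z hz => by
        rw [abs_abs]
        exact (abs_sub _ _).trans (add_le_add (hC _ (hep n).le z hz) (hC _ le_rfl z hz)))
      (fun z hz => by
        have := ((DG_lim ρ i hz he).sub_const (DG ρ 0 i z)).abs
        simpa using this) measurable_const (by simp)
    simpa using this
  have hunif : TendstoUniformly (fun n x => lin fun i => cv (DG ρ (e n) i) h x) g' atTop := by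
    rw [Metric.tendstoUniformly_iff]
    intro ε hε
    have hsum : Tendsto (fun n => ∑ i, M * ∫ z, |DG ρ (e n) i z - DG ρ 0 i z|) atTop (nhds 0) := by
      have := tendsto_finsetSum (Finset.univ : Finset (Fin 3)) fun i _ => (hs i).const_mul M
      simpa using this
    filter_upwards [hsum.eventually (gt_mem_nhds hε)] with n hn x
    rw [dist_comm, dist_eq_norm]
    refine (lin_sub_norm _ _).trans_lt (lt_of_le_of_lt (Finset.sum_le_sum fun i _ => ?_) hn)
    have hi : ∀ e ≥ 0, Integrable (fun z => DG ρ e i z * h (x - z)) := fun e he =>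
      (DG_int hρ he i).mul_bdd (c := M) (hhm x).aestronglyMeasurable (Eventually.of_forall fun z => hM _)
    unfold cv
    rw [← integral_sub (hi _ (hep n).le) (hi _ le_rfl), ← integral_const_mul]
    refine (abs_integral_le_integral_abs).trans (integral_mono_of_nonneg (Eventually.of_forall fun z => abs_nonneg _)
      ((((DG_int hρ (hep n).le i).sub (DG_int hρ le_rfl i)).abs).const_mul M) (Eventually.of_forall fun z => ?_))
    simp only [← sub_mul, abs_mul]
    rw [mul_comm]; exact mul_le_mul_of_nonneg_right (hM _) (abs_nonneg _)
  have hlim : ∀ x, Tendsto (fun n => cv (GG ρ (e n)) h x) atTop (nhds (cv (GG ρ 0) h x)) := fun x =>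
    dom_tendsto (b := bnd ρ 1 (-1)) (M := M) (bnd_int (by norm_num))
      (Eventually.of_forall fun c => (GG_meas _ _).aestronglyMeasurable)
      (Eventually.of_forall fun n z hz => GG_bd hρ (hep n).le hz) (fun z hz => GG_lim ρ hz he) (hhm x)
      (fun z hz => hM _)
  have hfin := hasFDerivAt_of_tendstoUniformly hunif hD hlim
  rw [contDiff_one_iff_fderiv]
  refine ⟨fun x => (hfin x).differentiableAt, ?_⟩
  have : fderiv ℝ (cv (GG ρ 0) h) = g' := by funext x; exact (hfin x).fderiv
  rw [this]
  refine hunif.continuous (Frequently.of_forall fun n => ?_)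
  have h2 : (fun x => lin fun i => cv (DG ρ (e n) i) h x) = fderiv ℝ (cv (GG ρ (e n)) h) := by
    funext x; exact (hD n x).fderiv.symm
  rw [h2]; exact (hT n).continuous_fderiv (by norm_num)

theorem contDiff_succ_of_pd {n : ℕ} {g : E3 → ℝ} (h1 : Differentiable ℝ g) (h : ∀ i, ContDiff ℝ n (pd i g)) :
    ContDiff ℝ (n+1 : ℕ) g := by
  rw [show ((n+1 : ℕ) : WithTop ℕ∞) = (n : WithTop ℕ∞) + 1 by push_cast; rfl, contDiff_succ_iff_fderiv]
  refine ⟨h1, by simp, ?_⟩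
  have : fderiv ℝ g = fun x => ∑ i, pd i g x • (EuclideanSpace.proj i : E3 →L[ℝ] ℝ) := by
    funext x; exact lin_eq _
  rw [this]
  exact ContDiff.sum fun i _ => (h i).smul contDiff_const

theorem gain {ρ : ℝ} (hρ : 0 < ρ) (n : ℕ) : ∀ {h : E3 → ℝ}, ContDiff ℝ n h → HasCompactSupport h → 
    ContDiff ℝ (n+1 : ℕ) (cv (GG ρ 0) h) := by
  induction n with
  | zero =>
    intro h hh hc
    have hcont : Continuous h := hh.continuous
    obtain ⟨M, _, hM⟩ := bdd_of_cs hcont hc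
    exact_mod_cast gain0 hρ hcont.measurable hM
  | succ n ih =>
    intro h hh hc
    have h1 : ContDiff ℝ 1 h := hh.of_le (by exact_mod_cast Nat.le_add_left 1 n)
    have hd := cv_fderiv_right (k := GG ρ 0) (GG0_int hρ).locallyIntegrable h1 hc
    refine contDiff_succ_of_pd (fun x => ?_) fun i => ?_
    · obtain ⟨L, hL, _⟩ := hd x
      exact hL.differentiableAt
    · have : pd i (cv (GG ρ 0) h) = cv (GG ρ 0) (pd i h) := by
        funext x
        obtain ⟨L, hL, hLi⟩ := hd x
        rw [pd, hL.fderiv, hLi]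
      rw [this]
      refine ih ?_ (pd_cs hc i)
      rw [contDiff_iff_contDiffAt] at *
      intro x
      exact pd_contDiffAt (hh x) (by push_cast; rfl) i

def RepF (u f : E3 → ℝ) : Prop := ∀ (x : E3) (ρ : ℝ), 0 < ρ → closedBall x ρ ⊆ Om →
    c0 * u x = (∫ z, SS ρ 0 z * u (x - z)) - ∫ z, GG ρ 0 z * f (x - z)

/-- local structure of the representation -/
theorem rep_local {u f : E3 → ℝ} (hr : RepF u f) {x0 : E3} (hx0 : x0 ∈ Om) :
    ∃ ρ > 0, ∃ χ : E3 → ℝ, ContDiff ℝ (⊤ : ℕ∞) χ ∧ HasCompactSupport χ ∧ tsupport χ ⊆ Om ∧ (∀ x, |χ x| ≤ 1) ∧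
      ∀ᶠ x in nhds x0, u x = c0⁻¹ * (cv (SS ρ 0) (fun y => χ y * u y) x - cv (GG ρ 0) (fun y => χ y * f y) x) := by
  have hx : 0 < ‖x0‖ := norm_pos_iff.2 hx0
  set ρ := ‖x0‖ / 8 with hρd
  have hρ : 0 < ρ := by positivity
  have hts : tsupport (fun y => eta (4*ρ) (y - x0)) ⊆ closedBall x0 (4*ρ) := by
    apply closure_minimal _ isClosed_closedBall
    intro y hy
    by_contra h
    have h' : 4 * ρ < ‖y - x0‖ := by simpa [dist_eq_norm] using h
    exact hy (eta_zero (by positivity) h'.le)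
  have hsub : closedBall x0 (4*ρ) ⊆ Om := by
    intro y hy h0
    rw [h0, mem_closedBall, dist_zero_left] at hy
    linarith
  refine ⟨ρ, hρ, fun y => eta (4*ρ) (y - x0), (eta_smooth _).comp (contDiff_id.sub contDiff_const),
    HasCompactSupport.of_support_subset_isCompact (isCompact_closedBall x0 (4*ρ)) ((subset_tsupport _).trans hts),
    hts.trans hsub, fun x => eta_le _ _, ?_⟩
  filter_upwards [ball_mem_nhds x0 hρ] with x hxb
  have hin : ∀ z, ‖z‖ ≤ ρ → ‖x - z - x0‖ ≤ 4 * ρ / 2 := by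
    intro z hz
    rw [mem_ball, dist_eq_norm] at hxb
    calc ‖x - z - x0‖ = ‖(x - x0) - z‖ := by congr 1; abel
      _ ≤ ‖x - x0‖ + ‖z‖ := norm_sub_le _ _
      _ ≤ _ := by linarith
  have := hr x ρ hρ (by
    intro y hy
    apply hsub
    rw [mem_closedBall, dist_eq_norm] at *
    have := hin (x - y) (by rwa [norm_sub_rev])
    rw [sub_sub_cancel] at this
    linarith)
  rw [eq_inv_mul_iff_mul_eq₀ c0_pos.ne', this]
  unfold cv
  congr 1
  · congr 1; funext z
    by_cases hz : ‖z‖ ≤ ρ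
    · simp only [eta_one (ρ := 4*ρ) (by positivity) (hin z hz), one_mul]
    · rw [SS_zero hρ 0 (not_le.1 hz)]; simp
  · congr 1; funext z
    by_cases hz : ‖z‖ ≤ ρ
    · simp only [eta_one (ρ := 4*ρ) (by positivity) (hin z hz), one_mul]
    · rw [GG_zero hρ 0 (not_le.1 hz)]; simp

theorem cut_bdd {χ h : E3 → ℝ} (hc : HasCompactSupport χ) (hcc : Continuous χ) (hs : tsupport χ ⊆ Om) (h1 : ∀ x, |χ x| ≤ 1) (hh : LB h) :
    ∃ M, Measurable (fun y => χ y * h y) ∧ ∀ x, |χ x * h x| ≤ M := by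
  obtain ⟨M, hM⟩ := hh.2 _ hc hs
  refine ⟨|M|, hcc.measurable.mul hh.1, fun x => ?_⟩
  by_cases hx : x ∈ tsupport χ
  · rw [abs_mul]
    calc |χ x| * |h x| ≤ 1 * |M| := mul_le_mul (h1 x) ((hM x hx).trans (le_abs_self _)) (abs_nonneg _) zero_le_one
      _ = _ := one_mul _
  · rw [image_eq_zero_of_notMem_tsupport hx]; simp

theorem reg0 {u f : E3 → ℝ} (hr : RepF u f) (hu : LB u) (hf : LB f) : ∀ x ∈ Om, ContDiffAt ℝ 1 u x := by
  intro x0 hx0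
  obtain ⟨ρ, hρ, χ, hχ, hχc, hχs, hχ1, hev⟩ := rep_local hr hx0
  obtain ⟨M1, m1, b1⟩ := cut_bdd hχc hχ.continuous hχs hχ1 hu
  obtain ⟨M2, m2, b2⟩ := cut_bdd hχc hχ.continuous hχs hχ1 hf
  have h1 := cv_smooth (n := 1) ((SS_smooth hρ le_rfl).of_le (nat_le_inf 1)) (SS_cs hρ 0) (locint_bdd m1 b1)
  have h2 := gain0 hρ m2 b2
  exact ((contDiff_const.mul (h1.sub h2)).contDiffAt).congr_of_eventuallyEq hev

theorem reg_step {u f : E3 → ℝ} (hr : RepF u f) (hu : LB u) {n : ℕ} (hf : ∀ x ∈ Om, ContDiffAt ℝ n f x) :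
    ∀ x ∈ Om, ContDiffAt ℝ (n+1 : ℕ) u x := by
  intro x0 hx0
  obtain ⟨ρ, hρ, χ, hχ, hχc, hχs, hχ1, hev⟩ := rep_local hr hx0
  obtain ⟨M1, m1, b1⟩ := cut_bdd hχc hχ.continuous hχs hχ1 hu
  have h1 := cv_smooth (n := (n+1 : ℕ)) ((SS_smooth hρ le_rfl).of_le (nat_le_inf (n+1))) (SS_cs hρ 0) (locint_bdd m1 b1)
  have hfc : ContDiff ℝ n (fun y => χ y * f y) := by
    rw [contDiff_iff_contDiffAt]; intro x
    by_cases hx : x ∈ tsupport χ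
    · exact (hχ.of_le (nat_le_inf n)).contDiffAt.mul (hf x (hχs hx))
    · have : (fun y => χ y * f y) =ᶠ[nhds x] fun _ => 0 := by
        filter_upwards [(isClosed_tsupport χ).isOpen_compl.mem_nhds hx] with y hy
        rw [image_eq_zero_of_notMem_tsupport hy]; simp
      exact contDiffAt_const.congr_of_eventuallyEq this
  have h2 := gain hρ n hfc hχc.mul_right
  exact ((contDiff_const.mul (ContDiff.sub h1 h2)).contDiffAt).congr_of_eventuallyEq hev

def QQ (A J : ℝ) (P : E3) (x : E3) : ℝ :=
  6 * (A + ⟪P, x⟫)^2 + 9/2 * ((2 * J * x 0 / ‖x‖ + P 1 * ‖x‖)^2 + (2 * J * x 1 / ‖x‖ - P 0 * ‖x‖)^2)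
    + 9/2 * (P 2)^2 * ‖x‖^2 + 3 * ⟪P, x⟫^2

theorem nsq3 (P : E3) : ‖P‖^2 = P 0^2 + P 1^2 + P 2^2 := by
  rw [EuclideanSpace.norm_sq_eq]; simp [Fin.sum_univ_three]

theorem Ksq_eq (A J : ℝ) (P : E3) {x : E3} (hx : x ≠ 0) : Ksq A J P x = QQ A J P x / ‖x‖^6 := by
  have hr : 0 < ‖x‖ := norm_pos_iff.2 hx
  have h1 := nsq3 P
  unfold Ksq QQ
  rw [inner_smul_right, h1]
  set r := ‖x‖
  set q := ⟪P, x⟫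
  field_simp
  ring

theorem QQ_nonneg (A J : ℝ) (P x : E3) : 0 ≤ QQ A J P x := by unfold QQ; positivity

theorem Ksq_nonneg (A J : ℝ) (P : E3) {x : E3} (hx : x ≠ 0) : 0 ≤ Ksq A J P x := by
  rw [Ksq_eq A J P hx]; exact div_nonneg (QQ_nonneg _ _ _ _) (by positivity)

def kk (A J : ℝ) (P : E3) : ℝ := 12 * A^2 + 36 * J^2 + 30 * ‖P‖^2

theorem coord_le (x : E3) (i : Fin 3) : |x i| ≤ ‖x‖ := by simpa using PiLp.norm_apply_le x i

theorem coord_sq (x : E3) (i : Fin 3) : (x i)^2 ≤ ‖x‖^2 := by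
  have := coord_le x i
  rw [← sq_abs (x i)]; gcongr

theorem QQ_le (A J : ℝ) (P : E3) {x : E3} (hx : x ≠ 0) : QQ A J P x ≤ kk A J P * (1 + ‖x‖^2) := by
  have hr : 0 < ‖x‖ := norm_pos_iff.2 hx
  have h1 := nsq3 P
  have h2 : ⟪P, x⟫^2 ≤ ‖P‖^2 * ‖x‖^2 := by
    rw [← mul_pow, ← sq_abs]; gcongr; exact abs_real_inner_le_norm P x
  have h3 : (x 0 / ‖x‖)^2 + (x 1 / ‖x‖)^2 ≤ 1 := by
    rw [div_pow, div_pow, ← add_div, div_le_one (by positivity), nsq3 x]; nlinarith [sq_nonneg (x 2)]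
  unfold QQ kk
  set r := ‖x‖
  set q := ⟪P, x⟫
  rw [show 2 * J * x 0 / r = 2 * J * (x 0 / r) by ring, show 2 * J * x 1 / r = 2 * J * (x 1 / r) by ring]
  set a := x 0 / r
  set b := x 1 / r
  have e1 : (A + q)^2 ≤ 2 * A^2 + 2 * q^2 := by nlinarith [sq_nonneg (A - q)]
  have e2 : (2 * J * a + P 1 * r)^2 ≤ 2 * (2 * J * a)^2 + 2 * (P 1 * r)^2 := by nlinarith [sq_nonneg (2 * J * a - P 1 * r)]
  have e3 : (2 * J * b - P 0 * r)^2 ≤ 2 * (2 * J * b)^2 + 2 * (P 0 * r)^2 := by nlinarith [sq_nonneg (2 * J * b + P 0 * r)]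
  have e4 : J^2 * (a^2+b^2) ≤ J^2 * 1 := by gcongr
  have f1 : 0 ≤ ‖P‖^2 * r^2 := by positivity
  have f2 : ‖P‖^2 * r^2 = P 0^2 * r^2 + P 1^2 * r^2 + P 2^2 * r^2 := by rw [h1]; ring
  have f3 : 0 ≤ P 0^2 * r^2 := by positivity
  have f4 : 0 ≤ P 1^2 * r^2 := by positivity
  have f5 : 0 ≤ P 2^2 * r^2 := by positivity
  have g1 : 0 ≤ A^2 * r^2 := by positivity
  have g2 : 0 ≤ J^2 * r^2 := by positivity
  have g3 : 0 ≤ ‖P‖^2 := by positivity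
  nlinarith

theorem kk_nonneg (A J : ℝ) (P : E3) : 0 ≤ kk A J P := by unfold kk; positivity

theorem exists_dir (A J : ℝ) (hA : 0 ≤ A) (hAJ : 0 < A ∨ J ≠ 0) (P : E3) :
    ∃ n : E3, ‖n‖ = 1 ∧ ∀ x : E3, x ≠ 0 → ⟪n, x⟫ ≠ 0 → 0 < Ksq A J P x := by
  have key : ∀ x : E3, x ≠ 0 → QQ A J P x ≠ 0 → 0 < Ksq A J P x := by
    intro x hx h
    have hr : 0 < ‖x‖ := norm_pos_iff.2 hx
    rw [Ksq_eq A J P hx]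
    exact div_pos (lt_of_le_of_ne (QQ_nonneg _ _ _ _) (Ne.symm h)) (by positivity)
  have hq : ∀ x : E3, QQ A J P x = 0 → ⟪P, x⟫ = 0 ∧ A + ⟪P, x⟫ = 0 := by
    intro x h
    unfold QQ at h
    have a1 : 0 ≤ 6 * (A + ⟪P, x⟫)^2 := by positivity
    have a2 : 0 ≤ 9/2 * ((2 * J * x 0 / ‖x‖ + P 1 * ‖x‖)^2 + (2 * J * x 1 / ‖x‖ - P 0 * ‖x‖)^2) := by positivity
    have a3 : 0 ≤ 9/2 * (P 2)^2 * ‖x‖^2 := by positivity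
    have a4 : 0 ≤ 3 * ⟪P, x⟫^2 := by positivity
    constructor
    · have : ⟪P, x⟫^2 = 0 := by linarith
      exact pow_eq_zero_iff (by norm_num) |>.1 this
    · have : (A + ⟪P, x⟫)^2 = 0 := by linarith
      exact pow_eq_zero_iff (by norm_num) |>.1 this
  by_cases hA0 : 0 < A
  · refine ⟨ee 0, by simp, fun x hx _ => key x hx fun h => ?_⟩
    have := hq x h
    linarith [this.1, this.2]
  · have hJ : J ≠ 0 := by tauto
    by_cases hP : P = 0
    · refine ⟨ee 0, by simp, fun x hx hn => key x hx fun h => hn ?_⟩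
      have hr : 0 < ‖x‖ := norm_pos_iff.2 hx
      subst hP
      have hA' : A = 0 := le_antisymm (not_lt.1 hA0) hA
      subst hA'
      simp [QQ] at h
      have b1 : (2 * J * x 0 / ‖x‖)^2 = 0 := by
        nlinarith [sq_nonneg (2 * J * x 0 / ‖x‖), sq_nonneg (2 * J * x 1 / ‖x‖)]
      have b2 := pow_eq_zero_iff (by norm_num) |>.1 b1
      rw [div_eq_zero_iff] at b2
      have : x 0 = 0 := by
        rcases b2 with b2 | b2
        · simpa [hJ] using b2
        · exact absurd b2 hr.ne'
      simp [ee, EuclideanSpace.inner_single_left, this]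
    · have hPn : 0 < ‖P‖ := norm_pos_iff.2 hP
      refine ⟨‖P‖⁻¹ • P, by rw [norm_smul]; simp [hPn.ne'], fun x hx hn => key x hx fun h => hn ?_⟩
      rw [inner_smul_left, (hq x h).1]; simp

theorem norm_cd {x : E3} (hx : x ≠ 0) (n : WithTop ℕ∞) : ContDiffAt ℝ n (fun y : E3 => ‖y‖) x := contDiffAt_norm ℝ hx

theorem coord_cd (x : E3) (i : Fin 3) (n : WithTop ℕ∞) : ContDiffAt ℝ n (fun y : E3 => y i) x :=
  (by fun_prop : ContDiff ℝ n (fun y : E3 => y i)).contDiffAt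

theorem QQ_cd (A J : ℝ) (P : E3) {x : E3} (hx : x ≠ 0) (n : WithTop ℕ∞) : ContDiffAt ℝ n (QQ A J P) x := by
  have hr : ‖x‖ ≠ 0 := norm_ne_zero_iff.2 hx
  have h1 := norm_cd hx n
  have h2 := fun i => coord_cd x i n
  have h3 : ContDiffAt ℝ n (fun y : E3 => ⟪P, y⟫) x := contDiffAt_const.inner ℝ contDiffAt_id
  have h4 : ∀ i, ContDiffAt ℝ n (fun y : E3 => 2 * J * y i / ‖y‖) x := fun i => (contDiffAt_const.mul (h2 i)).div h1 hr
  unfold QQ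
  refine (((contDiffAt_const.mul ((contDiffAt_const.add h3).pow 2)).add (contDiffAt_const.mul ?_)).add
    (contDiffAt_const.mul (h1.pow 2))).add (contDiffAt_const.mul (h3.pow 2))
  exact (((h4 0).add (contDiffAt_const.mul h1)).pow 2).add (((h4 1).sub (contDiffAt_const.mul h1)).pow 2)

theorem ev_ne0 {x : E3} (hx : x ≠ 0) : ∀ᶠ y in nhds x, y ≠ 0 := isOpen_Om.mem_nhds hx

theorem Ksq_cd (A J : ℝ) (P : E3) {x : E3} (hx : x ≠ 0) (n : WithTop ℕ∞) : ContDiffAt ℝ n (Ksq A J P) x := by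
  have hr : ‖x‖ ≠ 0 := norm_ne_zero_iff.2 hx
  have h : Ksq A J P =ᶠ[nhds x] fun y => QQ A J P y / ‖y‖^6 := by
    filter_upwards [ev_ne0 hx] with y hy using Ksq_eq A J P hy
  exact ((QQ_cd A J P hx n).div ((norm_cd hx n).pow 6) (by positivity)).congr_of_eventuallyEq h

theorem Fnl_cd (A J : ℝ) (P : E3) {σ : E3 → ℝ} (hσ : ContDiff ℝ (⊤ : ℕ∞) σ) {Φ : E3 → ℝ} {x : E3} (hx : x ≠ 0) {n : ℕ}
    (hΦ : ContDiffAt ℝ n Φ x) (hpos : 0 < Φ x) : ContDiffAt ℝ n (fun y => Fnl A J P σ y (Φ y)) x := by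
  have hr : 0 < ‖x‖ := norm_pos_iff.2 hx
  unfold Fnl
  refine ((Ksq_cd A J P hx n).neg.div (contDiffAt_const.mul (hΦ.pow 7)) (by positivity)).sub
    ((hσ.of_le (nat_le_inf n)).contDiffAt.div ((contDiffAt_const.mul ((norm_cd hx n).pow 4)).mul (hΦ.pow 3)) (by positivity))

theorem Fnl_neg (A J : ℝ) (P : E3) {σ : E3 → ℝ} (h0 : ∀ x, 0 ≤ σ x) {x : E3} (hx : x ≠ 0) {Φ : ℝ} (hΦ : 0 < Φ)
    (hK : 0 < Ksq A J P x) : Fnl A J P σ x Φ < 0 := by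
  have hr : 0 < ‖x‖ := norm_pos_iff.2 hx
  unfold Fnl
  have h1 : 0 < Ksq A J P x / (8 * Φ^7) := by positivity
  have h2 : 0 ≤ σ x / (4 * ‖x‖^4 * Φ^3) := div_nonneg (h0 x) (by positivity)
  rw [neg_div]; linarith

theorem Fnl_mono (A J : ℝ) (P : E3) {σ : E3 → ℝ} (h0 : ∀ x, 0 ≤ σ x) {x : E3} (hx : x ≠ 0) {a b : ℝ} (ha : 0 < a) (hab : a ≤ b) :
    Fnl A J P σ x a ≤ Fnl A J P σ x b := by
  have hr : 0 < ‖x‖ := norm_pos_iff.2 hx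
  have hK := Ksq_nonneg A J P hx
  have hs := h0 x
  unfold Fnl
  rw [neg_div, neg_div]
  have h1 : Ksq A J P x / (8 * b^7) ≤ Ksq A J P x / (8 * a^7) := by gcongr
  have h2 : σ x / (4 * ‖x‖^4 * b^3) ≤ σ x / (4 * ‖x‖^4 * a^3) := by gcongr
  linarith

theorem Fnl_nonpos (A J : ℝ) (P : E3) {σ : E3 → ℝ} (h0 : ∀ x, 0 ≤ σ x) {x : E3} (hx : x ≠ 0) {a : ℝ} (ha : 0 < a) :
    Fnl A J P σ x a ≤ 0 := by
  have hr : 0 < ‖x‖ := norm_pos_iff.2 hx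
  have hK := Ksq_nonneg A J P hx
  have hs := h0 x
  unfold Fnl
  rw [neg_div]
  have h1 : 0 ≤ Ksq A J P x / (8 * a^7) := by positivity
  have h2 : 0 ≤ σ x / (4 * ‖x‖^4 * a^3) := by positivity
  linarith

theorem Phi_cd {u : E3 → ℝ} (μ : ℝ) {x : E3} (hx : x ≠ 0) {n : WithTop ℕ∞} (hu : ContDiffAt ℝ n u x) :
    ContDiffAt ℝ n (fun y => 1 + μ / (2 * ‖y‖) + u y) x := by
  have hr : 0 < ‖x‖ := norm_pos_iff.2 hx
  exact (contDiffAt_const.add (contDiffAt_const.div (contDiffAt_const.mul (norm_cd hx n)) (by positivity))).add hu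

theorem Fnl_lb (A J : ℝ) (P : E3) {σ : E3 → ℝ} (hσ : ContDiff ℝ (⊤ : ℕ∞) σ) {Φ : E3 → ℝ} (hm : Measurable Φ)
    (hΦ : ∀ x, 1 ≤ Φ x) : LB (fun x => Fnl A J P σ x (Φ x)) := by
  constructor
  · have : Measurable (Ksq A J P) := by unfold Ksq; fun_prop
    have := hσ.continuous.measurable
    unfold Fnl; fun_prop
  · intro K hK hKO
    have hc : ContinuousOn (fun x => |Ksq A J P x| + |σ x| / ‖x‖^4) K := by
      intro x hx
      refine ContinuousAt.continuousWithinAt ?_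
      have hx0 : x ≠ 0 := hKO hx
      have hr : 0 < ‖x‖ := norm_pos_iff.2 hx0
      refine ((Ksq_cd A J P hx0 0).continuousAt.abs).add (hσ.continuous.continuousAt.abs.div (continuous_norm.continuousAt.pow 4) (by positivity))
    obtain ⟨M, hM⟩ := hK.exists_bound_of_continuousOn hc
    refine ⟨M, fun x hx => le_trans ?_ (hM x hx)⟩
    have hr : 0 < ‖x‖ := norm_pos_iff.2 (hKO hx)
    rw [Real.norm_of_nonneg (by positivity)]
    unfold Fnl
    have h7 : 1 ≤ Φ x ^ 7 := one_le_pow₀ (hΦ x)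
    have h3 : 1 ≤ Φ x ^ 3 := one_le_pow₀ (hΦ x)
    refine (abs_sub _ _).trans (add_le_add ?_ ?_)
    · rw [abs_div, abs_neg, abs_of_pos (a := 8 * Φ x ^ 7) (by positivity)]
      exact div_le_self (abs_nonneg _) (by linarith)
    · rw [abs_div, abs_of_pos (a := 4 * ‖x‖^4 * Φ x ^ 3) (by positivity)]
      gcongr
      nlinarith [pow_pos hr 4]

theorem lb_cont {u : E3 → ℝ} (h : Continuous u) : LB u := by
  refine ⟨h.measurable, fun K hK _ => ?_⟩
  obtain ⟨M, hM⟩ := hK.exists_bound_of_continuousOn h.continuousOn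
  exact ⟨M, hM⟩

section
variable {A J : ℝ} {P : E3} {σ : E3 → ℝ}

theorem sol_Phi {μ : ℝ} {u : E3 → ℝ} (hμ : 0 < μ) (hs : IsSolμ A J P σ μ u) (x : E3) : 1 ≤ 1 + μ / (2 * ‖x‖) + u x := by
  have := hs.1 x
  have : 0 ≤ μ / (2 * ‖x‖) := by positivity
  linarith

theorem sol_weak (hA : 0 ≤ A) (hAJ : 0 < A ∨ J ≠ 0) (hσ : ContDiff ℝ (⊤ : ℕ∞) σ) (h0 : ∀ x, 0 ≤ σ x)
    {μ : ℝ} {u : E3 → ℝ} (hμ : 0 < μ) (hs : IsSolμ A J P σ μ u) :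
    WeakSol u (fun x => Fnl A J P σ x (1 + μ / (2 * ‖x‖) + u x)) := by
  obtain ⟨n, hn, hdir⟩ := exists_dir A J hA hAJ P
  intro φ h1 h2 h3
  refine weak_form hn hs.2.1.contDiffOn ?_ ?_ h1 h2 h3
  · intro x hx
    refine ContinuousAt.continuousWithinAt ?_
    have hP := sol_Phi hμ hs x
    exact (Fnl_cd (n := 0) A J P hσ hx (Phi_cd μ hx (hs.2.1.of_le (by norm_num)).contDiffAt) (by linarith)).continuousAt
  · intro x hx hnx
    have hP := sol_Phi hμ hs x
    have hneg : Fnl A J P σ x (1 + μ / (2 * ‖x‖) + u x) < 0 := Fnl_neg A J P h0 hx (by linarith) (hdir x hx hnx)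
    have hl := hs.2.2.2 x hx
    refine ⟨?_, hl⟩
    by_contra hd
    rw [lap_eq, fderiv_zero_of_not_differentiableAt hd] at hl
    simp at hl
    linarith

theorem sol_rep (hA : 0 ≤ A) (hAJ : 0 < A ∨ J ≠ 0) (hσ : ContDiff ℝ (⊤ : ℕ∞) σ) (h0 : ∀ x, 0 ≤ σ x)
    {μ : ℝ} {u : E3 → ℝ} (hμ : 0 < μ) (hs : IsSolμ A J P σ μ u) :
    RepF u (fun x => Fnl A J P σ x (1 + μ / (2 * ‖x‖) + u x)) := by
  intro x ρ hρ hb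
  have hc := hs.2.1.continuous
  refine rep_of_weak (lb_cont hc) hc.continuousOn (Fnl_lb A J P hσ ?_ (sol_Phi hμ hs)) (sol_weak hA hAJ hσ h0 hμ hs) hρ hb
  have := hc.measurable
  fun_prop

theorem boot (hσ : ContDiff ℝ (⊤ : ℕ∞) σ) {μ : ℝ} {u : E3 → ℝ} (hP : ∀ x, 1 ≤ 1 + μ / (2 * ‖x‖) + u x) (hu : LB u)
    (hr : RepF u (fun x => Fnl A J P σ x (1 + μ / (2 * ‖x‖) + u x))) (n : ℕ) : ∀ x ∈ Om, ContDiffAt ℝ n u x := by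
  induction n with
  | zero =>
    have hm := hu.1
    have := reg0 hr hu (Fnl_lb A J P hσ (by fun_prop) hP)
    exact fun x hx => (this x hx).of_le (by norm_num)
  | succ n ih =>
    refine reg_step hr hu fun x hx => ?_
    exact Fnl_cd A J P hσ hx (Phi_cd μ hx (ih x hx)) (by have := hP x; linarith)

theorem sol_smooth (hA : 0 ≤ A) (hAJ : 0 < A ∨ J ≠ 0) (hσ : ContDiff ℝ (⊤ : ℕ∞) σ) (h0 : ∀ x, 0 ≤ σ x)
    {μ : ℝ} {u : E3 → ℝ} (hμ : 0 < μ) (hs : IsSolμ A J P σ μ u) (n : ℕ) : ∀ x ∈ Om, ContDiffAt ℝ n u x :=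
  boot hσ (sol_Phi hμ hs) (lb_cont hs.2.1.continuous) (sol_rep hA hAJ hσ h0 hμ hs) n
end

theorem pow_cd {x : E3} (hx : x ≠ 0) (a : ℝ) (n : WithTop ℕ∞) : ContDiffAt ℝ n (fun y : E3 => ‖y‖ ^ a) x :=
  (norm_cd hx n).rpow_const_of_ne (norm_ne_zero_iff.2 hx)

theorem pow_fun_eq (a : ℝ) : (fun y : E3 => ‖y‖ ^ a) = fun y => (‖y‖^2) ^ (a/2) := by
  funext y
  rw [← Real.rpow_natCast, ← Real.rpow_mul (norm_nonneg y)]; congr 1; push_cast; ring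

theorem sq_rpow (r a : ℝ) (hr : 0 ≤ r) : (r^2) ^ a = r ^ (2 * a) := by
  rw [← Real.rpow_natCast, ← Real.rpow_mul hr]; norm_num

theorem pd_pow {x : E3} (hx : x ≠ 0) (a : ℝ) (i : Fin 3) : pd i (fun y : E3 => ‖y‖ ^ a) x = a * x i * ‖x‖ ^ (a - 2) := by
  have hr : 0 < ‖x‖ := norm_pos_iff.2 hx
  rw [pow_fun_eq, pd_radial (g := fun t : ℝ => t ^ (a/2)) (Real.hasDerivAt_rpow_const (Or.inl (by positivity))), sq_rpow _ _ hr.le,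
    show 2 * (a/2 - 1) = a - 2 by ring]
  ring

theorem lap_pow {x : E3} (hx : x ≠ 0) (a : ℝ) : lap (fun y : E3 => ‖y‖ ^ a) x = a * (a + 1) * ‖x‖ ^ (a - 2) := by
  have hr : 0 < ‖x‖ := norm_pos_iff.2 hx
  have hr2 : 0 < ‖x‖^2 := by positivity
  rw [pow_fun_eq, lap_radial (g := fun t : ℝ => t ^ (a/2)) (g' := fun t => a/2 * t ^ (a/2 - 1))
    (g'' := a/2 * ((a/2 - 1) * (‖x‖^2) ^ (a/2 - 1 - 1))) ?_ ?_ ?_]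
  · have e1 : (‖x‖^2) ^ (a/2 - 1) = ‖x‖^2 * (‖x‖^2) ^ (a/2 - 1 - 1) := by
      rw [Real.rpow_sub_one hr2.ne' (a/2 - 1)]; field_simp
    have e2 : (‖x‖^2) ^ (a/2 - 1) = ‖x‖ ^ (a - 2) := by rw [sq_rpow _ _ hr.le]; congr 1; ring
    rw [← e2, e1]; ring
  · filter_upwards [lt_mem_nhds hr2] with t ht
    exact Real.hasDerivAt_rpow_const (Or.inl ht.ne')
  · exact (Real.hasDerivAt_rpow_const (Or.inl hr2.ne')).const_mul _
  · exact Real.contDiffAt_rpow_const_of_ne hr2.ne'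

theorem annulus_compact (a R : ℝ) (ha : 0 < a) : IsCompact {x : E3 | a ≤ ‖x‖ ∧ ‖x‖ ≤ R} := by
  have : {x : E3 | a ≤ ‖x‖ ∧ ‖x‖ ≤ R} = closedBall 0 R ∩ {x : E3 | a ≤ ‖x‖} := by
    ext x; simp [and_comm]
  rw [this]
  exact (isCompact_closedBall 0 R).inter_right (isClosed_le continuous_const continuous_norm)

theorem max_principle_Om {v : E3 → ℝ}
    (h0 : ∀ c > 0, ∃ a > 0, ∀ x : E3, x ≠ 0 → ‖x‖ < a → v x ≤ c)
    (hi : ∀ c > 0, ∃ R, ∀ x : E3, R < ‖x‖ → v x ≤ c)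
    (hv : ∀ x ∈ Om, ContDiffAt ℝ 2 v x) (hl : ∀ x ∈ Om, 0 < v x → 0 < lap v x) :
    ∀ x ∈ Om, v x ≤ 0 := by
  refine max_principle isOpen_Om (fun c hc => ?_) hv hl
  obtain ⟨a, ha, h1⟩ := h0 c hc
  obtain ⟨R, h2⟩ := hi c hc
  refine ⟨_, annulus_compact a R ha, fun x hx h => ?_, fun x hx hn => ?_⟩
  · rw [h] at hx; simp at hx; linarith
  · by_cases h : ‖x‖ < a
    · exact h1 x hx h
    · exact h2 x (by by_contra h'; exact hn ⟨not_lt.1 h, not_lt.1 h'⟩)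

section
variable {A J : ℝ} {P : E3} {σ : E3 → ℝ}

theorem sol_inf {μ : ℝ} {u : E3 → ℝ} (hs : IsSolμ A J P σ μ u) : ∀ c > 0, ∃ R, ∀ x : E3, R < ‖x‖ → u x ≤ c := by
  intro c hc
  have := hs.2.2.1.eventually (gt_mem_nhds hc)
  rw [Metric.cobounded_eq_cocompact.symm, (hasBasis_cobounded_compl_closedBall (0:E3)).eventually_iff] at this
  obtain ⟨R, -, hR⟩ := this
  exact ⟨R, fun x hx => (hR (by simpa using hx)).le⟩

theorem pow_big {b : ℝ} (hb : b < 0) {C : ℝ} (hC : 0 < C) (M : ℝ) : ∃ a > 0, ∀ r : ℝ, 0 < r → r < a → M ≤ C * r ^ b := by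
  have h := (tendsto_rpow_neg_nhdsGT_zero hb).const_mul_atTop hC
  have := h.eventually_ge_atTop M
  rw [eventually_nhdsWithin_iff, Metric.eventually_nhds_iff] at this
  obtain ⟨a, ha, h⟩ := this
  exact ⟨a, ha, fun r h0 h1 => h (by rw [Real.dist_eq, sub_zero, abs_of_pos h0]; exact h1) h0⟩

theorem Fnl_bd_aux {s : ℝ} (h0 : ∀ x, 0 ≤ σ x) (hs : ∀ x, σ x ≤ s) {x : E3} (hx : x ≠ 0) {Φ b : ℝ} (hb : 0 < b) (hΦ : b ≤ Φ) :
    |Fnl A J P σ x Φ| ≤ kk A J P * (1 + ‖x‖^2) / ‖x‖^6 / (8 * b^7) + s / (4 * ‖x‖^4 * b^3) := by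
  have hr : 0 < ‖x‖ := norm_pos_iff.2 hx
  rw [abs_of_nonpos (Fnl_nonpos A J P h0 hx (hb.trans_le hΦ))]
  refine (neg_le_neg (Fnl_mono A J P h0 hx hb hΦ)).trans ?_
  unfold Fnl
  rw [Ksq_eq A J P hx, neg_div, neg_sub_left, neg_neg, add_comm]
  have := QQ_le A J P hx
  have := hs x
  gcongr

theorem Fnl_bd1 {s : ℝ} (h0 : ∀ x, 0 ≤ σ x) (hs : ∀ x, σ x ≤ s) {x : E3} (hx : 1 ≤ ‖x‖) {Φ : ℝ} (hΦ : 1 ≤ Φ) :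
    |Fnl A J P σ x Φ| ≤ (kk A J P + s) / 4 * ‖x‖ ^ (-4 : ℝ) := by
  have hr : 0 < ‖x‖ := by linarith
  have hx0 : x ≠ 0 := norm_pos_iff.1 hr
  refine (Fnl_bd_aux h0 hs hx0 one_pos hΦ).trans ?_
  have e : ‖x‖ ^ (-4 : ℝ) = (‖x‖^4)⁻¹ := by rw [Real.rpow_neg hr.le]; norm_cast
  rw [e]
  have hk := kk_nonneg A J P
  have h1 : kk A J P * (1 + ‖x‖^2) / ‖x‖^6 / (8 * 1^7) ≤ kk A J P * (2 * ‖x‖^2) / ‖x‖^6 / (8 * 1^7) := by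
    gcongr; nlinarith
  refine (add_le_add_left h1 _).trans (le_of_eq ?_)
  field_simp; ring

theorem Fnl_bd2 {s : ℝ} (h0 : ∀ x, 0 ≤ σ x) (hs : ∀ x, σ x ≤ s) {x : E3} (hx0 : x ≠ 0) (hx : ‖x‖ ≤ 1) {Φ c : ℝ} (hc : 0 < c)
    (hΦ : c * ‖x‖ ^ (-(1/2) : ℝ) ≤ Φ) :
    |Fnl A J P σ x Φ| ≤ (kk A J P / c^7 + s / c^3) / 4 * ‖x‖ ^ (-(5/2) : ℝ) := by
  have hr : 0 < ‖x‖ := norm_pos_iff.2 hx0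
  refine (Fnl_bd_aux h0 hs hx0 (by positivity) hΦ).trans ?_
  have hk := kk_nonneg A J P
  set q := ‖x‖ ^ (-(1/2) : ℝ) with hq
  have hqp : 0 < q := by positivity
  have hr1 : ‖x‖ = (q^2)⁻¹ := by
    rw [hq, ← Real.rpow_natCast, ← Real.rpow_mul hr.le, ← Real.rpow_neg hr.le]; norm_num
  have e : ‖x‖ ^ (-(5/2) : ℝ) = q^5 := by
    rw [hq, ← Real.rpow_natCast, ← Real.rpow_mul hr.le]; norm_num
  have h1 : kk A J P * (1 + ‖x‖^2) / ‖x‖^6 / (8 * (c * q)^7) ≤ kk A J P * 2 / ‖x‖^6 / (8 * (c * q)^7) := by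
    gcongr; nlinarith
  refine (add_le_add_left h1 _).trans (le_of_eq ?_)
  rw [e, hr1]
  field_simp; ring

theorem upper_bd (hA : 0 ≤ A) (hAJ : 0 < A ∨ J ≠ 0) (hσ : ContDiff ℝ (⊤ : ℕ∞) σ) (h0 : ∀ x, 0 ≤ σ x) {s : ℝ} (hσs : ∀ x, σ x ≤ s)
    {β : ℝ} (hβ : 1/2 ≤ β) (hβ1 : β < 1) : ∃ C > 0, ∀ μ > 0, ∀ u, IsSolμ A J P σ μ u → ∀ x : E3, x ≠ 0 → u x ≤ C * ‖x‖ ^ (-β) := by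
  have hk := kk_nonneg A J P
  have hs0 : 0 ≤ s := (h0 0).trans (hσs 0)
  have hbb : 0 < β * (1 - β) := mul_pos (by linarith) (by linarith)
  set C := 1 + (kk A J P + s) / (β * (1 - β)) with hC
  have hC1 : 1 ≤ C := by rw [hC]; have : 0 ≤ (kk A J P + s) / (β * (1 - β)) := by positivity
                         linarith
  have hC2 : (kk A J P + s) / 4 < C * (β * (1 - β)) := by
    rw [hC, add_mul, div_mul_cancel₀ _ hbb.ne']; linarith
  refine ⟨C, by linarith, fun μ hμ u hsol x hx => ?_⟩
  have hsm := sol_smooth hA hAJ hσ h0 hμ hsol 2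
  have key := max_principle_Om (v := fun x => u x - C * ‖x‖ ^ (-β)) ?_ ?_ ?_ ?_ x hx
  · simpa using key
  · intro c hc
    obtain ⟨M, hM⟩ := (isCompact_closedBall (0:E3) 1).exists_bound_of_continuousOn hsol.2.1.continuous.continuousOn
    obtain ⟨a, ha, h⟩ := pow_big (b := -β) (by linarith) (C := C) (by linarith) M
    refine ⟨min a 1, by positivity, fun x hx hxa => ?_⟩
    have h1 := h ‖x‖ (norm_pos_iff.2 hx) (hxa.trans_le (min_le_left _ _))
    have h2 := hM x (by simpa using (hxa.trans_le (min_le_right _ _)).le)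
    have := le_abs_self (u x)
    rw [Real.norm_eq_abs] at h2
    linarith
  · intro c hc
    obtain ⟨R, hR⟩ := sol_inf hsol c hc
    refine ⟨R, fun x hx => ?_⟩
    have := hR x hx
    have : 0 ≤ C * ‖x‖ ^ (-β) := by positivity
    linarith
  · intro x hx
    exact (hsm x hx).sub (contDiffAt_const.mul (pow_cd hx _ _))
  · intro x hx hpos
    have hr : 0 < ‖x‖ := norm_pos_iff.2 hx
    have hpc := pow_cd hx (-β) 2
    rw [lap_sub (hsm x hx) (contDiffAt_const.mul hpc), lap_const_mul _ hpc, lap_pow hx, hsol.2.2.2 x hx]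
    have hPhi := sol_Phi hμ hsol x
    have hu : C * ‖x‖ ^ (-β) ≤ u x := by linarith
    set Φ := 1 + μ / (2*‖x‖) + u x with hΦ
    have hΦu : u x ≤ Φ := by
      have : 0 ≤ μ / (2*‖x‖) := by positivity
      rw [hΦ]; linarith
    have hF : |Fnl A J P σ x Φ| ≤ (kk A J P + s) / 4 * ‖x‖ ^ (-β - 2) := by
      rcases le_total ‖x‖ 1 with h1 | h1
      · have hq : 1 * ‖x‖ ^ (-(1/2) : ℝ) ≤ Φ := by
          refine le_trans ?_ (hu.trans hΦu)
          exact mul_le_mul hC1 (Real.rpow_le_rpow_of_exponent_ge hr h1 (by linarith)) (by positivity) (by linarith)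
        refine (Fnl_bd2 h0 hσs hx h1 one_pos hq).trans ?_
        norm_num only [one_pow, div_one]
        gcongr ?_ * ?_
        exact Real.rpow_le_rpow_of_exponent_ge hr h1 (by linarith)
      · refine (Fnl_bd1 h0 hσs h1 hPhi).trans ?_
        gcongr ?_ * ?_
        exact Real.rpow_le_rpow_of_exponent_le h1 (by linarith)
    have hq : 0 < ‖x‖ ^ (-β - 2) := by positivity
    have := mul_lt_mul_of_pos_right hC2 hq
    have := neg_abs_le (Fnl A J P σ x Φ)
    nlinarith

theorem sol_mono (hA : 0 ≤ A) (hAJ : 0 < A ∨ J ≠ 0) (hσ : ContDiff ℝ (⊤ : ℕ∞) σ) (h0 : ∀ x, 0 ≤ σ x)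
    {μ1 μ2 : ℝ} (h2 : 0 < μ2) (h12 : μ2 ≤ μ1) {u1 u2 : E3 → ℝ} (hs1 : IsSolμ A J P σ μ1 u1) (hs2 : IsSolμ A J P σ μ2 u2)
    {x : E3} (hx : x ≠ 0) : u1 x ≤ u2 x := by
  have hμ1 : 0 < μ1 := h2.trans_le h12
  have hsm1 := sol_smooth hA hAJ hσ h0 hμ1 hs1 2
  have hsm2 := sol_smooth hA hAJ hσ h0 h2 hs2 2
  have main : ∀ ε > 0, u1 x - u2 x - ε * ‖x‖ ^ (-(1/2) : ℝ) ≤ 0 := by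
    intro ε hε
    refine max_principle_Om (v := fun x => u1 x - u2 x - ε * ‖x‖ ^ (-(1/2) : ℝ)) ?_ ?_ ?_ ?_ x hx
    · intro c hc
      obtain ⟨M, hM⟩ := (isCompact_closedBall (0:E3) 1).exists_bound_of_continuousOn hs1.2.1.continuous.continuousOn
      obtain ⟨a, ha, h⟩ := pow_big (b := -(1/2)) (by norm_num) hε M
      refine ⟨min a 1, by positivity, fun x hx hxa => ?_⟩
      have h1 := h ‖x‖ (norm_pos_iff.2 hx) (hxa.trans_le (min_le_left _ _))
      have h2 := hM x (by simpa using (hxa.trans_le (min_le_right _ _)).le)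
      have := le_abs_self (u1 x)
      rw [Real.norm_eq_abs] at h2
      have := hs2.1 x
      linarith
    · intro c hc
      obtain ⟨R, hR⟩ := sol_inf hs1 c hc
      refine ⟨R, fun x hx => ?_⟩
      have := hR x hx
      have := hs2.1 x
      have : 0 ≤ ε * ‖x‖ ^ (-(1/2) : ℝ) := by positivity
      linarith
    · intro x hx
      exact ((hsm1 x hx).sub (hsm2 x hx)).sub (contDiffAt_const.mul (pow_cd hx _ _))
    · intro x hx hpos
      have hr : 0 < ‖x‖ := norm_pos_iff.2 hx
      have hpc := pow_cd hx (-(1/2)) 2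
      rw [lap_sub ((hsm1 x hx).sub (hsm2 x hx)) (contDiffAt_const.mul hpc), lap_sub (hsm1 x hx) (hsm2 x hx),
        lap_const_mul _ hpc, lap_pow hx, hs1.2.2.2 x hx, hs2.2.2.2 x hx]
      have hp : 0 < ε * ‖x‖ ^ (-(1/2) : ℝ) := by positivity
      have hp2 : 0 < ε * ‖x‖ ^ (-(1/2) - 2 : ℝ) := by positivity
      have hm : Fnl A J P σ x (1 + μ2 / (2 * ‖x‖) + u2 x) ≤ Fnl A J P σ x (1 + μ1 / (2 * ‖x‖) + u1 x) := by
        refine Fnl_mono A J P h0 hx (by have := sol_Phi h2 hs2 x; linarith) ?_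
        have : μ2 / (2 * ‖x‖) ≤ μ1 / (2 * ‖x‖) := by gcongr
        linarith
      nlinarith
  by_contra hcon
  push Not at hcon
  have hr : 0 < ‖x‖ := norm_pos_iff.2 hx
  have hq : 0 < ‖x‖ ^ (-(1/2) : ℝ) := by positivity
  have := main ((u1 x - u2 x) / (2 * ‖x‖ ^ (-(1/2) : ℝ))) (div_pos (by linarith) (by positivity))
  rw [div_mul_eq_mul_div, mul_comm (2:ℝ), ← div_div, mul_div_assoc, div_self hq.ne'] at this
  linarith
end

theorem QQ_low {A J : ℝ} (P : E3) (hAJ : 0 < A ∨ J ≠ 0) : ∃ r0 > 0, ∃ k1 > 0, r0 ≤ 1 ∧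
    ∀ x : E3, x ≠ 0 → ‖x‖ < r0 → ‖x‖^2 / 4 < (x 0)^2 + (x 1)^2 → k1 ≤ QQ A J P x := by
  have hP : 0 ≤ ‖P‖ := norm_nonneg P
  rcases hAJ with h | h
  · refine ⟨min 1 (A / (2 * (‖P‖ + 1))), by positivity, A^2, by positivity, min_le_left _ _, fun x hx hr _ => ?_⟩
    have h1 := hr.trans_le (min_le_right _ _)
    rw [lt_div_iff₀ (by positivity)] at h1
    have h2 : |⟪P, x⟫| ≤ A / 2 := (abs_real_inner_le_norm P x).trans (by nlinarith [norm_nonneg x])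
    have h3 := (abs_le.1 h2).1
    have h4 : (A/2)^2 ≤ (A + ⟪P, x⟫)^2 := by gcongr; linarith
    unfold QQ
    have : 0 ≤ 9/2 * ((2 * J * x 0 / ‖x‖ + P 1 * ‖x‖)^2 + (2 * J * x 1 / ‖x‖ - P 0 * ‖x‖)^2)
      + 9/2 * (P 2)^2 * ‖x‖^2 + 3 * ⟪P, x⟫^2 := by positivity
    nlinarith
  · have hJ : 0 < |J| := abs_pos.2 h
    refine ⟨min 1 (|J| / (2 * (‖P‖ + 1))), by positivity, J^2, by positivity, min_le_left _ _, fun x hx hr hs => ?_⟩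
    have hr0 : 0 < ‖x‖ := norm_pos_iff.2 hx
    have h1 := hr.trans_le (min_le_right _ _)
    rw [lt_div_iff₀ (by positivity)] at h1
    have h2 : ‖P‖ * ‖x‖ ≤ |J| / 2 := by nlinarith [norm_nonneg x]
    have h3 : (‖P‖ * ‖x‖)^2 ≤ (|J| / 2)^2 := by gcongr
    rw [div_pow, sq_abs, mul_pow, nsq3 P] at h3
    have h4 : 1/4 < (x 0 / ‖x‖)^2 + (x 1 / ‖x‖)^2 := by
      rw [div_pow, div_pow, ← add_div, lt_div_iff₀ (by positivity)]; linarith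
    unfold QQ
    set r := ‖x‖
    rw [show 2 * J * x 0 / r = 2 * J * (x 0 / r) by ring, show 2 * J * x 1 / r = 2 * J * (x 1 / r) by ring]
    set a := x 0 / r
    set b := x 1 / r
    have e0 : 0 ≤ 6 * (A + ⟪P, x⟫)^2 + 9/2 * (P 2)^2 * r^2 + 3 * ⟪P, x⟫^2 := by positivity
    have e1 : (2 * J * a)^2 / 2 - (P 1 * r)^2 ≤ (2 * J * a + P 1 * r)^2 := by nlinarith [sq_nonneg (J * a * 2 + 2 * (P 1 * r))]
    have e2 : (2 * J * b)^2 / 2 - (P 0 * r)^2 ≤ (2 * J * b - P 0 * r)^2 := by nlinarith [sq_nonneg (J * b * 2 - 2 * (P 0 * r))]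
    have e3 : J^2 * (1/4) ≤ J^2 * (a^2 + b^2) := by gcongr
    have e4 : 0 ≤ P 2 ^2 * r^2 := by positivity
    nlinarith

theorem pd_coord (i j : Fin 3) (x : E3) : pd i (fun y : E3 => y j) x = if i = j then 1 else 0 := by
  have : HasFDerivAt (fun y : E3 => y j) (EuclideanSpace.proj j : E3 →L[ℝ] ℝ) x := (EuclideanSpace.proj j : E3 →L[ℝ] ℝ).hasFDerivAt
  rw [pd, this.fderiv]
  simp [eq_comm]

theorem lap_coord (j : Fin 3) (x : E3) : lap (fun y : E3 => y j) x = 0 := by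
  rw [lap_eq_pd (c2_diff (coord_cd x j 2))]
  refine Finset.sum_eq_zero fun i _ => ?_
  rw [show pd i (fun y : E3 => y j) = fun _ => if i = j then 1 else 0 from funext (pd_coord i j), pd_const]

theorem q_cd (x : E3) (n : WithTop ℕ∞) : ContDiffAt ℝ n (fun y : E3 => y 0 * y 0 + y 1 * y 1) x :=
  ((coord_cd x 0 n).mul (coord_cd x 0 n)).add ((coord_cd x 1 n).mul (coord_cd x 1 n))

theorem lap_q (x : E3) : lap (fun y : E3 => y 0 * y 0 + y 1 * y 1) x = 4 := by
  rw [lap_add ((coord_cd x 0 2).mul (coord_cd x 0 2)) ((coord_cd x 1 2).mul (coord_cd x 1 2)), lap_mul (coord_cd x 0 2) (coord_cd x 0 2),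
    lap_mul (coord_cd x 1 2) (coord_cd x 1 2)]
  simp [lap_coord, pd_coord]; norm_num

theorem lap_sub0 {x : E3} (hx : x ≠ 0) (a : ℝ) : lap (fun y : E3 => (y 0 * y 0 + y 1 * y 1) * ‖y‖ ^ a) x =
    4 * ‖x‖ ^ a + (a^2 + 5 * a) * (x 0 * x 0 + x 1 * x 1) * ‖x‖ ^ (a - 2) := by
  have hd : ∀ j, DifferentiableAt ℝ (fun y : E3 => y j) x := fun j => (coord_cd x j 1).differentiableAt (by norm_num)
  have hp : ∀ i, pd i (fun y : E3 => y 0 * y 0 + y 1 * y 1) x = 2 * (if i = 0 then x 0 else 0) + 2 * (if i = 1 then x 1 else 0) := by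
    intro i
    rw [pd_add (u := fun y : E3 => y 0 * y 0) (v := fun y : E3 => y 1 * y 1) ((hd 0).mul (hd 0)) ((hd 1).mul (hd 1)), pd_mul (hd 0) (hd 0), pd_mul (hd 1) (hd 1), pd_coord, pd_coord]
    split_ifs <;> ring
  rw [lap_mul (q_cd x 2) (pow_cd hx a 2), lap_q, lap_pow hx]
  simp only [hp, pd_pow hx, Fin.sum_univ_three]
  simp
  ring

section
variable {A J : ℝ} {P : E3} {σ : E3 → ℝ}

def gg (c : ℝ) (y : E3) : ℝ := c * (‖y‖ ^ (-(1/2) : ℝ) + 1/8 * ((y 0 * y 0 + y 1 * y 1) * ‖y‖ ^ (-(5/2) : ℝ)))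

theorem gg_cd (c : ℝ) {x : E3} (hx : x ≠ 0) : ContDiffAt ℝ 2 (gg c) x :=
  contDiffAt_const.mul ((pow_cd hx _ _).add (contDiffAt_const.mul ((q_cd x 2).mul (pow_cd hx _ _))))

theorem gg_lap (c : ℝ) {x : E3} (hx : x ≠ 0) : lap (gg c) x =
    c * (1/4 * ‖x‖ ^ (-(5/2) : ℝ) - 25/32 * ((x 0 * x 0 + x 1 * x 1) * ‖x‖ ^ (-(9/2) : ℝ))) := by
  unfold gg
  have h1 := (q_cd x 2).mul (pow_cd hx (-(5/2)) 2)
  rw [lap_const_mul _ ((pow_cd hx _ _).add (contDiffAt_const.mul h1)), lap_add (pow_cd hx _ _) (contDiffAt_const.mul h1),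
    lap_const_mul _ h1, lap_sub0 hx, lap_pow hx]
  rw [show (-(1/2) - 2 : ℝ) = -(5/2) by norm_num, show (-(5/2) - 2 : ℝ) = -(9/2) by norm_num]
  ring

set_option maxHeartbeats 1000000 in
theorem low_bd (hA : 0 ≤ A) (hAJ : 0 < A ∨ J ≠ 0) (hσ : ContDiff ℝ (⊤ : ℕ∞) σ) (h0 : ∀ x, 0 ≤ σ x) :
    ∃ c > 0, ∀ μ > 0, ∀ u, IsSolμ A J P σ μ u → ∀ x : E3, x ≠ 0 → ‖x‖ ≤ 1 → c * ‖x‖ ^ (-(1/2) : ℝ) ≤ 1 + μ / (2*‖x‖) + u x := by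
  obtain ⟨r0, hr0, k1, hk1, hr01, hQ⟩ := QQ_low P hAJ
  set c := min (min 1 (k1/20)) (r0/4) with hc
  have hc0 : 0 < c := by positivity
  have hc1 : c ≤ 1 := (min_le_left _ _).trans (min_le_left _ _)
  have hc2 : c ≤ k1/20 := (min_le_left _ _).trans (min_le_right _ _)
  have hc3 : c ≤ r0/4 := min_le_right _ _
  have hgle : ∀ x : E3, x ≠ 0 → gg c x ≤ 9/8 * c * ‖x‖ ^ (-(1/2) : ℝ) := by
    intro x hx
    have hr : 0 < ‖x‖ := norm_pos_iff.2 hx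
    have e : ‖x‖ ^ (-(1/2) : ℝ) = ‖x‖^2 * ‖x‖ ^ (-(5/2) : ℝ) := by
      rw [← Real.rpow_natCast, ← Real.rpow_add hr]; norm_num
    have h2 : x 0 * x 0 + x 1 * x 1 ≤ ‖x‖^2 := by rw [nsq3]; nlinarith [sq_nonneg (x 2)]
    have h3 : 0 < ‖x‖ ^ (-(5/2) : ℝ) := by positivity
    have h4 := mul_le_mul_of_nonneg_right h2 h3.le
    rw [← e] at h4
    unfold gg
    nlinarith
  have hgge : ∀ x : E3, x ≠ 0 → c * ‖x‖ ^ (-(1/2) : ℝ) ≤ gg c x := by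
    intro x hx
    unfold gg
    have : 0 ≤ c * (1/8 * ((x 0 * x 0 + x 1 * x 1) * ‖x‖ ^ (-(5/2) : ℝ))) := by
      have := mul_self_nonneg (x 0)
      have := mul_self_nonneg (x 1)
      positivity
    linarith
  -- outside the half ball
  have hout : ∀ x : E3, r0 / 2 ≤ ‖x‖ → 9/8 * c * ‖x‖ ^ (-(1/2) : ℝ) ≤ 1 := by
    intro x hx
    have h1 : ‖x‖ ^ (-(1/2) : ℝ) ≤ (r0/2) ^ (-(1/2) : ℝ) := Real.rpow_le_rpow_of_nonpos (by positivity) hx (by norm_num)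
    have h2 : (r0/2) ^ (-(1/2) : ℝ) ≤ (r0/2) ^ (-1 : ℝ) := Real.rpow_le_rpow_of_exponent_ge (by positivity) (by linarith) (by norm_num)
    rw [Real.rpow_neg_one] at h2
    calc 9/8 * c * ‖x‖ ^ (-(1/2) : ℝ) ≤ 9/8 * (r0/4) * (r0/2)⁻¹ := by gcongr; exact h1.trans h2
      _ ≤ 1 := by field_simp; norm_num
  refine ⟨c, hc0, fun μ hμ u hs x hx hx1 => ?_⟩
  have hsm := sol_smooth hA hAJ hσ h0 hμ hs 2
  by_cases hxr : ‖x‖ < r0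
  swap
  · have := hout x (by linarith)
    have h3 := sol_Phi hμ hs x
    have : 0 < c * ‖x‖ ^ (-(1/2) : ℝ) := by have := norm_pos_iff.2 hx; positivity
    linarith
  have hU : IsOpen (ball (0:E3) r0 ∩ Om) := isOpen_ball.inter isOpen_Om
  have key := max_principle hU (v := fun x => gg c x - (1 + μ / (2*‖x‖) + u x)) ?_ ?_ ?_ x ⟨by simpa using hxr, hx⟩
  · have := hgge x hx; linarith
  · intro d hd
    obtain ⟨a, ha, h⟩ := pow_big (b := -(1/2)) (by norm_num) (C := μ/2) (by positivity) (2 * c)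
    refine ⟨_, annulus_compact a (r0/2) ha, fun x hx => ⟨?_, fun h => ?_⟩, fun x hx hn => ?_⟩
    · have := hx.2; simp; linarith
    · rw [h] at hx; simp at hx; linarith
    · refine le_trans (sub_nonpos.2 ((hgle x hx.2).trans ?_)) hd.le
      have hr : 0 < ‖x‖ := norm_pos_iff.2 hx.2
      by_cases hxa : ‖x‖ < a
      · have h1 := h _ hr hxa
        have h2 : ‖x‖ ^ (-(1/2) : ℝ) * ‖x‖ ^ (-(1/2) : ℝ) = ‖x‖⁻¹ := by
          rw [← Real.rpow_add hr, ← Real.rpow_neg_one]; norm_num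
        have h3 : 0 < ‖x‖ ^ (-(1/2) : ℝ) := by positivity
        have h4 := mul_le_mul_of_nonneg_right h1 h3.le
        rw [mul_assoc (μ/2), h2] at h4
        have h5 : μ / (2*‖x‖) = μ/2 * ‖x‖⁻¹ := by field_simp
        have := hs.1 x
        nlinarith
      · have : r0 / 2 ≤ ‖x‖ := by by_contra h'; exact hn ⟨not_lt.1 hxa, (not_le.1 h').le⟩
        exact (hout x this).trans (sol_Phi hμ hs x)
  · intro x hx
    exact (gg_cd c hx.2).sub (Phi_cd μ hx.2 (hsm x hx.2))
  · rintro x ⟨hxb, hx⟩ hpos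
    have hr : 0 < ‖x‖ := norm_pos_iff.2 hx
    have hxr : ‖x‖ < r0 := by simpa using hxb
    have hlapΦ : lap (fun x => 1 + μ / (2*‖x‖) + u x) x = lap u x := by
      have e : (fun x : E3 => 1 + μ / (2*‖x‖) + u x) = fun x => (1 + μ/2 * ‖x‖ ^ (-1 : ℝ)) + u x := by
        funext y; rw [Real.rpow_neg_one]; congr 2; by_cases h : ‖y‖ = 0
        · simp [h]
        · field_simp
      have h1 : ContDiffAt ℝ 2 (fun x : E3 => μ/2 * ‖x‖ ^ (-1 : ℝ)) x := contDiffAt_const.mul (pow_cd hx _ _)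
      rw [e, lap_add (contDiffAt_const.add h1) (hsm x hx), lap_add contDiffAt_const h1, lap_const, lap_const_mul _ (pow_cd hx _ _), lap_pow hx]
      norm_num
    rw [lap_sub (gg_cd c hx) (Phi_cd μ hx (hsm x hx)), hlapΦ, gg_lap c hx, hs.2.2.2 x hx]
    have hΦ := sol_Phi hμ hs x
    set Φ := 1 + μ / (2*‖x‖) + u x with hΦd
    have hF := Fnl_mono A J P h0 hx (a := Φ) (b := gg c x) (by linarith) (by linarith)
    set q := ‖x‖ ^ (-(1/2) : ℝ) with hq
    have hqp : 0 < q := by positivity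
    have hr1 : ‖x‖ = (q^2)⁻¹ := by
      rw [hq, ← Real.rpow_natCast, ← Real.rpow_mul hr.le, ← Real.rpow_neg hr.le]; norm_num
    have e5 : ‖x‖ ^ (-(5/2) : ℝ) = q^5 := by
      rw [hq, ← Real.rpow_natCast, ← Real.rpow_mul hr.le]; norm_num
    have e9 : ‖x‖ ^ (-(9/2) : ℝ) = q^9 := by
      rw [hq, ← Real.rpow_natCast, ← Real.rpow_mul hr.le]; norm_num
    rw [e5, e9]
    set t := x 0 * x 0 + x 1 * x 1 with ht
    have hg1 := hgle x hx
    have hg0 : 0 < gg c x := by linarith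
    by_cases hcase : ‖x‖^2/4 < (x 0)^2 + (x 1)^2
    · have hk := hQ x hx hxr hcase
      have ht1 : t * q^9 ≤ q^5 := by
        have : t ≤ ‖x‖^2 := by rw [nsq3, ht]; nlinarith [sq_nonneg (x 2)]
        calc t * q^9 ≤ ‖x‖^2 * q^9 := by gcongr
          _ = q^5 := by rw [hr1]; field_simp
      have hF2 : Fnl A J P σ x (gg c x) ≤ - (k1 * q^5 / (20 * c)) := by
        have hσ0 := h0 x
        have h1 : Fnl A J P σ x (gg c x) ≤ - (Ksq A J P x / (8 * (gg c x)^7)) := by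
          unfold Fnl
          have : 0 ≤ σ x / (4 * ‖x‖^4 * gg c x^3) := by positivity
          rw [neg_div]; linarith
        refine h1.trans (neg_le_neg ?_)
        rw [Ksq_eq A J P hx]
        have hQn := div_nonneg (QQ_nonneg A J P x) (pow_nonneg hr.le 6)
        calc k1 * q^5 / (20 * c) ≤ k1 * q^5 / (20 * c^7) := by
              have : c^7 ≤ c := pow_le_of_le_one hc0.le hc1 (by norm_num)
              gcongr
          _ ≤ k1 / ‖x‖^6 / (8 * (9/8 * c * q)^7) := by
              rw [hr1, inv_pow, div_inv_eq_mul, div_le_div_iff₀ (by positivity) (by positivity)]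
              have : 0 < k1 * q^12 * c^7 := by positivity
              nlinarith
          _ ≤ _ := by gcongr
      have h5 : 0 < q^5 := by positivity
      have h6 : q^5 ≤ k1 * q^5 / (20 * c) := by
        rw [le_div_iff₀ (by positivity)]
        have := mul_le_mul_of_nonneg_right hc2 h5.le
        linarith
      have h7 : c * (-(17/32) * q^5) ≤ c * (1/4 * q^5 - 25/32 * (t * q^9)) := mul_le_mul_of_nonneg_left (by linarith) hc0.le
      have h8 : c * q^5 ≤ 1 * q^5 := mul_le_mul_of_nonneg_right hc1 h5.le
      linarith
    · have ht1 : t * q^9 ≤ 1/4 * q^5 := by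
        have : t ≤ ‖x‖^2/4 := by rw [ht]; push Not at hcase; linarith
        calc t * q^9 ≤ ‖x‖^2/4 * q^9 := by gcongr
          _ = 1/4 * q^5 := by rw [hr1]; field_simp
      have hF2 := Fnl_nonpos A J P h0 hx hg0
      have h5 : 0 < q^5 := by positivity
      have h7 : 0 < c * (1/4 * q^5 - 25/32 * (t * q^9)) := mul_pos hc0 (by linarith)
      linarith
end

theorem fixk_tendsto {ι : Type*} {l : Filter ι} [l.IsCountablyGenerated] {k b : E3 → ℝ} {w : ι → E3 → ℝ} {w0 : E3 → ℝ} {M : ℝ}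
    (hb : Integrable b) (hk : AEStronglyMeasurable k) (hbd : ∀ z ≠ 0, |k z| ≤ b z)
    (hw : ∀ n, Measurable (w n)) (hwM : ∀ n, ∀ z, b z ≠ 0 → |w n z| ≤ M)
    (hlim : ∀ z, b z ≠ 0 → Tendsto (fun n => w n z) l (nhds (w0 z))) :
    Tendsto (fun n => ∫ z, k z * w n z) l (nhds (∫ z, k z * w0 z)) := by
  refine tendsto_integral_filter_of_dominated_convergence (fun z => b z * |M|) ?_ ?_ (hb.mul_const _) ?_
  · exact Eventually.of_forall fun n => hk.mul (hw n).aestronglyMeasurable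
  · refine Eventually.of_forall fun n => ?_
    filter_upwards [ae_ne0] with z hz
    rw [Real.norm_eq_abs, abs_mul]
    by_cases h0 : b z = 0
    · have := hbd z hz
      have h1 : |k z| = 0 := le_antisymm (by rw [← h0]; exact this) (abs_nonneg _)
      rw [h1, h0]; simp
    · exact mul_le_mul (hbd z hz) ((hwM n z h0).trans (le_abs_self M)) (abs_nonneg _) ((abs_nonneg _).trans (hbd z hz))
  · filter_upwards [ae_ne0] with z hz
    by_cases h0 : b z = 0
    · have := hbd z hz
      have h1 : k z = 0 := abs_eq_zero.1 (le_antisymm (by rw [← h0]; exact this) (abs_nonneg _))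
      simp [h1, tendsto_const_nhds]
    · exact (hlim z h0).const_mul _

section
variable {A J : ℝ} {P : E3} {σ : E3 → ℝ}

theorem Fnl_tend (x : E3) {ι : Type*} {l : Filter ι} {Φ : ι → ℝ} {Φ0 : ℝ} (hx : x ≠ 0) (h0 : 0 < Φ0) (h : Tendsto Φ l (nhds Φ0)) :
    Tendsto (fun n => Fnl A J P σ x (Φ n)) l (nhds (Fnl A J P σ x Φ0)) := by
  have hr : 0 < ‖x‖ := norm_pos_iff.2 hx
  unfold Fnl
  exact (tendsto_const_nhds.div ((h.pow 7).const_mul _) (by positivity)).sub (tendsto_const_nhds.div ((h.pow 3).const_mul _) (by positivity))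

theorem Fnl_abs_le (h0 : ∀ x, 0 ≤ σ x) {x : E3} (hx : x ≠ 0) {Φ : ℝ} (h : 1 ≤ Φ) : |Fnl A J P σ x Φ| ≤ |Fnl A J P σ x 1| := by
  have h1 := Fnl_mono A J P h0 hx one_pos h
  rw [abs_of_nonpos (Fnl_nonpos A J P h0 hx (by linarith)), abs_of_nonpos (Fnl_nonpos A J P h0 hx one_pos)]
  linarith

theorem limit_exists (hA : 0 ≤ A) (hAJ : 0 < A ∨ J ≠ 0) (hσ : ContDiff ℝ (⊤ : ℕ∞) σ) (h0 : ∀ x, 0 ≤ σ x) {s : ℝ} (hσs : ∀ x, σ x ≤ s)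
    {u : ℝ → E3 → ℝ} (hu : ∀ μ > (0:ℝ), IsSolμ A J P σ μ (u μ)) :
    ∃ u0 : E3 → ℝ, (∀ x, 0 ≤ u0 x) ∧ Measurable u0 ∧
      (∀ x, x ≠ 0 → Tendsto (fun μ => u μ x) (nhdsWithin 0 (Set.Ioi 0)) (nhds (u0 x))) ∧
      (∀ n : ℕ, ∀ x ∈ Om, ContDiffAt ℝ n u0 x) ∧ (∀ x ∈ Om, lap u0 x = Fnl A J P σ x (1 + u0 x)) := by
  obtain ⟨C, hC, hub⟩ := upper_bd (A := A) (J := J) (P := P) hA hAJ hσ h0 hσs (β := 1/2) le_rfl (by norm_num)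
  set m : ℕ → ℝ := fun n => 1 / ((n:ℝ) + 1) with hm
  have hmp : ∀ n, 0 < m n := fun n => by rw [hm]; positivity
  have hm0 : Tendsto m atTop (nhds 0) := tendsto_one_div_add_atTop_nhds_zero_nat
  have hbdd : ∀ x, x ≠ 0 → BddAbove (range fun n => u (m n) x) := by
    intro x hx
    refine ⟨C * ‖x‖ ^ (-(1/2) : ℝ), ?_⟩
    rintro _ ⟨n, rfl⟩
    exact hub _ (hmp n) _ (hu _ (hmp n)) x hx
  set u0 : E3 → ℝ := fun x => if x = 0 then 0 else ⨆ n, u (m n) x with hu0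
  have hle : ∀ μ > 0, ∀ x, x ≠ 0 → u μ x ≤ u0 x := by
    intro μ hμ x hx
    obtain ⟨n, hn⟩ := (hm0.eventually (gt_mem_nhds hμ)).exists
    rw [hu0]; simp only [if_neg hx]
    exact (sol_mono hA hAJ hσ h0 (hmp n) hn.le (hu μ hμ) (hu _ (hmp n)) hx).trans (le_ciSup (hbdd x hx) n)
  have hnn : ∀ x, 0 ≤ u0 x := by
    intro x
    by_cases hx : x = 0
    · simp [hu0, hx]
    · exact ((hu 1 one_pos).1 x).trans (hle 1 one_pos x hx)
  have hlim : ∀ x, x ≠ 0 → Tendsto (fun μ => u μ x) (nhdsWithin 0 (Set.Ioi 0)) (nhds (u0 x)) := by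
    intro x hx
    rw [tendsto_order]
    constructor
    · intro a ha
      rw [hu0] at ha; simp only [if_neg hx] at ha
      obtain ⟨n, hn⟩ := exists_lt_of_lt_ciSup ha
      filter_upwards [Ioo_mem_nhdsGT (hmp n)] with μ hμ
      exact hn.trans_le (sol_mono hA hAJ hσ h0 hμ.1 hμ.2.le (hu _ (hmp n)) (hu μ hμ.1) hx)
    · intro a ha
      filter_upwards [self_mem_nhdsWithin] with μ hμ
      exact (hle μ hμ x hx).trans_lt ha
  have hmw : Tendsto m atTop (nhdsWithin 0 (Set.Ioi 0)) := tendsto_nhdsWithin_iff.2 ⟨hm0, Eventually.of_forall hmp⟩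
  have hlimn : ∀ x, x ≠ 0 → Tendsto (fun n => u (m n) x) atTop (nhds (u0 x)) := fun x hx => (hlim x hx).comp hmw
  have hΦlim : ∀ x, x ≠ 0 → Tendsto (fun n => 1 + m n / (2 * ‖x‖) + u (m n) x) atTop (nhds (1 + 0 / (2 * ‖x‖) + u0 x)) :=
    fun x hx => ((hm0.div_const _).const_add 1).add (hlimn x hx)
  have hflim : ∀ x, x ≠ 0 → Tendsto (fun n => Fnl A J P σ x (1 + m n / (2 * ‖x‖) + u (m n) x)) atTop
      (nhds (Fnl A J P σ x (1 + 0 / (2 * ‖x‖) + u0 x))) := by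
    intro x hx
    refine Fnl_tend x hx ?_ (hΦlim x hx)
    have := hnn x
    rw [zero_div]; linarith
  have hmeas : Measurable u0 := by
    refine measurable_of_tendsto_metrizable (f := fun n x => if x = 0 then 0 else u (m n) x) (fun n => ?_) ?_
    · exact Measurable.ite (measurableSet_singleton 0) measurable_const (hu _ (hmp n)).2.1.continuous.measurable
    · rw [tendsto_pi_nhds]
      intro x
      by_cases hx : x = 0
      · simp [hu0, hx]
      · simpa [hx] using hlimn x hx
  have hP0 : ∀ x, 1 ≤ 1 + 0 / (2 * ‖x‖) + u0 x := fun x => by have := hnn x; rw [zero_div]; linarith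
  have hu0b : ∀ x, x ≠ 0 → u0 x ≤ C * ‖x‖ ^ (-(1/2) : ℝ) := fun x hx =>
    le_of_tendsto' (hlimn x hx) fun n => hub _ (hmp n) _ (hu _ (hmp n)) x hx
  have hLB : LB u0 := by
    refine ⟨hmeas, fun K hK hKO => ?_⟩
    obtain ⟨M, hM⟩ := hK.exists_bound_of_continuousOn (f := fun x : E3 => C * ‖x‖ ^ (-(1/2) : ℝ))
      (fun x hx => (contDiffAt_const.mul (pow_cd (hKO hx) (-(1/2)) 0)).continuousAt.continuousWithinAt)
    refine ⟨M, fun x hx => ?_⟩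
    rw [abs_of_nonneg (hnn x)]
    exact (hu0b x (hKO hx)).trans ((le_abs_self _).trans (hM x hx))
  have hun : ∀ n x, x ≠ 0 → |u (m n) x| ≤ |u0 x| := fun n x hx => by
    rw [abs_of_nonneg ((hu _ (hmp n)).1 x), abs_of_nonneg (hnn x)]; exact hle _ (hmp n) x hx
  have hLB1 : LB (fun x => Fnl A J P σ x 1) := Fnl_lb A J P hσ (Φ := fun _ => 1) measurable_const (fun _ => le_rfl)
  have hum : ∀ n, Measurable (u (m n)) := fun n => (hu _ (hmp n)).2.1.continuous.measurable
  have hfm : ∀ n, Measurable (fun x => Fnl A J P σ x (1 + m n / (2 * ‖x‖) + u (m n) x)) := fun n => by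
    have := hum n
    exact (Fnl_lb A J P hσ (by fun_prop) (sol_Phi (hmp n) (hu _ (hmp n)))).1
  have hrep : RepF u0 (fun x => Fnl A J P σ x (1 + 0 / (2 * ‖x‖) + u0 x)) := by
    intro x ρ hρ hb
    have hxO : x ∈ Om := hb (mem_closedBall_self hρ.le)
    have hmem : ∀ z ∈ closedBall (0:E3) ρ, x - z ∈ closedBall x ρ := by
      intro z hz; simpa [dist_eq_norm] using hz
    obtain ⟨M1, hM1⟩ := hLB.2 _ (isCompact_closedBall x ρ) hb
    obtain ⟨M2, hM2⟩ := hLB1.2 _ (isCompact_closedBall x ρ) hb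
    obtain ⟨CS, hCS⟩ := SS_bd hρ
    have t1 : Tendsto (fun n => ∫ z, SS ρ 0 z * u (m n) (x - z)) atTop (nhds (∫ z, SS ρ 0 z * u0 (x - z))) := by
      refine fixk_tendsto (M := M1) (bnd_int (ρ := ρ) (C := CS) (p := -2) (by norm_num)) (SS_meas ρ 0).aestronglyMeasurable
        (hCS 0 le_rfl) (fun n => (hum n).comp (measurable_const.sub measurable_id)) ?_ ?_
      · intro n z hz
        have := hmem z (bnd_ne hz)
        exact (hun n _ (hb this)).trans (hM1 _ this)
      · intro z hz
        exact hlimn _ (hb (hmem z (bnd_ne hz)))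
    have t2 : Tendsto (fun n => ∫ z, GG ρ 0 z * (fun x => Fnl A J P σ x (1 + m n / (2 * ‖x‖) + u (m n) x)) (x - z)) atTop
        (nhds (∫ z, GG ρ 0 z * (fun x => Fnl A J P σ x (1 + 0 / (2 * ‖x‖) + u0 x)) (x - z))) := by
      refine fixk_tendsto (M := M2) (w := fun n z => (fun x => Fnl A J P σ x (1 + m n / (2 * ‖x‖) + u (m n) x)) (x - z))
        (w0 := fun z => (fun x => Fnl A J P σ x (1 + 0 / (2 * ‖x‖) + u0 x)) (x - z))
        (bnd_int (ρ := ρ) (C := 1) (p := -1) (by norm_num)) (GG_meas ρ 0).aestronglyMeasurable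
        (fun z hz => GG_bd hρ le_rfl hz) (fun n => (hfm n).comp (measurable_const.sub measurable_id)) ?_ ?_
      · intro n z hz
        have := hmem z (bnd_ne hz)
        exact (Fnl_abs_le h0 (hb this) (sol_Phi (hmp n) (hu _ (hmp n)) _)).trans (hM2 _ this)
      · intro z hz
        exact hflim _ (hb (hmem z (bnd_ne hz)))
    refine tendsto_nhds_unique ((hlimn x hxO).const_mul c0) ((t1.sub t2).congr fun n => ?_)
    exact (sol_rep hA hAJ hσ h0 (hmp n) (hu _ (hmp n)) x ρ hρ hb).symm
  have hsm := boot hσ hP0 hLB hrep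
  have hweak : WeakSol u0 (fun x => Fnl A J P σ x (1 + 0 / (2 * ‖x‖) + u0 x)) := by
    intro φ h1 h2 h3
    obtain ⟨M1, hM1⟩ := hLB.2 _ h2 h3
    obtain ⟨M2, hM2⟩ := hLB1.2 _ h2 h3
    have hlc : Continuous (lap φ) := continuous_iff_continuousAt.2 fun x => lap_continuousAt h1.contDiffAt
    have t1 : Tendsto (fun n => ∫ z, lap φ z * u (m n) z) atTop (nhds (∫ z, lap φ z * u0 z)) := by
      have hmem : ∀ z, |lap φ z| ≠ 0 → z ∈ tsupport φ := fun z hz => by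
        by_contra h; exact hz (by simp [lap_zero_of_notMem h])
      refine fixk_tendsto (M := M1) (b := fun z => |lap φ z|) (hlc.integrable_of_hasCompactSupport (lap_cs h2)).abs
        hlc.aestronglyMeasurable (fun z _ => le_rfl) hum ?_ ?_
      · intro n z hz
        exact (hun n _ (h3 (hmem z hz))).trans (hM1 _ (hmem z hz))
      · exact fun z hz => hlimn z (h3 (hmem z hz))
    have t2 : Tendsto (fun n => ∫ z, φ z * (fun x => Fnl A J P σ x (1 + m n / (2 * ‖x‖) + u (m n) x)) z) atTop
        (nhds (∫ z, φ z * (fun x => Fnl A J P σ x (1 + 0 / (2 * ‖x‖) + u0 x)) z)) := by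
      have hmem : ∀ z, |φ z| ≠ 0 → z ∈ tsupport φ := fun z hz => by
        by_contra h; exact hz (by simp [image_eq_zero_of_notMem_tsupport h])
      refine fixk_tendsto (M := M2) (b := fun z => |φ z|) (h1.continuous.integrable_of_hasCompactSupport h2).abs
        h1.continuous.aestronglyMeasurable (fun z _ => le_rfl) hfm ?_ ?_
      · intro n z hz
        exact (Fnl_abs_le h0 (h3 (hmem z hz)) (sol_Phi (hmp n) (hu _ (hmp n)) _)).trans (hM2 _ (hmem z hz))
      · exact fun z hz => hflim z (h3 (hmem z hz))
    have e := tendsto_nhds_unique t1 (t2.congr fun n => ?_)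
    · simpa only [mul_comm] using e
    · have := sol_weak hA hAJ hσ h0 (hmp n) (hu _ (hmp n)) φ h1 h2 h3
      simp only [mul_comm] at this ⊢
      exact this.symm
  refine ⟨u0, hnn, hmeas, hlim, hsm, ?_⟩
  have hc1 : ContinuousOn (lap u0) Om := fun x hx => (lap_continuousAt (hsm 2 x hx)).continuousWithinAt
  have hc2 : ContinuousOn (fun x => Fnl A J P σ x (1 + 0 / (2 * ‖x‖) + u0 x)) Om := fun x hx =>
    (Fnl_cd A J P hσ (n := 0) hx (Phi_cd 0 hx (hsm 0 x hx)) (by have := hP0 x; linarith)).continuousAt.continuousWithinAt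
  have hw2 : WeakSol u0 (lap u0) := by
    intro φ h1 h2 h3
    refine weak_form (n := ee 0) (by simp) (fun x hx => ((hsm 1 x hx).contDiffWithinAt)) hc1 (fun x hx _ => ⟨c2_diff (hsm 2 x hx), rfl⟩) h1 h2 h3
  have hloc1 : LocallyIntegrableOn (lap u0) Om := hc1.locallyIntegrableOn isOpen_Om.measurableSet
  have hloc2 : LocallyIntegrableOn (fun x => Fnl A J P σ x (1 + 0 / (2 * ‖x‖) + u0 x)) Om := hc2.locallyIntegrableOn isOpen_Om.measurableSet
  have hae := isOpen_Om.ae_eq_zero_of_integral_contDiff_smul_eq_zero (hloc1.sub hloc2) ?_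
  · have h5 : lap u0 =ᵐ[volume.restrict Om] fun x => Fnl A J P σ x (1 + 0 / (2 * ‖x‖) + u0 x) := by
      rw [Filter.EventuallyEq, ae_restrict_iff' isOpen_Om.measurableSet]
      filter_upwards [hae] with x hx hxO
      exact sub_eq_zero.1 (hx hxO)
    intro x hx
    have := Measure.eqOn_open_of_ae_eq h5 isOpen_Om hc1 hc2 hx
    simpa using this
  · intro g hg hgc hgs
    have hint : ∀ f : E3 → ℝ, ContinuousOn f Om → Integrable (fun x => f x * g x) := by
      intro f hf
      have hc : Continuous (fun x => f x * g x) := by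
        rw [continuous_iff_continuousAt]
        intro x
        by_cases hx : x ∈ tsupport g
        · exact (hf.continuousAt (isOpen_Om.mem_nhds (hgs hx))).mul hg.continuous.continuousAt
        · exact contAt_of_notMem (isClosed_tsupport g) (fun y hy => by simp [image_eq_zero_of_notMem_tsupport hy]) hx
      exact hc.integrable_of_hasCompactSupport hgc.mul_left
    have e1 := hw2 g (hg.of_le two_le_inf) hgc hgs
    have e2 := hweak g (hg.of_le two_le_inf) hgc hgs
    have e3 := integral_sub (hint _ hc1) (hint _ hc2)
    rw [← e1, ← e2, sub_self] at e3
    refine Eq.trans ?_ e3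
    refine integral_congr_ae (Eventually.of_forall fun x => ?_)
    simp only [smul_eq_mul, Pi.sub_apply]; ring
end

theorem theta_exists : ∃ θ : ℝ → ℝ, ContDiff ℝ (⊤ : ℕ∞) θ ∧ (∀ s, 0 ≤ θ s) ∧ (∀ s, θ s ≤ 1) ∧ (∀ s, |s| ≤ 1 → θ s = 1) ∧
    (∀ s, 2 ≤ |s| → θ s = 0) ∧ ∃ B, 0 ≤ B ∧ (∀ s, |deriv θ s| ≤ B) ∧ ∀ s, |deriv (deriv θ) s| ≤ B := by
  set f : ContDiffBump (0:ℝ) := ⟨1, 2, by norm_num, by norm_num⟩ with hf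
  have hs : ContDiff ℝ (⊤ : ℕ∞) f := f.contDiff
  have h1 : ContDiff ℝ (⊤ : ℕ∞) (deriv f) := (contDiff_infty_iff_deriv.1 hs).2
  have h2 : ContDiff ℝ (⊤ : ℕ∞) (deriv (deriv f)) := (contDiff_infty_iff_deriv.1 h1).2
  have hc1 : HasCompactSupport (deriv f) := f.hasCompactSupport.deriv
  have hc2 : HasCompactSupport (deriv (deriv f)) := hc1.deriv
  obtain ⟨B1, hB1⟩ := h1.continuous.bounded_above_of_compact_support hc1
  obtain ⟨B2, hB2⟩ := h2.continuous.bounded_above_of_compact_support hc2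
  refine ⟨f, hs, fun s => f.nonneg, fun s => f.le_one, fun s hs => f.one_of_mem_closedBall (by simpa using hs), fun s hs =>
    f.zero_of_le_dist (by simpa using hs), max 0 (max B1 B2), le_max_left _ _, fun s => ?_, fun s => ?_⟩
  · exact (hB1 s).trans ((le_max_left _ _).trans (le_max_right _ _))
  · exact (hB2 s).trans ((le_max_right _ _).trans (le_max_right _ _))

theorem contDiff_of_tsupp {n : WithTop ℕ∞} {f : E3 → ℝ} {K : Set E3} (hK : IsClosed K) (h0 : ∀ x ∉ K, f x = 0) (h1 : ∀ x ∈ K, ContDiffAt ℝ n f x) :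
    ContDiff ℝ n f := by
  rw [contDiff_iff_contDiffAt]
  intro x
  by_cases hx : x ∈ K
  · exact h1 x hx
  · have : f =ᶠ[nhds x] fun _ => 0 := by
      filter_upwards [hK.isOpen_compl.mem_nhds hx] with y hy
      exact h0 y hy
    exact contDiffAt_const.congr_of_eventuallyEq this

/-- good cutoffs -/
structure Cut (χ : ℕ → E3 → ℝ) (B : ℝ) : Prop where
  sm : ∀ n, ContDiff ℝ (⊤ : ℕ∞) (χ n)
  cs : ∀ n, HasCompactSupport (χ n)
  ts : ∀ n, tsupport (χ n) ⊆ Om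
  nn : ∀ n x, 0 ≤ χ n x
  le : ∀ n x, χ n x ≤ 1
  d1 : ∀ n i x, x ≠ 0 → |pd i (χ n) x| ≤ B / ((n:ℝ) + 1) * ‖x‖⁻¹
  d2 : ∀ n x, x ≠ 0 → |lap (χ n) x| ≤ B / ((n:ℝ) + 1) * (‖x‖^2)⁻¹
  lim : ∀ x, x ≠ 0 → Tendsto (fun n => χ n x) atTop (nhds 1)

theorem cut_exists : ∃ χ B, 0 ≤ B ∧ Cut χ B := by
  obtain ⟨θ, hθ, hθ0, hθ1, hθi, hθo, B, hB, hB1, hB2⟩ := theta_exists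
  have hd0 : ∀ s, HasDerivAt θ (deriv θ s) s := fun s => (hθ.differentiable (by simp) s).hasDerivAt
  have hθ' : ContDiff ℝ (⊤ : ℕ∞) (deriv θ) := (contDiff_infty_iff_deriv.1 hθ).2
  have hd1 : ∀ s, HasDerivAt (deriv θ) (deriv (deriv θ) s) s := fun s => (hθ'.differentiable (by simp) s).hasDerivAt
  set κ : ℕ → ℝ := fun n => 1 / ((n:ℝ) + 1) with hκ
  have hκ0 : ∀ n, 0 < κ n := fun n => by rw [hκ]; positivity
  have hκ1 : ∀ n, κ n ≤ 1 := fun n => by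
    rw [hκ]; simp only; rw [div_le_one (by positivity)]; linarith [Nat.cast_nonneg (α := ℝ) n]
  have hκl : Tendsto κ atTop (nhds 0) := tendsto_one_div_add_atTop_nhds_zero_nat
  set g : ℕ → ℝ → ℝ := fun n t => θ (κ n * Real.log t) with hg
  set χ : ℕ → E3 → ℝ := fun n x => if x = 0 then 0 else g n (‖x‖^2) with hχ
  have heq : ∀ n x, x ≠ 0 → χ n =ᶠ[nhds x] fun y => g n (‖y‖^2) := by
    intro n x hx
    filter_upwards [isOpen_Om.mem_nhds (show x ∈ Om from hx)] with y hy
    rw [hχ]; simp only [if_neg (show y ≠ 0 from hy)]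
  have hcd : ∀ n x, x ≠ 0 → ContDiffAt ℝ (⊤ : ℕ∞) (χ n) x := by
    intro n x hx
    refine ContDiffAt.congr_of_eventuallyEq ?_ (heq n x hx)
    have h1 : ContDiffAt ℝ (⊤ : ℕ∞) (fun y : E3 => ‖y‖^2) x := (contDiff_norm_sq ℝ).contDiffAt
    exact hθ.contDiffAt.comp x (contDiffAt_const.mul (h1.log (pow_ne_zero 2 (norm_ne_zero_iff.2 hx))))
  have hzero : ∀ n x, x ∉ {x : E3 | Real.exp (-(1/κ n)) ≤ ‖x‖ ∧ ‖x‖ ≤ Real.exp (1/κ n)} → χ n x = 0 := by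
    intro n x hx
    by_cases h : x = 0
    · simp [hχ, h]
    rw [hχ]; simp only [if_neg h]
    apply hθo
    have hr : 0 < ‖x‖ := norm_pos_iff.2 h
    by_contra hc
    apply hx
    push Not at hc
    rw [Real.log_pow, abs_lt] at hc
    push_cast at hc
    have hk := hκ0 n
    constructor
    · rw [← Real.le_log_iff_exp_le hr, neg_le, le_div_iff₀ hk]; linarith
    · rw [← Real.log_le_iff_le_exp hr, le_div_iff₀ hk]; linarith
  have hKc : ∀ n, IsCompact {x : E3 | Real.exp (-(1/κ n)) ≤ ‖x‖ ∧ ‖x‖ ≤ Real.exp (1/κ n)} := fun n => annulus_compact _ _ (Real.exp_pos _)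
  have hKO : ∀ n, {x : E3 | Real.exp (-(1/κ n)) ≤ ‖x‖ ∧ ‖x‖ ≤ Real.exp (1/κ n)} ⊆ Om := by
    intro n x hx h
    rw [h] at hx; simp only [mem_ofPred_eq, norm_zero] at hx
    exact absurd hx.1 (not_le.2 (Real.exp_pos _))
  have hts : ∀ n, tsupport (χ n) ⊆ {x : E3 | Real.exp (-(1/κ n)) ≤ ‖x‖ ∧ ‖x‖ ≤ Real.exp (1/κ n)} := by
    intro n
    refine closure_minimal (fun x hx => ?_) (hKc n).isClosed
    by_contra h; exact hx (hzero n x h)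
  have hg1 : ∀ n t, t ≠ 0 → HasDerivAt (g n) (deriv θ (κ n * Real.log t) * (κ n * t⁻¹)) t := by
    intro n t ht
    exact (hd0 _).comp t ((Real.hasDerivAt_log ht).const_mul (κ n))
  refine ⟨χ, 6 * B, by positivity, ⟨fun n => contDiff_of_tsupp (hKc n).isClosed (hzero n) (fun x hx => hcd n x (hKO n hx)),
    fun n => HasCompactSupport.of_support_subset_isCompact (hKc n) (subset_closure.trans (hts n)), fun n => (hts n).trans (hKO n), ?_, ?_, ?_, ?_, ?_⟩⟩
  · intro n x; rw [hχ]; simp only; split_ifs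
    · exact le_rfl
    · exact hθ0 _
  · intro n x; rw [hχ]; simp only; split_ifs
    · exact zero_le_one
    · exact hθ1 _
  · intro n i x hx
    have hr : 0 < ‖x‖ := norm_pos_iff.2 hx
    rw [pd_congr (heq n x hx), pd_radial (hg1 n (‖x‖^2) (by positivity))]
    set D := deriv θ (κ n * Real.log (‖x‖^2))
    have hD : |D| ≤ B := hB1 _
    have hk := hκ0 n
    calc |2 * x i * (D * (κ n * (‖x‖^2)⁻¹))| = 2 * |x i| * (|D| * (κ n * (‖x‖^2)⁻¹)) := by
          rw [abs_mul, abs_mul, abs_mul, abs_of_pos (by positivity : 0 < κ n * (‖x‖^2)⁻¹), abs_of_pos two_pos]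
      _ ≤ 2 * ‖x‖ * (B * (κ n * (‖x‖^2)⁻¹)) := by gcongr; exact coord_le x i
      _ = 2 * (B * κ n * ‖x‖⁻¹) := by field_simp
      _ ≤ 6 * (B * κ n * ‖x‖⁻¹) := by gcongr; norm_num
      _ = _ := by rw [hκ]; ring
  · intro n x hx
    have hr : 0 < ‖x‖ := norm_pos_iff.2 hx
    have ht : ‖x‖^2 ≠ 0 := by positivity
    have hg2 : HasDerivAt (fun t => deriv θ (κ n * Real.log t) * (κ n * t⁻¹))
        (deriv (deriv θ) (κ n * Real.log (‖x‖^2)) * (κ n * (‖x‖^2)⁻¹) * (κ n * (‖x‖^2)⁻¹) +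
          deriv θ (κ n * Real.log (‖x‖^2)) * (κ n * (-((‖x‖^2)^2)⁻¹))) (‖x‖^2) :=
      HasDerivAt.mul ((hd1 _).comp _ ((Real.hasDerivAt_log ht).const_mul (κ n))) ((hasDerivAt_inv ht).const_mul (κ n))
    rw [lap_congr (heq n x hx), lap_radial (g' := fun t => deriv θ (κ n * Real.log t) * (κ n * t⁻¹)) ?_ hg2 ?_]
    · set D := deriv θ (κ n * Real.log (‖x‖^2))
      set D2 := deriv (deriv θ) (κ n * Real.log (‖x‖^2))
      have hD : |D| ≤ B := hB1 _
      have hD2 : |D2| ≤ B := hB2 _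
      have hk := hκ0 n
      have hk1 := hκ1 n
      have e : 4 * ‖x‖^2 * (D2 * (κ n * (‖x‖^2)⁻¹) * (κ n * (‖x‖^2)⁻¹) + D * (κ n * (-((‖x‖^2)^2)⁻¹))) + 6 * (D * (κ n * (‖x‖^2)⁻¹))
          = (4 * κ n * D2 + 2 * D) * (κ n * (‖x‖^2)⁻¹) := by field_simp; ring
      rw [e, abs_mul, abs_of_pos (by positivity : 0 < κ n * (‖x‖^2)⁻¹)]
      have e2 : |4 * κ n * D2 + 2 * D| ≤ 6 * B := by
        calc |4 * κ n * D2 + 2 * D| ≤ 4 * κ n * |D2| + 2 * |D| := by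
              refine (abs_add_le _ _).trans (le_of_eq ?_)
              rw [abs_mul (4 * κ n) D2, abs_mul 2 D, abs_of_pos (by positivity : 0 < 4 * κ n), abs_of_pos (two_pos : (0:ℝ) < 2)]
          _ ≤ 4 * 1 * B + 2 * B := by gcongr
          _ = _ := by ring
      calc |4 * κ n * D2 + 2 * D| * (κ n * (‖x‖^2)⁻¹) ≤ 6 * B * (κ n * (‖x‖^2)⁻¹) := by gcongr
        _ = _ := by rw [hκ]; ring
    · filter_upwards [isOpen_ne.mem_nhds ht] with t ht
      exact hg1 n t ht
    · exact (hθ.of_le two_le_inf).contDiffAt.comp _ (contDiffAt_const.mul (contDiffAt_id.log ht))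
  · intro x hx
    refine tendsto_const_nhds.congr' ?_
    have h1 : Tendsto (fun n => κ n * Real.log (‖x‖^2)) atTop (nhds (0 * Real.log (‖x‖^2))) := hκl.mul_const _
    rw [zero_mul] at h1
    filter_upwards [h1.eventually (Metric.ball_mem_nhds 0 one_pos)] with n hn
    rw [hχ]; simp only [if_neg hx]
    exact (hθi _ (by simpa using (mem_ball.1 hn).le)).symm

def SmO (w : E3 → ℝ) : Prop := ∀ n : ℕ, ∀ x ∈ Om, ContDiffAt ℝ n w x

theorem SmO.pd {w : E3 → ℝ} (h : SmO w) (i : Fin 3) : SmO (pd i w) := fun n x hx =>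
  pd_contDiffAt (h (n+1) x hx) (by push_cast; exact le_rfl) i

theorem SmO.mul {v w : E3 → ℝ} (hv : SmO v) (hw : SmO w) : SmO (fun x => v x * w x) := fun n x hx => (hv n x hx).mul (hw n x hx)
theorem SmO.sub {v w : E3 → ℝ} (hv : SmO v) (hw : SmO w) : SmO (fun x => v x - w x) := fun n x hx => (hv n x hx).sub (hw n x hx)
theorem SmO.pow {p : ℝ} : SmO (fun x => ‖x‖ ^ p) := fun n x hx => pow_cd hx p n
theorem SmO.const {c : ℝ} : SmO (fun _ => c) := fun n x hx => contDiffAt_const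
theorem SmO.of {w : E3 → ℝ} (h : ContDiff ℝ (⊤ : ℕ∞) w) : SmO w := fun n x hx => (h.of_le (nat_le_inf n)).contDiffAt
theorem SmO.cont {w : E3 → ℝ} (h : SmO w) : ContinuousOn w Om := fun x hx => (h 0 x hx).continuousAt.continuousWithinAt
theorem SmO.c2 {w : E3 → ℝ} (h : SmO w) : ∀ x ∈ Om, ContDiffAt ℝ 2 w x := fun x hx => h 2 x hx
theorem SmO.diff {w : E3 → ℝ} (h : SmO w) : ∀ x ∈ Om, DifferentiableAt ℝ w x := fun x hx => (h 1 x hx).differentiableAt (by norm_num)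

theorem SmO.lap_eq {w : E3 → ℝ} (h : SmO w) : ∀ x ∈ Om, lap w x = ∑ i, _root_.pd i (_root_.pd i w) x := fun x hx => lap_eq_pd (c2_diff (h.c2 x hx))

theorem SmO.lap_ev {w : E3 → ℝ} (h : SmO w) {x : E3} (hx : x ∈ Om) : lap w =ᶠ[nhds x] fun y => ∑ i, _root_.pd i (_root_.pd i w) y := by
  filter_upwards [isOpen_Om.mem_nhds hx] with y hy using h.lap_eq y hy

theorem SmO.lap {w : E3 → ℝ} (h : SmO w) : SmO (lap w) := fun n x hx =>
  (ContDiffAt.sum fun i _ => (h.pd i).pd i n x hx).congr_of_eventuallyEq (h.lap_ev hx)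

theorem pd_comm {w : E3 → ℝ} {x : E3} (h : ContDiffAt ℝ 2 w x) (i j : Fin 3) : pd i (pd j w) x = pd j (pd i w) x := by
  have hs : IsSymmSndFDerivAt ℝ w x := h.isSymmSndFDerivAt (by simp)
  have := hs (ee i) (ee j)
  rw [pd, fderiv_pd (c2_diff h), pd, fderiv_pd (c2_diff h)]
  exact this

theorem pd_sum {f : Fin 3 → E3 → ℝ} {x : E3} (h : ∀ i, DifferentiableAt ℝ (f i) x) (k : Fin 3) :
    pd k (fun y => ∑ i, f i y) x = ∑ i, pd k (f i) x := by
  rw [pd, fderiv_fun_sum fun i _ => h i]; simp [pd]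

theorem lap_pd {w : E3 → ℝ} (h : SmO w) {x : E3} (hx : x ∈ Om) (i : Fin 3) : lap (pd i w) x = pd i (lap w) x := by
  rw [pd_congr (h.lap_ev hx), pd_sum (fun j => ((h.pd j).pd j).diff x hx), (h.pd i).lap_eq x hx]
  refine Finset.sum_congr rfl fun j _ => ?_
  rw [pd_comm ((h.pd j).c2 x hx)]
  refine pd_congr ?_ j
  filter_upwards [isOpen_Om.mem_nhds hx] with y hy
  exact pd_comm (h.c2 y hy) j i

theorem int_ts {f a : E3 → ℝ} (hf : ContinuousOn f Om) (ha : Continuous a) (hac : HasCompactSupport a) (has : tsupport a ⊆ Om) :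
    Integrable (fun x => f x * a x) := by
  have hc : Continuous (fun x => f x * a x) := by
    rw [continuous_iff_continuousAt]
    intro x
    by_cases hx : x ∈ tsupport a
    · exact (hf.continuousAt (isOpen_Om.mem_nhds (has hx))).mul ha.continuousAt
    · exact contAt_of_notMem (isClosed_tsupport a) (fun y hy => by simp [image_eq_zero_of_notMem_tsupport hy]) hx
  exact hc.integrable_of_hasCompactSupport hac.mul_left

def wt (χ : E3 → ℝ) (p : ℝ) (x : E3) : ℝ := χ x * ‖x‖ ^ p

theorem wt_ts (χ : E3 → ℝ) (p : ℝ) : tsupport (wt χ p) ⊆ tsupport χ := tsupport_mul_subset_left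

theorem wt_sm {χ : E3 → ℝ} (h : ContDiff ℝ (⊤ : ℕ∞) χ) (hs : tsupport χ ⊆ Om) (p : ℝ) : ContDiff ℝ (⊤ : ℕ∞) (wt χ p) :=
  contDiff_of_tsupp (isClosed_tsupport χ) (fun x hx => by simp [wt, image_eq_zero_of_notMem_tsupport hx])
    (fun x hx => h.contDiffAt.mul (pow_cd (hs hx) p _))

theorem lap_ts (a : E3 → ℝ) : tsupport (lap a) ⊆ tsupport a := by
  refine closure_minimal (fun x hx => ?_) (isClosed_tsupport a)
  by_contra h; exact hx (lap_zero_of_notMem h)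

theorem ident1 {w a : E3 → ℝ} (hw : SmO w) (ha : ContDiff ℝ (⊤ : ℕ∞) a) (hac : HasCompactSupport a) (has : tsupport a ⊆ Om) :
    Integrable (fun x => (∑ i, (pd i w x)^2 + w x * lap w x) * a x - w x * w x / 2 * lap a x) ∧
    ∫ x, (∑ i, (pd i w x)^2 + w x * lap w x) * a x - w x * w x / 2 * lap a x = 0 := by
  have hww := hw.mul hw
  have h1 : ContinuousOn (fun x => ∑ i, (pd i w x)^2 + w x * lap w x) Om :=
    (continuousOn_finsetSum _ fun i _ => (hw.pd i).cont.pow 2).add (hw.mul hw.lap).cont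
  have hi1 := int_ts h1 ha.continuous hac has
  have hi2 := int_ts (hww.cont.div_const 2) (lap_smooth ha).continuous (lap_cs hac) ((lap_ts a).trans has)
  refine ⟨hi1.sub hi2, ?_⟩
  rw [integral_sub hi1 hi2]
  have e := weak_form (n := ee 0) (u := fun x => w x * w x) (f := fun x => 2 * (∑ i, (pd i w x)^2 + w x * lap w x)) (by simp)
    (fun x hx => (hww 1 x hx).contDiffWithinAt) (h1.const_mul 2 |> fun h => h) (fun x hx _ => ⟨c2_diff (hww.c2 x hx), ?_⟩)
    (ha.of_le two_le_inf) hac has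
  · have e2 : ∫ x, w x * w x / 2 * lap a x = 1/2 * ∫ x, w x * w x * lap a x := by
      rw [← integral_const_mul]; congr 1; funext x; ring
    have e3 : ∫ x, 2 * (∑ i, (pd i w x)^2 + w x * lap w x) * a x = 2 * ∫ x, (∑ i, (pd i w x)^2 + w x * lap w x) * a x := by
      rw [← integral_const_mul]; congr 1; funext x; ring
    rw [e2, e, e3]; ring
  · rw [lap_mul (hw.c2 x hx) (hw.c2 x hx)]
    simp only [← pow_two]; ring

theorem ibp {f g : E3 → ℝ} (hf : SmO f) (hg : ContDiff ℝ (⊤ : ℕ∞) g) (hgc : HasCompactSupport g) (hgs : tsupport g ⊆ Om) (i : Fin 3) :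
    Integrable (fun x => f x * pd i g x + pd i f x * g x) ∧ ∫ x, f x * pd i g x + pd i f x * g x = 0 := by
  have hts : tsupport (pd i g) ⊆ tsupport g := by
    refine closure_minimal (fun x hx => ?_) (isClosed_tsupport g)
    by_contra h; exact hx (by simp [pd, fderiv_zero_of_notMem h])
  have h1 := int_ts hf.cont (pd_smooth hg i).continuous (pd_cs hgc i) (hts.trans hgs)
  have h2 := int_ts (hf.pd i).cont hg.continuous hgc hgs
  refine ⟨h1.add h2, ?_⟩
  rw [integral_add h1 h2]
  have := integral_mul_fderiv_eq_neg_fderiv_mul_of_integrable (μ := volume) (v := ee i) (f := f) (g := g) h2 h1 (int_ts hf.cont hg.continuous hgc hgs)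
    (fun x hx => hf.diff x (hgs hx)) (fun x _ => hg.differentiable (by simp) x)
  simp only [pd] at this ⊢
  rw [this]; ring

theorem restrict_Om : (volume : Measure E3).restrict Om = volume := by
  rw [Measure.restrict_eq_self_of_ae_mem]
  exact ae_ne0

theorem aesm_of_cont {f : E3 → ℝ} (h : ContinuousOn f Om) : AEStronglyMeasurable f volume := by
  have := h.aestronglyMeasurable isOpen_Om.measurableSet (μ := volume)
  rwa [restrict_Om] at this

theorem cut_est {χ : ℕ → E3 → ℝ} {B : ℝ} (hc : Cut χ B) {F G : E3 → ℝ} {I : ℕ → E3 → ℝ} (hF : ContinuousOn F Om) (hF0 : ∀ x, x ≠ 0 → 0 ≤ F x)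
    (hI : ∀ n, Integrable (I n)) (hI0 : ∀ n, ∫ x, I n x = 0) (hG : Integrable G) (hle : ∀ n x, x ≠ 0 → F x * χ n x ≤ I n x + G x) :
    Integrable F ∧ ∫ x, F x ≤ ∫ x, G x := by
  have hFm := aesm_of_cont hF
  have hFχ : ∀ n, Integrable (fun x => F x * χ n x) := fun n => int_ts hF (hc.sm n).continuous (hc.cs n) (hc.ts n)
  have h1 : ∀ n, ∫ x, F x * χ n x ≤ ∫ x, G x := by
    intro n
    calc ∫ x, F x * χ n x ≤ ∫ x, (I n x + G x) := integral_mono_ae (hFχ n) ((hI n).add hG) (by filter_upwards [ae_ne0] with x hx using hle n x hx)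
      _ = _ := by rw [integral_add (hI n) hG, hI0, zero_add]
  have hnn : ∀ n, 0 ≤ᵐ[volume] fun x => F x * χ n x := fun n => by
    filter_upwards [ae_ne0] with x hx using mul_nonneg (hF0 x hx) (hc.nn n x)
  have hG0 : 0 ≤ ∫ x, G x := (integral_nonneg_of_ae (hnn 0)).trans (h1 0)
  have h2 : ∫⁻ x, ENNReal.ofReal (F x) ≤ ENNReal.ofReal (∫ x, G x) := by
    calc ∫⁻ x, ENNReal.ofReal (F x) = ∫⁻ x, liminf (fun n => ENNReal.ofReal (F x * χ n x)) atTop := by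
          refine lintegral_congr_ae ?_
          filter_upwards [ae_ne0] with x hx
          have : Tendsto (fun n => ENNReal.ofReal (F x * χ n x)) atTop (nhds (ENNReal.ofReal (F x * 1))) :=
            (ENNReal.continuous_ofReal.tendsto _).comp ((hc.lim x hx).const_mul _)
          rw [this.liminf_eq, mul_one]
      _ ≤ liminf (fun n => ∫⁻ x, ENNReal.ofReal (F x * χ n x)) atTop := lintegral_liminf_le' fun n => (hFχ n).aestronglyMeasurable.aemeasurable.ennreal_ofReal
      _ ≤ ENNReal.ofReal (∫ x, G x) := by
          refine liminf_le_of_frequently_le' (Frequently.of_forall fun n => ?_)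
          rw [← ofReal_integral_eq_lintegral_ofReal (hFχ n) (hnn n)]
          exact ENNReal.ofReal_le_ofReal (h1 n)
  have hFnn : 0 ≤ᵐ[volume] F := by filter_upwards [ae_ne0] with x hx using hF0 x hx
  have hFi : Integrable F := ⟨hFm, by
    rw [hasFiniteIntegral_iff_ofReal hFnn]
    exact h2.trans_lt ENNReal.ofReal_lt_top⟩
  refine ⟨hFi, ?_⟩
  rw [← ofReal_integral_eq_lintegral_ofReal hFi hFnn] at h2
  exact (ENNReal.ofReal_le_ofReal_iff hG0).1 h2

theorem div_le_self' {B : ℝ} (hB : 0 ≤ B) (n : ℕ) : B / ((n:ℝ)+1) ≤ B := div_le_self hB (by linarith [Nat.cast_nonneg (α := ℝ) n])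

theorem wt_pd {χ : ℕ → E3 → ℝ} {B : ℝ} (hB : 0 ≤ B) (hc : Cut χ B) (p : ℝ) (n : ℕ) (i : Fin 3) {x : E3} (hx : x ≠ 0) :
    |pd i (wt (χ n) p) x| ≤ (B + |p|) * ‖x‖^(p-1) := by
  have hr := norm_pos_iff.2 hx
  have hχ : ContDiffAt ℝ 2 (χ n) x := ((hc.sm n).of_le two_le_inf).contDiffAt
  have e : pd i (wt (χ n) p) x = pd i (χ n) x * ‖x‖^p + χ n x * (p * x i * ‖x‖^(p-2)) := by
    have := pd_mul (hχ.differentiableAt (by norm_num)) ((pow_cd hx p 1).differentiableAt (by norm_num)) i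
    rw [pd_pow hx] at this
    rw [← this]; rfl
  rw [e]
  have h1 : |pd i (χ n) x| ≤ B * ‖x‖⁻¹ := (hc.d1 n i x hx).trans (by gcongr; exact div_le_self' hB n)
  have h2 : |χ n x| ≤ 1 := by rw [abs_of_nonneg (hc.nn n x)]; exact hc.le n x
  have e1 : ‖x‖⁻¹ * ‖x‖^p = ‖x‖^(p-1) := by rw [Real.rpow_sub hr, Real.rpow_one]; field_simp
  have e2 : ‖x‖ * ‖x‖^(p-2) = ‖x‖^(p-1) := by
    rw [show p - 1 = 1 + (p-2) by ring, Real.rpow_add hr, Real.rpow_one]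
  calc |pd i (χ n) x * ‖x‖^p + χ n x * (p * x i * ‖x‖^(p-2))| ≤ |pd i (χ n) x| * ‖x‖^p + |χ n x| * (|p| * |x i| * ‖x‖^(p-2)) := by
        refine (abs_add_le _ _).trans (le_of_eq ?_)
        simp only [abs_mul, abs_of_pos (Real.rpow_pos_of_pos hr _)]
    _ ≤ B * ‖x‖⁻¹ * ‖x‖^p + 1 * (|p| * ‖x‖ * ‖x‖^(p-2)) := by gcongr; exact coord_le x i
    _ = _ := by rw [mul_assoc, e1, mul_assoc, e2]; ring

def CC (B p : ℝ) : ℝ := B + 6 * B * |p| + |p * (p+1)| + |p|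

theorem CC_nonneg {B : ℝ} (hB : 0 ≤ B) (p : ℝ) : 0 ≤ CC B p := by unfold CC; positivity

theorem wt_pd' {χ : ℕ → E3 → ℝ} {B : ℝ} (hB : 0 ≤ B) (hc : Cut χ B) (p : ℝ) (n : ℕ) (i : Fin 3) {x : E3} (hx : x ≠ 0) :
    |pd i (wt (χ n) p) x| ≤ CC B p * ‖x‖^(p-1) := by
  refine (wt_pd hB hc p n i hx).trans ?_
  gcongr
  unfold CC
  have : 0 ≤ 6 * B * |p| + |p * (p+1)| := by positivity
  linarith

theorem wt_lap {χ : ℕ → E3 → ℝ} {B : ℝ} (hB : 0 ≤ B) (hc : Cut χ B) (p : ℝ) (n : ℕ) {x : E3} (hx : x ≠ 0) :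
    |lap (wt (χ n) p) x| ≤ CC B p * ‖x‖^(p-2) := by
  have hr := norm_pos_iff.2 hx
  have hχ : ContDiffAt ℝ 2 (χ n) x := ((hc.sm n).of_le two_le_inf).contDiffAt
  have e : lap (wt (χ n) p) x = lap (χ n) x * ‖x‖^p + 2 * (∑ i, pd i (χ n) x * (p * x i * ‖x‖^(p-2))) + χ n x * (p*(p+1)*‖x‖^(p-2)) := by
    have := lap_mul hχ (pow_cd hx p 2)
    rw [lap_pow hx] at this
    simp only [pd_pow hx] at this
    rw [← this]; rfl
  rw [e]
  have h0 : |lap (χ n) x| ≤ B * (‖x‖^2)⁻¹ := (hc.d2 n x hx).trans (by gcongr; exact div_le_self' hB n)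
  have h1 : ∀ i, |pd i (χ n) x| ≤ B * ‖x‖⁻¹ := fun i => (hc.d1 n i x hx).trans (by gcongr; exact div_le_self' hB n)
  have h2 : |χ n x| ≤ 1 := by rw [abs_of_nonneg (hc.nn n x)]; exact hc.le n x
  have e1 : (‖x‖^2)⁻¹ * ‖x‖^p = ‖x‖^(p-2) := by rw [Real.rpow_sub hr, Real.rpow_two]; field_simp
  have hs : |∑ i, pd i (χ n) x * (p * x i * ‖x‖^(p-2))| ≤ 3 * (B * |p| * ‖x‖^(p-2)) := by
    refine (Finset.abs_sum_le_sum_abs _ _).trans ?_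
    calc ∑ i, |pd i (χ n) x * (p * x i * ‖x‖^(p-2))| ≤ ∑ i : Fin 3, B * |p| * ‖x‖^(p-2) := by
          refine Finset.sum_le_sum fun i _ => ?_
          rw [abs_mul, abs_mul, abs_mul, abs_of_pos (Real.rpow_pos_of_pos hr _)]
          calc |pd i (χ n) x| * (|p| * |x i| * ‖x‖^(p-2)) ≤ (B * ‖x‖⁻¹) * (|p| * ‖x‖ * ‖x‖^(p-2)) := by
                gcongr
                · exact h1 i
                · exact coord_le x i
            _ = _ := by field_simp
      _ = _ := by simp
  have hpp := Real.rpow_pos_of_pos hr (p-2)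
  calc |lap (χ n) x * ‖x‖^p + 2 * (∑ i, pd i (χ n) x * (p * x i * ‖x‖^(p-2))) + χ n x * (p*(p+1)*‖x‖^(p-2))|
      ≤ |lap (χ n) x| * ‖x‖^p + 2 * |∑ i, pd i (χ n) x * (p * x i * ‖x‖^(p-2))| + |χ n x| * (|p * (p+1)| * ‖x‖^(p-2)) := by
        refine (abs_add_three _ _ _).trans (le_of_eq ?_)
        rw [abs_mul, abs_mul 2, abs_mul (χ n x), abs_mul (p*(p+1)), abs_of_pos hpp, abs_of_pos (Real.rpow_pos_of_pos hr p), abs_of_pos (two_pos : (0:ℝ) < 2)]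
    _ ≤ B * (‖x‖^2)⁻¹ * ‖x‖^p + 2 * (3 * (B * |p| * ‖x‖^(p-2))) + 1 * (|p * (p+1)| * ‖x‖^(p-2)) := by gcongr
    _ = (B + 6 * B * |p| + |p * (p+1)|) * ‖x‖^(p-2) := by rw [mul_assoc, e1]; ring
    _ ≤ _ := by gcongr; unfold CC; linarith [abs_nonneg p]

theorem wt_nn {χ : ℕ → E3 → ℝ} {B : ℝ} (hc : Cut χ B) (p : ℝ) (n : ℕ) (x : E3) : 0 ≤ wt (χ n) p x := mul_nonneg (hc.nn n x) (by positivity)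

theorem wt_le {χ : ℕ → E3 → ℝ} {B : ℝ} (hc : Cut χ B) (p : ℝ) (n : ℕ) (x : E3) : wt (χ n) p x ≤ ‖x‖^p :=
  mul_le_of_le_one_left (by positivity) (hc.le n x)

theorem pw_amgm {r q a b : ℝ} (hr : 0 < r) : |a * b| * r^q ≤ (a^2 * r^(q-2) + b^2 * r^(q+2))/2 * 1 ∧ |a*b| * r^q ≤ (a^2 * r^(q-1) + b^2 * r^(q+1))/2 * 1 := by
  have key : ∀ s : ℝ, |a * b| * r^q ≤ (a^2 * r^(q-2*s) + b^2 * r^(q+2*s))/2 := by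
    intro s
    have e1 : r^(q-2*s) = r^q * (r^(-s))^2 := by
      rw [← Real.rpow_natCast, ← Real.rpow_mul hr.le, ← Real.rpow_add hr]; congr 1; push_cast; ring
    have e2 : r^(q+2*s) = r^q * (r^s)^2 := by
      rw [← Real.rpow_natCast, ← Real.rpow_mul hr.le, ← Real.rpow_add hr]; congr 1; push_cast; ring
    have e3 : r^(-s) * r^s = 1 := by rw [← Real.rpow_add hr]; simp
    have hq := Real.rpow_pos_of_pos hr q
    rw [e1, e2, abs_mul, ← sq_abs a, ← sq_abs b]
    have : |a| * |b| = (|a| * r^(-s)) * (|b| * r^s) := by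
      rw [show (|a| * r^(-s)) * (|b| * r^s) = |a| * |b| * (r^(-s) * r^s) by ring, e3, mul_one]
    rw [this]
    have := mul_nonneg hq.le (sq_nonneg (|a| * r^(-s) - |b| * r^s))
    nlinarith
  constructor
  · have := key 1; simpa using this
  · have := key (1/2); rw [mul_one]; convert this using 5 <;> ring

theorem est1 {χ : ℕ → E3 → ℝ} {B : ℝ} (hB : 0 ≤ B) (hc : Cut χ B) {w : E3 → ℝ} {q : ℝ} (hw : SmO w)
    (h0 : Integrable (fun x => (w x)^2 * ‖x‖^(q-2))) (h2 : Integrable (fun x => (lap w x)^2 * ‖x‖^(q+2))) :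
    Integrable (fun x => (∑ i, (pd i w x)^2) * ‖x‖^q) ∧
    ∫ x, (∑ i, (pd i w x)^2) * ‖x‖^q ≤ (1 + CC B q) * (∫ x, ((w x)^2 * ‖x‖^(q-2) + (lap w x)^2 * ‖x‖^(q+2))) := by
  rw [← integral_const_mul]
  have hC := CC_nonneg hB q
  refine cut_est hc (I := fun n x => (∑ i, (pd i w x)^2 + w x * lap w x) * wt (χ n) q x - w x * w x / 2 * lap (wt (χ n) q) x) ?_ ?_
    (fun n => ?_) (fun n => ?_) ((h0.add h2).const_mul (1 + CC B q)) ?_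
  · exact (continuousOn_finsetSum _ fun i _ => (hw.pd i).cont.pow 2).mul (SmO.pow (p := q)).cont
  · intro x hx
    exact mul_nonneg (Finset.sum_nonneg fun i _ => sq_nonneg _) (by positivity)
  · exact (ident1 hw (wt_sm (hc.sm n) (hc.ts n) q) ((hc.cs n).mul_right) ((wt_ts _ _).trans (hc.ts n))).1
  · exact (ident1 hw (wt_sm (hc.sm n) (hc.ts n) q) ((hc.cs n).mul_right) ((wt_ts _ _).trans (hc.ts n))).2
  · intro n x hx
    have hr := norm_pos_iff.2 hx
    have e : (∑ i, (pd i w x)^2) * ‖x‖^q * χ n x = (∑ i, (pd i w x)^2) * wt (χ n) q x := by rw [wt]; ring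
    rw [e]
    have a1 := (pw_amgm (q := q) (a := w x) (b := lap w x) hr).1
    have a2 := wt_lap hB hc q n hx
    have a3 : |w x * lap w x| * wt (χ n) q x ≤ |w x * lap w x| * ‖x‖^q := by gcongr; exact wt_le hc q n x
    have a4 : -(w x * lap w x) * wt (χ n) q x ≤ |w x * lap w x| * wt (χ n) q x := by
      gcongr
      · exact wt_nn hc q n x
      · exact neg_le_abs _
    have a5 : w x * w x / 2 * lap (wt (χ n) q) x ≤ w x * w x / 2 * (CC B q * ‖x‖^(q-2)) := by
      refine mul_le_mul_of_nonneg_left ((le_abs_self _).trans a2) (by nlinarith [sq_nonneg (w x)])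
    have p1 : 0 ≤ (w x)^2 * ‖x‖^(q-2) := by positivity
    have p2 : 0 ≤ (lap w x)^2 * ‖x‖^(q+2) := by positivity
    nlinarith [mul_nonneg hC p1, mul_nonneg hC p2]

theorem est2 {χ : ℕ → E3 → ℝ} {B : ℝ} (hB : 0 ≤ B) (hc : Cut χ B) {w : E3 → ℝ} {q : ℝ} (hw : SmO w) (i : Fin 3)
    (h1 : Integrable (fun x => (pd i w x)^2 * ‖x‖^q)) (h2 : Integrable (fun x => (lap w x)^2 * ‖x‖^(q+2))) :
    Integrable (fun x => (∑ j, (pd j (pd i w) x)^2) * ‖x‖^(q+2)) ∧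
    ∫ x, (∑ j, (pd j (pd i w) x)^2) * ‖x‖^(q+2) ≤ (2 + 2 * CC B (q+2)) * (∫ x, ((pd i w x)^2 * ‖x‖^q + (lap w x)^2 * ‖x‖^(q+2))) := by
  rw [← integral_const_mul]
  have hC := CC_nonneg hB (q+2)
  set v := pd i w with hv
  have hvs : SmO v := hw.pd i
  have hb : ∀ n, ContDiff ℝ (⊤ : ℕ∞) (wt (χ n) (q+2)) := fun n => wt_sm (hc.sm n) (hc.ts n) (q+2)
  have hbc : ∀ n, HasCompactSupport (wt (χ n) (q+2)) := fun n => (hc.cs n).mul_right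
  have hbs : ∀ n, tsupport (wt (χ n) (q+2)) ⊆ Om := fun n => (wt_ts _ _).trans (hc.ts n)
  have hg : ∀ n, ContDiff ℝ (⊤ : ℕ∞) (fun x => v x * wt (χ n) (q+2) x) := fun n =>
    contDiff_of_tsupp (isClosed_tsupport (wt (χ n) (q+2))) (fun x hx => by simp [image_eq_zero_of_notMem_tsupport hx])
      (fun x hx => (contDiffAt_infty.2 fun k => hvs k x (hbs n hx)).mul (hb n).contDiffAt)
  have I1 := fun n => ident1 hvs (hb n) (hbc n) (hbs n)
  have I2 := fun n => ibp hw.lap (hg n) ((hbc n).mul_left) ((tsupport_mul_subset_right).trans (hbs n)) i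
  refine cut_est hc (I := fun n x => 2 * (((∑ i, (pd i v x)^2 + v x * lap v x) * wt (χ n) (q+2) x - v x * v x / 2 * lap (wt (χ n) (q+2)) x)
     - (lap w x * pd i (fun x => v x * wt (χ n) (q+2) x) x + pd i (lap w) x * (v x * wt (χ n) (q+2) x)))) ?_ ?_
    (fun n => ?_) (fun n => ?_) ((h1.add h2).const_mul (2 + 2 * CC B (q+2))) ?_
  · exact (continuousOn_finsetSum _ fun j _ => (hvs.pd j).cont.pow 2).mul (SmO.pow (p := q+2)).cont
  · intro x hx
    exact mul_nonneg (Finset.sum_nonneg fun i _ => sq_nonneg _) (by positivity)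
  · exact ((I1 n).1.sub (I2 n).1).const_mul 2
  · rw [integral_const_mul, integral_sub (I1 n).1 (I2 n).1, (I1 n).2, (I2 n).2]; simp
  · intro n x hx
    have hr := norm_pos_iff.2 hx
    have e : (∑ j, (pd j v x)^2) * ‖x‖^(q+2) * χ n x = (∑ j, (pd j v x)^2) * wt (χ n) (q+2) x := by rw [wt]; ring
    have e2 : lap v x = pd i (lap w) x := lap_pd hw hx i
    have e3 : pd i (fun x => v x * wt (χ n) (q+2) x) x = pd i v x * wt (χ n) (q+2) x + v x * pd i (wt (χ n) (q+2)) x :=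
      pd_mul (hvs.diff x hx) ((hb n).differentiable (by simp) x) i
    rw [e, e2, e3]
    set S := ∑ j, (pd j v x)^2 with hS
    set b := wt (χ n) (q+2) x with hbb
    have b0 : 0 ≤ b := wt_nn hc _ n x
    have b1 : b ≤ ‖x‖^(q+2) := wt_le hc _ n x
    have S1 : (pd i v x)^2 ≤ S := Finset.single_le_sum (f := fun j => (pd j v x)^2) (fun j _ => sq_nonneg _) (Finset.mem_univ i)
    have a0 : lap w x * pd i v x * b ≤ (S + (lap w x)^2)/2 * b := by
      gcongr; nlinarith [sq_nonneg (lap w x - pd i v x)]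
    have a0' : (lap w x)^2 * b ≤ (lap w x)^2 * ‖x‖^(q+2) := by gcongr
    have a1 := (pw_amgm (q := q+1) (a := v x) (b := lap w x) hr).2
    rw [show q + 1 - 1 = q by ring, show q + 1 + 1 = q+2 by ring] at a1
    have a2 := wt_lap hB hc (q+2) n hx
    have a3 := wt_pd' hB hc (q+2) n i hx
    rw [show q + 2 - 1 = q+1 by ring] at a3
    rw [show q + 2 - 2 = q by ring] at a2
    set C := CC B (q+2)
    have a4 : lap w x * v x * pd i (wt (χ n) (q+2)) x ≤ C * ((v x ^ 2 * ‖x‖^q + lap w x ^ 2 * ‖x‖^(q+2)) / 2) := by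
      calc lap w x * v x * pd i (wt (χ n) (q+2)) x ≤ |lap w x * v x * pd i (wt (χ n) (q+2)) x| := le_abs_self _
        _ = |v x * lap w x| * |pd i (wt (χ n) (q+2)) x| := by rw [abs_mul, mul_comm (lap w x)]
        _ ≤ |v x * lap w x| * (C * ‖x‖^(q+1)) := by gcongr
        _ = C * (|v x * lap w x| * ‖x‖^(q+1)) := by ring
        _ ≤ _ := by rw [mul_one] at a1; gcongr
    have a5 : v x * v x / 2 * lap (wt (χ n) (q+2)) x ≤ v x * v x / 2 * (C * ‖x‖^q) := by
      refine mul_le_mul_of_nonneg_left ((le_abs_self _).trans a2) (by nlinarith [sq_nonneg (v x)])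
    have p1 : 0 ≤ (v x)^2 * ‖x‖^q := by positivity
    have p2 : 0 ≤ (lap w x)^2 * ‖x‖^(q+2) := by positivity
    have p3 := mul_nonneg hC p1
    have p4 := mul_nonneg hC p2
    have : v x * v x / 2 * (C * ‖x‖^q) = C * ((v x)^2 * ‖x‖^q) / 2 := by ring
    nlinarith

theorem clm_le {F : Type*} [NormedAddCommGroup F] [NormedSpace ℝ F] (L : E3 →L[ℝ] F) : ‖L‖ ≤ ∑ i, ‖L (ee i)‖ := by
  refine L.opNorm_le_bound (Finset.sum_nonneg fun i _ => norm_nonneg _) fun x => ?_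
  have e : x = ∑ i, x i • ee i := by
    ext j; fin_cases j <;> simp [ee, Fin.sum_univ_three]
  calc ‖L x‖ = ‖∑ i, x i • L (ee i)‖ := by conv_lhs => rw [e, map_sum]
                                           simp only [map_smul]
    _ ≤ ∑ i, ‖x i • L (ee i)‖ := norm_sum_le _ _
    _ ≤ ∑ i, ‖L (ee i)‖ * ‖x‖ := Finset.sum_le_sum fun i _ => by
        rw [norm_smul, mul_comm, Real.norm_eq_abs]; gcongr; exact coord_le x i
    _ = _ := by rw [Finset.sum_mul]

theorem sum3_sq (a : Fin 3 → ℝ) : (∑ i, a i)^2 ≤ 3 * ∑ i, (a i)^2 := by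
  simp only [Fin.sum_univ_three]; nlinarith [sq_nonneg (a 0 - a 1), sq_nonneg (a 0 - a 2), sq_nonneg (a 1 - a 2)]

theorem d1_le (w : E3 → ℝ) (x : E3) : ‖iteratedFDeriv ℝ 1 w x‖^2 ≤ 3 * ∑ i, (pd i w x)^2 := by
  rw [norm_iteratedFDeriv_one]
  refine (pow_le_pow_left₀ (norm_nonneg _) (clm_le _) 2).trans ((sum3_sq _).trans (le_of_eq ?_))
  simp [pd, Real.norm_eq_abs]

theorem d2_le {w : E3 → ℝ} {x : E3} (h : ContDiffAt ℝ 2 w x) : ‖iteratedFDeriv ℝ 2 w x‖^2 ≤ 9 * ∑ i, ∑ j, (pd j (pd i w) x)^2 := by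
  rw [← norm_iteratedFDeriv_fderiv, norm_iteratedFDeriv_one]
  refine (pow_le_pow_left₀ (norm_nonneg _) (clm_le _) 2).trans ((sum3_sq _).trans ?_)
  have : ∀ j, ‖fderiv ℝ (fderiv ℝ w) x (ee j)‖^2 ≤ 3 * ∑ i, (pd j (pd i w) x)^2 := by
    intro j
    refine (pow_le_pow_left₀ (norm_nonneg _) (clm_le _) 2).trans ((sum3_sq _).trans (le_of_eq ?_))
    congr 1
    refine Finset.sum_congr rfl fun i _ => ?_
    rw [Real.norm_eq_abs, sq_abs, pd, fderiv_pd (c2_diff h)]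
  calc 3 * ∑ j, ‖fderiv ℝ (fderiv ℝ w) x (ee j)‖^2 ≤ 3 * ∑ j, (3 * ∑ i, (pd j (pd i w) x)^2) := by gcongr; exact this _
    _ = _ := by rw [← Finset.mul_sum, Finset.sum_comm]; ring

theorem wL2_le {δ : ℝ} {f G : E3 → ℝ} (hG : Integrable G) (hle : ∀ x, x ≠ 0 → (f x)^2 * ‖x‖^(-2*δ-3) ≤ G x) :
    wL2norm δ f ≤ ENNReal.ofReal (Real.sqrt (∫ x, G x)) := by
  have hG0 : 0 ≤ᵐ[volume] G := by
    filter_upwards [ae_ne0] with x hx using le_trans (by positivity) (hle x hx)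
  unfold wL2norm
  rw [Real.sqrt_eq_rpow, ← ENNReal.ofReal_rpow_of_nonneg (integral_nonneg_of_ae hG0) (by norm_num), ofReal_integral_eq_lintegral_ofReal hG hG0]
  refine ENNReal.rpow_le_rpow ?_ (by norm_num)
  refine (setLIntegral_mono_ae' isOpen_Om.measurableSet (ae_of_all _ fun x hx => ?_)).trans (setLIntegral_le_lintegral _ _)
  have hr : 0 < ‖x‖ := norm_pos_iff.2 hx
  refine le_trans (le_of_eq ?_) (ENNReal.ofReal_le_ofReal (hle x hx))
  rw [ENNReal.ofReal_mul (sq_nonneg _), ← ENNReal.ofReal_rpow_of_pos hr, ofReal_norm, ← sq_abs, ← Real.norm_eq_abs, ← Real.rpow_two,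
    ← ENNReal.ofReal_rpow_of_nonneg (norm_nonneg _) (by norm_num), ofReal_norm]
  rfl

theorem est_final (δ : ℝ) : ∃ K, 0 ≤ K ∧ ∀ w : E3 → ℝ, SmO w → Integrable (fun x => (w x)^2 * ‖x‖^(-2*δ-3)) →
    Integrable (fun x => (lap w x)^2 * ‖x‖^(-2*δ+1)) →
    wHnorm 2 δ w ≤ ENNReal.ofReal (K * Real.sqrt (∫ x, ((w x)^2 * ‖x‖^(-2*δ-3) + (lap w x)^2 * ‖x‖^(-2*δ+1)))) := by
  obtain ⟨χ, B, hB, hc⟩ := cut_exists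
  set q := -2*δ-1 with hq
  have q1 : -2*δ-3 = q-2 := by rw [hq]; ring
  have q2 : -2*δ+1 = q+2 := by rw [hq]; ring
  have C1 := CC_nonneg hB q
  have C2 := CC_nonneg hB (q+2)
  set c1 := 1 + CC B q with hc1
  set c2 := (2 + 2 * CC B (q+2)) * (c1 + 1) with hc2
  have c1p : 0 ≤ c1 := by positivity
  have c2p : 0 ≤ c2 := by positivity
  refine ⟨1 + Real.sqrt (3 * c1) + Real.sqrt (27 * c2), by positivity, fun w hw h0 h2 => ?_⟩
  rw [q1, q2] at *
  set M := ∫ x, ((w x)^2 * ‖x‖^(q-2) + (lap w x)^2 * ‖x‖^(q+2)) with hM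
  have hM' : M = (∫ x, (w x)^2 * ‖x‖^(q-2)) + ∫ x, (lap w x)^2 * ‖x‖^(q+2) := integral_add h0 h2
  have n0 : 0 ≤ ∫ x, (w x)^2 * ‖x‖^(q-2) := integral_nonneg fun x => by positivity
  have n2 : 0 ≤ ∫ x, (lap w x)^2 * ‖x‖^(q+2) := integral_nonneg fun x => by positivity
  have hM0 : 0 ≤ M := by rw [hM']; positivity
  obtain ⟨i1, e1⟩ := est1 hB hc hw h0 h2
  have hpi : ∀ i, Integrable (fun x => (pd i w x)^2 * ‖x‖^q) := fun i => by
    refine i1.mono' (aesm_of_cont (((hw.pd i).cont.pow 2).mul (SmO.pow (p := q)).cont)) (ae_of_all _ fun x => ?_)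
    rw [Real.norm_of_nonneg (by positivity)]
    gcongr
    exact Finset.single_le_sum (f := fun j => (pd j w x)^2) (fun j _ => sq_nonneg _) (Finset.mem_univ i)
  have hpi2 : ∀ i, ∫ x, (pd i w x)^2 * ‖x‖^q ≤ c1 * M := fun i => by
    refine (integral_mono (hpi i) i1 fun x => ?_).trans e1
    dsimp only
    gcongr
    exact Finset.single_le_sum (f := fun j => (pd j w x)^2) (fun j _ => sq_nonneg _) (Finset.mem_univ i)
  have e2 := fun i => est2 hB hc hw i (hpi i) h2
  have e2' : ∀ i, ∫ x, (∑ j, (pd j (pd i w) x)^2) * ‖x‖^(q+2) ≤ c2 * M := fun i => by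
    refine (e2 i).2.trans ?_
    rw [integral_add (hpi i) h2, hc2, mul_assoc]
    gcongr
    have := hpi2 i
    nlinarith
  have N0 : wL2norm (δ - (0:ℕ)) (fun x => ‖iteratedFDeriv ℝ 0 w x‖) ≤ ENNReal.ofReal (Real.sqrt M) := by
    refine (wL2_le h0 fun x hx => ?_).trans (ENNReal.ofReal_le_ofReal (Real.sqrt_le_sqrt (by linarith)))
    rw [norm_iteratedFDeriv_zero, Real.norm_eq_abs, sq_abs]
    refine le_of_eq ?_
    congr 2; push_cast; rw [← q1]; ring
  have N1 : wL2norm (δ - (1:ℕ)) (fun x => ‖iteratedFDeriv ℝ 1 w x‖) ≤ ENNReal.ofReal (Real.sqrt (3 * c1) * Real.sqrt M) := by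
    rw [← Real.sqrt_mul (by positivity)]
    refine (wL2_le (i1.const_mul 3) fun x hx => ?_).trans (ENNReal.ofReal_le_ofReal (Real.sqrt_le_sqrt ?_))
    · rw [show -2 * (δ - (1:ℕ)) - 3 = q by rw [hq]; push_cast; ring, ← mul_assoc]
      gcongr; exact d1_le w x
    · rw [integral_const_mul]; nlinarith
  have N2 : wL2norm (δ - (2:ℕ)) (fun x => ‖iteratedFDeriv ℝ 2 w x‖) ≤ ENNReal.ofReal (Real.sqrt (27 * c2) * Real.sqrt M) := by
    rw [← Real.sqrt_mul (by positivity)]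
    refine (wL2_le (G := fun x => 9 * ∑ i, (∑ j, (pd j (pd i w) x)^2) * ‖x‖^(q+2)) ((integrable_finsetSum _ fun i _ => (e2 i).1).const_mul 9) fun x hx => ?_).trans (ENNReal.ofReal_le_ofReal (Real.sqrt_le_sqrt ?_))
    · rw [show -2 * (δ - (2:ℕ)) - 3 = q+2 by rw [hq]; push_cast; ring, ← Finset.sum_mul, ← mul_assoc]
      gcongr; exact d2_le (hw.c2 x hx)
    · rw [integral_const_mul, integral_finsetSum _ fun i _ => (e2 i).1]
      have : ∑ i, ∫ x, (∑ j, (pd j (pd i w) x)^2) * ‖x‖^(q+2) ≤ ∑ i : Fin 3, c2 * M := Finset.sum_le_sum fun i _ => e2' i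
      simp at this
      linarith
  unfold wHnorm
  rw [Finset.sum_range_succ, Finset.sum_range_succ, Finset.sum_range_one, add_mul, add_mul, one_mul,
    ENNReal.ofReal_add (by positivity) (by positivity), ENNReal.ofReal_add (by positivity) (by positivity)]
  exact add_le_add (add_le_add N0 N1) N2

open Classical in
def pw (p p' : ℝ) (x : E3) : ℝ := if ‖x‖ ≤ 1 then ‖x‖^p else ‖x‖^p'

theorem pw_nonneg (p p' : ℝ) (x : E3) : 0 ≤ pw p p' x := by unfold pw; split_ifs <;> positivity

theorem int_pw {p p' : ℝ} (hp : -3 < p) (hp' : p' < -3) : Integrable (pw p p') := by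
  classical
  have h1 : Integrable ((closedBall (0:E3) 1).indicator fun x => ‖x‖^p) := (intpow hp 1).integrable_indicator measurableSet_closedBall
  have h2 : Integrable (fun x : E3 => (1 + ‖x‖)^(-(-p'))) := integrable_one_add_norm (by simp; linarith)
  refine (h1.add (h2.const_mul (2^(-p')))).mono' ?_ (ae_of_all _ fun x => ?_)
  · refine Measurable.aestronglyMeasurable ?_
    unfold pw
    refine Measurable.ite ?_ ?_ ?_
    · exact measurableSet_le measurable_norm measurable_const
    · exact measurable_norm.pow_const _
    · exact measurable_norm.pow_const _
  · rw [Real.norm_of_nonneg (pw_nonneg _ _ _)]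
    simp only [Pi.add_apply, indicator, mem_closedBall, dist_zero_right, neg_neg]
    unfold pw
    split_ifs with h
    · have : 0 ≤ 2 ^ (-p') * (1 + ‖x‖) ^ p' := by positivity
      linarith
    · push Not at h
      rw [zero_add]
      have e : 2 ^ (-p') * (1 + ‖x‖) ^ p' = ((1 + ‖x‖)/2)^p' := by
        rw [Real.div_rpow (by positivity) (by norm_num), Real.rpow_neg (by norm_num)]; field_simp
      rw [e]
      exact Real.rpow_le_rpow_of_nonpos (by positivity) (by linarith) (by linarith)

theorem pw_sq {a b c D f : ℝ} {x : E3} (hx : x ≠ 0) (h : |f| ≤ D * pw a b x) : f^2 * ‖x‖^c ≤ D^2 * pw (2*a+c) (2*b+c) x := by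
  have hr := norm_pos_iff.2 hx
  have e : pw (2*a+c) (2*b+c) x = (pw a b x)^2 * ‖x‖^c := by
    unfold pw
    split_ifs <;> rw [Real.rpow_add hr, mul_comm 2, Real.rpow_mul hr.le, Real.rpow_two]
  rw [e, ← mul_assoc, ← mul_pow]
  refine mul_le_mul_of_nonneg_right ?_ (by positivity)
  rw [← sq_abs]
  exact pow_le_pow_left₀ (abs_nonneg _) h 2

section
variable {A J : ℝ} {P : E3} {σ : E3 → ℝ}

theorem Fnl_pw {s c : ℝ} (h0 : ∀ x, 0 ≤ σ x) (hs : ∀ x, σ x ≤ s) (hc : 0 < c) : ∃ D, ∀ x : E3, x ≠ 0 → ∀ Φ, 1 ≤ Φ →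
    (‖x‖ ≤ 1 → c * ‖x‖ ^ (-(1/2) : ℝ) ≤ Φ) → |Fnl A J P σ x Φ| ≤ D * pw (-(5/2)) (-4) x := by
  have hk := kk_nonneg A J P
  have hs0 : 0 ≤ s := (h0 0).trans (hs 0)
  refine ⟨(kk A J P + s) / 4 + (kk A J P / c^7 + s / c^3) / 4, fun x hx Φ hΦ h => ?_⟩
  have d1 : 0 ≤ (kk A J P + s) / 4 := by positivity
  have d2 : 0 ≤ (kk A J P / c^7 + s / c^3) / 4 := by positivity
  unfold pw
  split_ifs with hx1
  · refine (Fnl_bd2 h0 hs hx hx1 hc (h hx1)).trans ?_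
    gcongr; linarith
  · push Not at hx1
    refine (Fnl_bd1 h0 hs hx1.le hΦ).trans ?_
    gcongr; linarith

/-- The weighted quantity controlling the norm. -/
def Nq (δ : ℝ) (w : E3 → ℝ) : ℝ := ∫ x, ((w x)^2 * ‖x‖^(-2*δ-3) + (lap w x)^2 * ‖x‖^(-2*δ+1))

structure Good (δ : ℝ) (w : E3 → ℝ) : Prop where
  sm : SmO w
  i0 : Integrable (fun x => (w x)^2 * ‖x‖^(-2*δ-3))
  i2 : Integrable (fun x => (lap w x)^2 * ‖x‖^(-2*δ+1))

theorem aesm0 {w : E3 → ℝ} (hw : SmO w) (c : ℝ) : AEStronglyMeasurable (fun x => (w x)^2 * ‖x‖^c) volume :=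
  aesm_of_cont ((hw.cont.pow 2).mul (SmO.pow (p := c)).cont)

theorem Good.sub {δ : ℝ} {v w : E3 → ℝ} (hv : Good δ v) (hw : Good δ w) : Good δ (fun x => v x - w x) ∧ Nq δ (fun x => v x - w x) ≤ 2 * Nq δ v + 2 * Nq δ w := by
  have hs := hv.sm.sub hw.sm
  have k : ∀ a b t : ℝ, 0 ≤ t → (a - b)^2 * t ≤ 2 * (a^2 * t) + 2 * (b^2 * t) := fun a b t ht => by nlinarith [mul_nonneg ht (sq_nonneg (a+b))]
  have hl : ∀ x, x ≠ 0 → lap (fun x => v x - w x) x = lap v x - lap w x := fun x hx => lap_sub (hv.sm.c2 x hx) (hw.sm.c2 x hx)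
  have g : Good δ (fun x => v x - w x) := by
    refine ⟨hs, ?_, ?_⟩
    · refine ((hv.i0.const_mul 2).add (hw.i0.const_mul 2)).mono' (aesm0 hs _) (ae_of_all _ fun x => ?_)
      rw [Real.norm_of_nonneg (by positivity)]
      exact k _ _ _ (by positivity)
    · refine ((hv.i2.const_mul 2).add (hw.i2.const_mul 2)).mono' (aesm0 hs.lap _) ?_
      filter_upwards [ae_ne0] with x hx
      rw [Real.norm_of_nonneg (by positivity), hl x hx]
      exact k _ _ _ (by positivity)
  refine ⟨g, ?_⟩
  unfold Nq
  rw [← integral_const_mul, ← integral_const_mul]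
  refine le_trans ?_ (integral_add ((hv.i0.add hv.i2).const_mul 2) ((hw.i0.add hw.i2).const_mul 2)).le
  refine integral_mono_ae (g.i0.add g.i2) (((hv.i0.add hv.i2).const_mul 2).add ((hw.i0.add hw.i2).const_mul 2)) ?_
  filter_upwards [ae_ne0] with x hx
  simp only [Pi.add_apply]
  rw [hl x hx]
  have := k (v x) (w x) _ (by positivity : 0 ≤ ‖x‖^(-2*δ-3))
  have := k (lap v x) (lap w x) _ (by positivity : 0 ≤ ‖x‖^(-2*δ+1))
  linarith

theorem conv_main (hA : 0 ≤ A) (hAJ : 0 < A ∨ J ≠ 0) (hσ : ContDiff ℝ (⊤ : ℕ∞) σ) (h0 : ∀ x, 0 ≤ σ x) {s : ℝ} (hσs : ∀ x, σ x ≤ s)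
    {u : ℝ → E3 → ℝ} (hu : ∀ μ > (0:ℝ), IsSolμ A J P σ μ (u μ)) {δ : ℝ} (hδ : δ ∈ Set.Ioo (-1 : ℝ) (-1/2)) :
    ∃ u0 : E3 → ℝ, Good δ u0 ∧ (∀ μ > 0, Good δ (u μ)) ∧ Tendsto (fun μ => Nq δ (fun x => u μ x - u0 x)) (nhdsWithin 0 (Set.Ioi 0)) (nhds 0) := by
  obtain ⟨u0, hu0, -, hlim, hsm, heq⟩ := limit_exists hA hAJ hσ h0 hσs hu
  obtain ⟨hδ1, hδ2⟩ := hδ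
  have hne : (nhdsWithin (0:ℝ) (Set.Ioi 0)).NeBot := inferInstance
  have hpos : ∀ᶠ μ : ℝ in nhdsWithin 0 (Set.Ioi 0), 0 < μ := self_mem_nhdsWithin
  obtain ⟨C1, hC1, hub1⟩ := upper_bd (A := A) (J := J) (P := P) hA hAJ hσ h0 hσs (β := 1/2) le_rfl (by norm_num)
  obtain ⟨C2, hC2, hub2⟩ := upper_bd (A := A) (J := J) (P := P) hA hAJ hσ h0 hσs (β := (1-δ)/2) (by linarith) (by linarith)
  obtain ⟨c, hc, hlow⟩ := low_bd (A := A) (J := J) (P := P) hA hAJ hσ h0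
  obtain ⟨D, hD⟩ := Fnl_pw (A := A) (J := J) (P := P) h0 hσs hc
  have hΦlim : ∀ x : E3, x ≠ 0 → Tendsto (fun μ => 1 + μ / (2*‖x‖) + u μ x) (nhdsWithin 0 (Set.Ioi 0)) (nhds (1 + u0 x)) := by
    intro x hx
    have h1 : Tendsto (fun μ : ℝ => μ / (2*‖x‖)) (nhdsWithin 0 (Set.Ioi 0)) (nhds (0 / (2*‖x‖))) :=
      (tendsto_id.mono_left nhdsWithin_le_nhds).div_const _
    have := (h1.const_add 1).add (hlim x hx)
    simpa using this
  have b1 : ∀ μ > 0, ∀ x, x ≠ 0 → |u μ x| ≤ (C1 + C2) * pw (-(1/2)) (-((1-δ)/2)) x := by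
    intro μ hμ x hx
    rw [abs_of_nonneg ((hu μ hμ).1 x)]
    unfold pw
    split_ifs
    · refine (hub1 μ hμ _ (hu μ hμ) x hx).trans ?_
      gcongr; linarith
    · refine (hub2 μ hμ _ (hu μ hμ) x hx).trans ?_
      gcongr; linarith
  have b10 : ∀ x, x ≠ 0 → |u0 x| ≤ (C1 + C2) * pw (-(1/2)) (-((1-δ)/2)) x := by
    intro x hx
    refine le_of_tendsto (hlim x hx).abs ?_
    filter_upwards [hpos] with μ hμ using b1 μ hμ x hx
  have b2 : ∀ μ > 0, ∀ x, x ≠ 0 → |Fnl A J P σ x (1 + μ / (2*‖x‖) + u μ x)| ≤ D * pw (-(5/2)) (-4) x := fun μ hμ x hx =>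
    hD x hx _ (sol_Phi hμ (hu μ hμ) x) (fun h => hlow μ hμ _ (hu μ hμ) x hx h)
  have b20 : ∀ x, x ≠ 0 → |Fnl A J P σ x (1 + u0 x)| ≤ D * pw (-(5/2)) (-4) x := fun x hx =>
    hD x hx _ (by linarith [hu0 x]) (fun h => ge_of_tendsto (hΦlim x hx) (by
      filter_upwards [hpos] with μ hμ using hlow μ hμ _ (hu μ hμ) x hx h))
  set G0 : E3 → ℝ := fun x => (C1+C2)^2 * pw (2*(-(1/2)) + (-2*δ-3)) (2*(-((1-δ)/2)) + (-2*δ-3)) x with hG0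
  set G2 : E3 → ℝ := fun x => D^2 * pw (2*(-(5/2)) + (-2*δ+1)) (2*(-4) + (-2*δ+1)) x with hG2
  have iG0 : Integrable G0 := (int_pw (by linarith) (by linarith)).const_mul _
  have iG2 : Integrable G2 := (int_pw (by linarith) (by linarith)).const_mul _
  have mk : ∀ v : E3 → ℝ, SmO v → (∀ x, x ≠ 0 → |v x| ≤ (C1 + C2) * pw (-(1/2)) (-((1-δ)/2)) x) →
      (∀ x, x ≠ 0 → |lap v x| ≤ D * pw (-(5/2)) (-4) x) → Good δ v := by
    intro v hv h1 h2
    refine ⟨hv, iG0.mono' (aesm0 hv _) ?_, iG2.mono' (aesm0 hv.lap _) ?_⟩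
    · filter_upwards [ae_ne0] with x hx
      rw [Real.norm_of_nonneg (by positivity)]
      exact pw_sq hx (h1 x hx)
    · filter_upwards [ae_ne0] with x hx
      rw [Real.norm_of_nonneg (by positivity)]
      exact pw_sq hx (h2 x hx)
  have g0 : Good δ u0 := mk u0 hsm b10 fun x hx => by rw [heq x hx]; exact b20 x hx
  have g : ∀ μ > 0, Good δ (u μ) := fun μ hμ => mk _ (sol_smooth hA hAJ hσ h0 hμ (hu μ hμ)) (b1 μ hμ) fun x hx => by
    rw [(hu μ hμ).2.2.2 x hx]; exact b2 μ hμ x hx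
  refine ⟨u0, g0, g, ?_⟩
  have k : ∀ a b t : ℝ, 0 ≤ t → (a - b)^2 * t ≤ 2 * (a^2 * t) + 2 * (b^2 * t) := fun a b t ht => by nlinarith [mul_nonneg ht (sq_nonneg (a+b))]
  suffices T : Tendsto (fun μ => Nq δ fun x => u μ x - u0 x) (nhdsWithin 0 (Ioi 0)) (nhds (∫ x : E3, (0:ℝ))) by simpa using T
  unfold Nq
  refine tendsto_integral_filter_of_dominated_convergence (fun x => 4 * G0 x + 4 * G2 x) ?_ ?_ ((iG0.const_mul 4).add (iG2.const_mul 4)) ?_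
  · filter_upwards [hpos] with μ hμ
    have := ((g μ hμ).sub g0).1
    exact (this.i0.add this.i2).aestronglyMeasurable
  · filter_upwards [hpos] with μ hμ
    filter_upwards [ae_ne0] with x hx
    rw [Real.norm_of_nonneg (by positivity), lap_sub ((g μ hμ).sm.c2 x hx) (hsm 2 x hx), (hu μ hμ).2.2.2 x hx, heq x hx]
    have k1 := k (u μ x) (u0 x) _ (by positivity : 0 ≤ ‖x‖^(-2*δ-3))
    have k2 := k (Fnl A J P σ x (1 + μ / (2*‖x‖) + u μ x)) (Fnl A J P σ x (1 + u0 x)) _ (by positivity : 0 ≤ ‖x‖^(-2*δ+1))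
    have m1 : _ ≤ G0 x := pw_sq (c := -2*δ-3) hx (b1 μ hμ x hx)
    have m2 : _ ≤ G0 x := pw_sq (c := -2*δ-3) hx (b10 x hx)
    have m3 : _ ≤ G2 x := pw_sq (c := -2*δ+1) hx (b2 μ hμ x hx)
    have m4 : _ ≤ G2 x := pw_sq (c := -2*δ+1) hx (b20 x hx)
    linarith
  · filter_upwards [ae_ne0] with x hx
    have t1 : Tendsto (fun μ => (u μ x - u0 x)^2 * ‖x‖^(-2*δ-3) + (Fnl A J P σ x (1 + μ / (2*‖x‖) + u μ x) - Fnl A J P σ x (1 + u0 x))^2 * ‖x‖^(-2*δ+1))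
      (nhdsWithin 0 (Set.Ioi 0)) (nhds ((u0 x - u0 x)^2 * ‖x‖^(-2*δ-3) + (Fnl A J P σ x (1 + u0 x) - Fnl A J P σ x (1 + u0 x))^2 * ‖x‖^(-2*δ+1))) :=
      ((((hlim x hx).sub_const _).pow 2).mul_const _).add
        ((((Fnl_tend x hx (by linarith [hu0 x]) (hΦlim x hx)).sub_const _).pow 2).mul_const _)
    rw [sub_self, sub_self] at t1
    have t2 := t1.congr' (f₂ := fun μ => (u μ x - u0 x)^2 * ‖x‖^(-2*δ-3) + (lap (fun x => u μ x - u0 x) x)^2 * ‖x‖^(-2*δ+1)) (by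
      filter_upwards [hpos] with μ hμ
      rw [lap_sub ((g μ hμ).sm.c2 x hx) (hsm 2 x hx), (hu μ hμ).2.2.2 x hx, heq x hx])
    simpa using t2
end

theorem density {δ : ℝ} {w : E3 → ℝ} (hw : Good δ w) : MemH 2 δ w := by
  obtain ⟨K, hK, hest⟩ := est_final δ
  refine ⟨(hest w hw.sm hw.i0 hw.i2).trans_lt ENNReal.ofReal_lt_top, ?_⟩
  obtain ⟨χ, B, hB, hc⟩ := cut_exists
  set q := -2*δ-1 with hq
  have q1 : -2*δ-3 = q-2 := by rw [hq]; ring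
  have q2 : -2*δ+1 = q+2 := by rw [hq]; ring
  have i0 := hw.i0
  have i2 := hw.i2
  rw [q1] at i0
  rw [q2] at i2
  obtain ⟨i1, -⟩ := est1 hB hc hw.sm i0 i2
  set W : ℕ → E3 → ℝ := fun n x => w x - χ n x * w x with hW
  have hWs : ∀ n, SmO (W n) := fun n => hw.sm.sub ((SmO.of (hc.sm n)).mul hw.sm)
  set F : ℕ → E3 → ℝ := fun n x => (1 - χ n x)^2 * ((w x)^2 * ‖x‖^(q-2) + 3 * ((lap w x)^2 * ‖x‖^(q+2))) with hF
  set H : E3 → ℝ := fun x => 3 * ((w x)^2 * ‖x‖^(q-2)) + 36 * ((∑ i, (pd i w x)^2) * ‖x‖^q) with hH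
  have iH : Integrable H := (i0.const_mul 3).add (i1.const_mul 36)
  have iF0 : Integrable (fun x => (w x)^2 * ‖x‖^(q-2) + 3 * ((lap w x)^2 * ‖x‖^(q+2))) := i0.add (i2.const_mul 3)
  have hχ1 : ∀ n x, (1 - χ n x)^2 ≤ 1 := fun n x => by
    have := hc.nn n x; have := hc.le n x
    nlinarith
  have hFle : ∀ n x, ‖F n x‖ ≤ (w x)^2 * ‖x‖^(q-2) + 3 * ((lap w x)^2 * ‖x‖^(q+2)) := fun n x => by
    rw [hF, Real.norm_of_nonneg (by positivity)]
    exact mul_le_of_le_one_left (by positivity) (hχ1 n x)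
  have hFm : ∀ n, AEStronglyMeasurable (F n) volume := fun n =>
    ((continuous_const.sub (hc.sm n).continuous).pow 2).aestronglyMeasurable.mul iF0.aestronglyMeasurable
  have iF : ∀ n, Integrable (F n) := fun n => iF0.mono' (hFm n) (ae_of_all _ (hFle n))
  have hFt : Tendsto (fun n => ∫ x, F n x) atTop (nhds 0) := by
    rw [show (0:ℝ) = ∫ x : E3, (0:ℝ) by simp]
    refine tendsto_integral_of_dominated_convergence _ hFm iF0 (fun n => ae_of_all _ (hFle n)) ?_
    filter_upwards [ae_ne0] with x hx
    have := (((hc.lim x hx).const_sub 1).pow 2).mul_const ((w x)^2 * ‖x‖^(q-2) + 3 * ((lap w x)^2 * ‖x‖^(q+2)))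
    simpa using this
  have key : ∀ n x, x ≠ 0 → (W n x)^2 * ‖x‖^(q-2) + (lap (W n) x)^2 * ‖x‖^(q+2) ≤ F n x + (B/((n:ℝ)+1))^2 * H x := by
    intro n x hx
    have hr := norm_pos_iff.2 hx
    set t := B/((n:ℝ)+1) with ht
    have ht0 : 0 ≤ t := by positivity
    have hχ2 : ContDiffAt ℝ 2 (χ n) x := ((hc.sm n).of_le two_le_inf).contDiffAt
    have e : lap (W n) x = (1 - χ n x) * lap w x - lap (χ n) x * w x - 2 * ∑ i, pd i (χ n) x * pd i w x := by
      rw [hW]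
      simp only
      rw [lap_sub (hw.sm.c2 x hx) (hχ2.mul (hw.sm.c2 x hx)), lap_mul hχ2 (hw.sm.c2 x hx)]
      ring
    have m1 : (lap (χ n) x * w x)^2 * ‖x‖^(q+2) ≤ t^2 * ((w x)^2 * ‖x‖^(q-2)) := by
      have e1 : ‖x‖^(q-2) = ((‖x‖^2)⁻¹)^2 * ‖x‖^(q+2) := by
        rw [show q - 2 = q+2 - 4 by ring, Real.rpow_sub hr, show (4:ℝ) = (4:ℕ) by norm_num, Real.rpow_natCast]; field_simp
      have : (lap (χ n) x)^2 ≤ (t * (‖x‖^2)⁻¹)^2 := by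
        rw [← sq_abs]; exact pow_le_pow_left₀ (abs_nonneg _) (hc.d2 n x hx) 2
      calc (lap (χ n) x * w x)^2 * ‖x‖^(q+2) = (lap (χ n) x)^2 * ((w x)^2 * ‖x‖^(q+2)) := by ring
        _ ≤ (t * (‖x‖^2)⁻¹)^2 * ((w x)^2 * ‖x‖^(q+2)) := by gcongr
        _ = _ := by rw [e1]; ring
    have m2 : (∑ i, pd i (χ n) x * pd i w x)^2 * ‖x‖^(q+2) ≤ 3 * t^2 * ((∑ i, (pd i w x)^2) * ‖x‖^q) := by
      have e1 : ‖x‖^q = (‖x‖⁻¹)^2 * ‖x‖^(q+2) := by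
        rw [show q = q+2 - 2 by ring, Real.rpow_sub hr, Real.rpow_two, show q + 2 - 2 + 2 = q+2 by ring]; field_simp
      have : (∑ i, pd i (χ n) x * pd i w x)^2 ≤ 3 * ∑ i, (t * ‖x‖⁻¹)^2 * (pd i w x)^2 := by
        refine (sum3_sq _).trans ?_
        gcongr with i _
        rw [mul_pow]
        refine mul_le_mul_of_nonneg_right ?_ (sq_nonneg _)
        rw [← sq_abs]; exact pow_le_pow_left₀ (abs_nonneg _) (hc.d1 n i x hx) 2
      calc (∑ i, pd i (χ n) x * pd i w x)^2 * ‖x‖^(q+2) ≤ (3 * ∑ i, (t * ‖x‖⁻¹)^2 * (pd i w x)^2) * ‖x‖^(q+2) := by gcongr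
        _ = _ := by rw [← Finset.mul_sum, e1]; ring
    have m3 : ∀ a b c y : ℝ, 0 ≤ y → (a - b - 2*c)^2 * y ≤ 3 * (a^2 * y) + 3 * (b^2 * y) + 12 * (c^2 * y) := fun a b c y hy => by
      have : (a - b - 2*c)^2 ≤ 3 * a^2 + 3 * b^2 + 12 * c^2 := by nlinarith [sq_nonneg (a+b), sq_nonneg (a+2*c), sq_nonneg (b-2*c)]
      calc _ ≤ (3 * a^2 + 3 * b^2 + 12 * c^2) * y := by gcongr
        _ = _ := by ring
    have m4 := m3 ((1 - χ n x) * lap w x) (lap (χ n) x * w x) (∑ i, pd i (χ n) x * pd i w x) (‖x‖^(q+2)) (by positivity)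
    rw [e, hF, hH, hW]
    simp only
    have e5 : (w x - χ n x * w x)^2 * ‖x‖^(q-2) = (1 - χ n x)^2 * ((w x)^2 * ‖x‖^(q-2)) := by ring
    have e6 : ((1 - χ n x) * lap w x)^2 * ‖x‖^(q+2) = (1 - χ n x)^2 * ((lap w x)^2 * ‖x‖^(q+2)) := by ring
    rw [e5]
    rw [e6] at m4
    linarith
  have iD : ∀ n, Integrable (fun x => F n x + (B/((n:ℝ)+1))^2 * H x) := fun n => (iF n).add (iH.const_mul _)
  have j0 : ∀ n, Integrable (fun x => (W n x)^2 * ‖x‖^(q-2)) := fun n => by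
    refine (iD n).mono' (aesm0 (hWs n) _) ?_
    filter_upwards [ae_ne0] with x hx
    rw [Real.norm_of_nonneg (by positivity)]
    have : 0 ≤ (lap (W n) x)^2 * ‖x‖^(q+2) := by positivity
    linarith [key n x hx]
  have j2 : ∀ n, Integrable (fun x => (lap (W n) x)^2 * ‖x‖^(q+2)) := fun n => by
    refine (iD n).mono' (aesm0 (hWs n).lap _) ?_
    filter_upwards [ae_ne0] with x hx
    rw [Real.norm_of_nonneg (by positivity)]
    have : 0 ≤ (W n x)^2 * ‖x‖^(q-2) := by positivity
    linarith [key n x hx]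
  have hN : ∀ n, ∫ x, ((W n x)^2 * ‖x‖^(q-2) + (lap (W n) x)^2 * ‖x‖^(q+2)) ≤ (∫ x, F n x) + (B/((n:ℝ)+1))^2 * ∫ x, H x := fun n => by
    rw [← integral_const_mul, ← integral_add (iF n) (iH.const_mul _)]
    refine integral_mono_ae ((j0 n).add (j2 n)) (iD n) ?_
    filter_upwards [ae_ne0] with x hx using key n x hx
  have hbt : Tendsto (fun n : ℕ => (∫ x, F n x) + (B/((n:ℝ)+1))^2 * ∫ x, H x) atTop (nhds 0) := by
    have h1 : Tendsto (fun n : ℕ => B/((n:ℝ)+1)) atTop (nhds 0) := by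
      have := (tendsto_one_div_add_atTop_nhds_zero_nat (𝕜 := ℝ)).const_mul B
      simpa [div_eq_mul_inv] using this
    have := hFt.add ((h1.pow 2).mul_const (∫ x, H x))
    simpa using this
  have hfin : Tendsto (fun n : ℕ => ENNReal.ofReal (K * Real.sqrt ((∫ x, F n x) + (B/((n:ℝ)+1))^2 * ∫ x, H x))) atTop (nhds 0) := by
    have := (ENNReal.continuous_ofReal.tendsto _).comp (((Real.continuous_sqrt.tendsto _).comp hbt).const_mul K)
    simpa [Function.comp_def] using this
  intro ε hε
  obtain ⟨n, hn⟩ := (hfin.eventually (ge_mem_nhds hε)).exists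
  refine ⟨fun x => χ n x * w x, ⟨?_, (hc.cs n).mul_right, (tsupport_mul_subset_left).trans (hc.ts n)⟩, ?_⟩
  · exact contDiff_of_tsupp (isClosed_tsupport (χ n)) (fun x hx => by simp [image_eq_zero_of_notMem_tsupport hx])
      (fun x hx => (hc.sm n).contDiffAt.mul (contDiffAt_infty.2 fun k => hw.sm k x (hc.ts n hx)))
  · refine le_trans ?_ hn
    have h := hest (W n) (hWs n) (by rw [q1]; exact j0 n) (by rw [q2]; exact j2 n)
    refine h.trans (ENNReal.ofReal_le_ofReal ?_)
    rw [q1, q2]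
    gcongr
    exact hN n

theorem u_mu_aux {A J : ℝ} (hA : 0 ≤ A) (hAJ : 0 < A ∨ J ≠ 0) {P : E3}
    {σ : E3 → ℝ} (hσsmooth : ContDiff ℝ (⊤ : ℕ∞) σ) (hσnonneg : ∀ x, 0 ≤ σ x)
    (hσbdd : ∃ C, ∀ x, σ x ≤ C)
    {u : ℝ → E3 → ℝ} (hu : ∀ μ > (0:ℝ), IsSolμ A J P σ μ (u μ))
    {δ : ℝ} (hδ : δ ∈ Set.Ioo (-1 : ℝ) (-1/2)) :
    (∀ ε : ℝ≥0∞, 0 < ε → ∃ μ₀ > (0:ℝ), ∀ μ₁ μ₂ : ℝ,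
      0 < μ₂ → μ₂ ≤ μ₁ → μ₁ ≤ μ₀ → wHnorm 2 δ (u μ₁ - u μ₂) ≤ ε) ∧
    ∃ u₀ : E3 → ℝ, MemH 2 δ u₀ ∧
      Tendsto (fun μ => wHnorm 2 δ (u μ - u₀)) (nhdsWithin 0 (Set.Ioi 0)) (nhds 0) := by
  obtain ⟨s, hσs⟩ := hσbdd
  obtain ⟨u0, g0, g, hN⟩ := conv_main hA hAJ hσsmooth hσnonneg hσs hu hδ
  obtain ⟨K, hK, hest⟩ := est_final δ
  have lim0 : Tendsto (fun t : ℝ => ENNReal.ofReal (K * Real.sqrt t)) (nhds 0) (nhds 0) := by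
    have : Continuous (fun t : ℝ => ENNReal.ofReal (K * Real.sqrt t)) := ENNReal.continuous_ofReal.comp (continuous_const.mul Real.continuous_sqrt)
    simpa using this.tendsto 0
  have hpos : ∀ᶠ μ : ℝ in nhdsWithin 0 (Set.Ioi 0), 0 < μ := self_mem_nhdsWithin
  refine ⟨fun ε hε => ?_, u0, density g0, ?_⟩
  · obtain ⟨η, hη, hη2⟩ := Metric.eventually_nhds_iff.1 (lim0.eventually (ge_mem_nhds hε))
    have h1 := hN.eventually (gt_mem_nhds (show (0:ℝ) < η / 5 by positivity))
    obtain ⟨m, hm, hm2⟩ := mem_nhdsGT_iff_exists_Ioc_subset.1 h1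
    refine ⟨m, hm, fun μ₁ μ₂ h2 h21 h1m => ?_⟩
    have hp1 : 0 < μ₁ := h2.trans_le h21
    have d1 := (g μ₁ hp1).sub g0
    have d2 := (g μ₂ h2).sub g0
    have d := d1.1.sub d2.1
    have e : (fun x => (u μ₁ x - u0 x) - (u μ₂ x - u0 x)) = u μ₁ - u μ₂ := by funext x; simp
    rw [e] at d
    have a1 : Nq δ (fun x => u μ₁ x - u0 x) < η/5 := hm2 ⟨hp1, h1m⟩
    have a2 : Nq δ (fun x => u μ₂ x - u0 x) < η/5 := hm2 ⟨h2, h21.trans h1m⟩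
    refine (hest _ d.1.sm d.1.i0 d.1.i2).trans (hη2 ?_)
    have n0 : 0 ≤ Nq δ (u μ₁ - u μ₂) := integral_nonneg fun x => by positivity
    change dist (Nq δ (u μ₁ - u μ₂)) 0 < η
    rw [Real.dist_eq, sub_zero, abs_of_nonneg n0]
    linarith [d.2]
  · refine tendsto_of_tendsto_of_tendsto_of_le_of_le' tendsto_const_nhds (lim0.comp hN) (Eventually.of_forall fun _ => bot_le) ?_
    filter_upwards [hpos] with μ hμ
    have d := ((g μ hμ).sub g0).1
    exact hest _ d.sm d.i0 d.i2

/-- Convergence: for `δ ∈ (-1,-1/2)` the family `u_μ` is Cauchy in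
`H'²_δ` as `μ → 0`, and hence converges in `H'²_δ` to some `u₀ ∈ H'²_δ`. -/
theorem u_mu_cauchy_and_convergent
    (A J : ℝ) (hA : 0 ≤ A) (hAJ : 0 < A ∨ J ≠ 0) (P : E3)
    (σ : E3 → ℝ) (hσsmooth : ContDiff ℝ (⊤ : ℕ∞) σ) (hσnonneg : ∀ x, 0 ≤ σ x)
    (hσbdd : ∃ C, ∀ x, σ x ≤ C)
    (u : ℝ → E3 → ℝ) (hu : ∀ μ > (0:ℝ), IsSolμ A J P σ μ (u μ))
    (δ : ℝ) (hδ : δ ∈ Set.Ioo (-1 : ℝ) (-1/2)) :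
    (∀ ε : ℝ≥0∞, 0 < ε → ∃ μ₀ > (0:ℝ), ∀ μ₁ μ₂ : ℝ,
      0 < μ₂ → μ₂ ≤ μ₁ → μ₁ ≤ μ₀ → wHnorm 2 δ (u μ₁ - u μ₂) ≤ ε) ∧
    ∃ u₀ : E3 → ℝ, MemH 2 δ u₀ ∧
      Tendsto (fun μ => wHnorm 2 δ (u μ - u₀)) (nhdsWithin 0 (Set.Ioi 0)) (nhds 0) := by
  exact u_mu_aux hA hAJ hσsmooth hσnonneg hσbdd hu hδ
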